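/- Let G be a compact Lie group whose group operations are real analytic, and let M be a second-countable Hausdorff real analytic manifold of finite dimension d on which G acts by a real analytic action. Set n = 2d + 1. Then there exists a proper real analytic G-invariant map f : M → ℝⁿ such that the map induced by f from the orbit space M/G (equipped with the quotient topology) to the image f(M) ⊆ ℝⁿ (equipped with the subspace topology) is a homeomorphism. -/

import Mathlib

open scoped Manifold ContDiff

/-- A map `f : M → M'` between charted spaces is `C^k` (where `k` may be `ω = ⊤`, meaning
real analytic) if it is continuous and is `C^k` when read in the preferred charts around
each point.  For `k = ω` this is the notion of a real analytic map. -/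
def IsCkMap {E H E' H' : Type*} [NormedAddCommGroup E] [NormedSpace ℝ E] [TopologicalSpace H]
    [NormedAddCommGroup E'] [NormedSpace ℝ E'] [TopologicalSpace H']
    (I : ModelWithCorners ℝ E H) (I' : ModelWithCorners ℝ E' H') (k : WithTop ℕ∞)
    {M M' : Type*} [TopologicalSpace M] [ChartedSpace H M]
    [TopologicalSpace M'] [ChartedSpace H' M'] (f : M → M') : Prop :=
  Continuous f ∧ ∀ x : M, ContDiffWithinAt ℝ k
    (↑(extChartAt I' (f x)) ∘ f ∘ ↑(extChartAt I x).symm)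
    (Set.range I) (extChartAt I x x)

section

namespace GW

/-! ### Absolutely convergent word expansions -/

/-- the monomial attached to a word -/
def mon {κ : Type} (w : List κ) (x : κ → ℝ) : ℝ := (w.map x).prod

theorem mon_nil {κ : Type} (x : κ → ℝ) : mon [] x = 1 := by simp [mon]

theorem mon_cons {κ : Type} (i : κ) (w : List κ) (x : κ → ℝ) :
    mon (i :: w) x = x i * mon w x := by simp [mon]

theorem mon_append {κ : Type} (w w' : List κ) (x : κ → ℝ) :
    mon (w ++ w') x = mon w x * mon w' x := by simp [mon]

theorem abs_mon_le {κ : Type} (w : List κ) (x : κ → ℝ) {R : ℝ} (h : ∀ i, |x i| ≤ R) :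
    |mon w x| ≤ R ^ w.length := by
  induction w with
  | nil => simp [mon]
  | cons i w ih =>
    rw [mon_cons, abs_mul, List.length_cons, pow_succ']
    exact mul_le_mul (h i) ih (abs_nonneg _) ((abs_nonneg _).trans (h i))

/-- `f` has an expansion in words with weighted `ℓ¹` norm at most `B` on the box of radius `R`. -/
def Rep {κ : Type} (R B : ℝ) (f : (κ → ℝ) → ℝ) : Prop :=
  ∃ (J : Type) (_ : Countable J) (c : J → ℝ) (w : J → List κ),
    Summable (fun j => |c j| * R ^ (w j).length) ∧
    ∑' j, |c j| * R ^ (w j).length ≤ B ∧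
    ∀ x : κ → ℝ, (∀ i, |x i| ≤ R) → f x = ∑' j, c j * mon (w j) x

/-- polynomial version -/
def PolyRep {κ : Type} (N : ℕ) (R B : ℝ) (f : (κ → ℝ) → ℝ) : Prop :=
  ∃ (s : Finset (List κ)) (c : List κ → ℝ),
    (∀ w ∈ s, w.length ≤ N) ∧ ∑ w ∈ s, |c w| * R ^ w.length ≤ B ∧
    ∀ x : κ → ℝ, f x = ∑ w ∈ s, c w * mon w x

section
variable {κ : Type}

theorem abs_tsum_le {J : Type} {u : J → ℝ} (hu : Summable (fun j => |u j|)) :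
    |∑' j, u j| ≤ ∑' j, |u j| := by
  have h : Summable (fun j => ‖u j‖) := hu
  have h2 := norm_tsum_le_tsum_norm h
  simp only [Real.norm_eq_abs] at h2
  exact h2

theorem summable_mon {J : Type} {c : J → ℝ} {w : J → List κ} {R : ℝ}
    (hs : Summable (fun j => |c j| * R ^ (w j).length)) {x : κ → ℝ} (hx : ∀ i, |x i| ≤ R) :
    Summable (fun j => |c j * mon (w j) x|) := by
  refine Summable.of_nonneg_of_le (fun j => abs_nonneg _) (fun j => ?_) hs
  rw [abs_mul]
  exact mul_le_mul_of_nonneg_left (abs_mon_le _ _ hx) (abs_nonneg _)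

theorem Rep.mono {R B B' : ℝ} {f : (κ → ℝ) → ℝ} (h : Rep R B f) (hB : B ≤ B') : Rep R B' f := by
  obtain ⟨J, hJ, c, w, h1, h2, h3⟩ := h
  exact ⟨J, hJ, c, w, h1, h2.trans hB, h3⟩

theorem Rep.congr {R B : ℝ} {f g : (κ → ℝ) → ℝ} (h : Rep R B f)
    (hfg : ∀ x, (∀ i, |x i| ≤ R) → g x = f x) : Rep R B g := by
  obtain ⟨J, hJ, c, w, h1, h2, h3⟩ := h
  exact ⟨J, hJ, c, w, h1, h2, fun x hx => (hfg x hx).trans (h3 x hx)⟩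

theorem Rep.bound {R B : ℝ} {f : (κ → ℝ) → ℝ} (h : Rep R B f) {x : κ → ℝ}
    (hx : ∀ i, |x i| ≤ R) : |f x| ≤ B := by
  obtain ⟨J, hJ, c, w, h1, h2, h3⟩ := h
  rw [h3 x hx]
  have hs := summable_mon h1 hx
  refine le_trans ?_ h2
  refine le_trans (abs_tsum_le hs) ?_
  refine hs.tsum_le_tsum (fun j => ?_) h1
  rw [abs_mul]
  exact mul_le_mul_of_nonneg_left (abs_mon_le _ _ hx) (abs_nonneg _)

theorem Rep.nonneg {R B : ℝ} (hR : 0 ≤ R) {f : (κ → ℝ) → ℝ} (h : Rep R B f) : 0 ≤ B :=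
  (abs_nonneg _).trans (h.bound (x := fun _ => 0) (fun _ => by simpa using hR))

theorem Rep.mono_radius {R R' B : ℝ} {f : (κ → ℝ) → ℝ} (h : Rep R B f) (h0 : 0 ≤ R')
    (hR : R' ≤ R) : Rep R' B f := by
  obtain ⟨J, hJ, c, w, h1, h2, h3⟩ := h
  have hle : ∀ j, |c j| * R' ^ (w j).length ≤ |c j| * R ^ (w j).length := fun j =>
    mul_le_mul_of_nonneg_left (pow_le_pow_left₀ h0 hR _) (abs_nonneg _)
  have hs : Summable (fun j => |c j| * R' ^ (w j).length) :=
    Summable.of_nonneg_of_le (fun j => by positivity) hle h1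
  exact ⟨J, hJ, c, w, hs, (hs.tsum_le_tsum hle h1).trans h2,
    fun x hx => h3 x (fun i => (hx i).trans hR)⟩

theorem Rep.tsum {A : Type} [Countable A] {R : ℝ} (hR : 0 ≤ R) {B : A → ℝ}
    {f : A → (κ → ℝ) → ℝ} (h : ∀ a, Rep R (B a) (f a)) (hB : Summable B) {g : (κ → ℝ) → ℝ}
    (hg : ∀ x, (∀ i, |x i| ≤ R) → g x = ∑' a, f a x) : Rep R (∑' a, B a) g := by
  choose J hJ c w h1 h2 h3 using h
  have hnn : ∀ p : (Σ a, J a), 0 ≤ |c p.1 p.2| * R ^ (w p.1 p.2).length := fun p => by positivity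
  have hS : Summable (fun p : (Σ a, J a) => |c p.1 p.2| * R ^ (w p.1 p.2).length) := by
    rw [summable_sigma_of_nonneg hnn]
    refine ⟨fun a => h1 a, ?_⟩
    refine Summable.of_nonneg_of_le (fun a => tsum_nonneg fun j => hnn ⟨a, j⟩) (fun a => h2 a) hB
  refine ⟨Σ a, J a, inferInstance, fun p => c p.1 p.2, fun p => w p.1 p.2, hS, ?_, ?_⟩
  · rw [hS.tsum_sigma]
    refine Summable.tsum_le_tsum (fun a => h2 a) hS.sigma hB
  · intro x hx
    have h4 := (summable_mon hS hx).of_abs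
    rw [hg x hx, h4.tsum_sigma]
    exact tsum_congr fun a => h3 a x hx

theorem Rep.sum {A : Type} {R : ℝ} (hR : 0 ≤ R) (s : Finset A) {B : A → ℝ}
    {f : A → (κ → ℝ) → ℝ} (h : ∀ a ∈ s, Rep R (B a) (f a)) :
    Rep R (∑ a ∈ s, B a) (fun x => ∑ a ∈ s, f a x) := by
  have := Rep.tsum (A := s) hR (B := fun a => B a) (f := fun a => f a) (fun a => h a a.2)
    Summable.of_finite (g := fun x => ∑ a ∈ s, f a x) (fun x _ => by
      rw [tsum_fintype, Finset.sum_coe_sort s (fun a => f a x)])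
  rwa [tsum_fintype, Finset.sum_coe_sort s B] at this

theorem Rep.add {R B B' : ℝ} (hR : 0 ≤ R) {f g : (κ → ℝ) → ℝ} (hf : Rep R B f)
    (hg : Rep R B' g) : Rep R (B + B') (fun x => f x + g x) := by
  have := Rep.sum hR (Finset.univ : Finset Bool) (B := fun b => cond b B B')
    (f := fun b => cond b f g) (fun b _ => by cases b <;> simpa)
  simpa using this

theorem Rep.monomial {R : ℝ} (b : ℝ) (w : List κ) :
    Rep R (|b| * R ^ w.length) (fun x => b * mon w x) :=
  ⟨Unit, inferInstance, fun _ => b, fun _ => w, Summable.of_finite, by simp, fun x _ => by simp⟩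

theorem Rep.const {R : ℝ} (b : ℝ) : Rep R |b| (fun _ : κ → ℝ => b) := by
  simpa [mon_nil] using Rep.monomial (R := R) b ([] : List κ)

theorem Rep.coord {R : ℝ} (i : κ) : Rep R R (fun x : κ → ℝ => x i) := by
  simpa [mon] using Rep.monomial (R := R) 1 ([i] : List κ)

theorem Rep.mul {R B B' : ℝ} (hR : 0 ≤ R) {f g : (κ → ℝ) → ℝ} (hf : Rep R B f)
    (hg : Rep R B' g) : Rep R (B * B') (fun x => f x * g x) := by
  have hB := hf.nonneg hR
  obtain ⟨J, hJ, c, w, h1, h2, h3⟩ := hf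
  obtain ⟨J', hJ', c', w', h1', h2', h3'⟩ := hg
  have e : (fun p : J × J' => |c p.1 * c' p.2| * R ^ (w p.1 ++ w' p.2).length) =
      fun p => (|c p.1| * R ^ (w p.1).length) * (|c' p.2| * R ^ (w' p.2).length) := by
    ext p
    rw [abs_mul, List.length_append, pow_add]; ring
  have n1 : ∀ j, 0 ≤ |c j| * R ^ (w j).length := fun j => by positivity
  have n2 : ∀ j, 0 ≤ |c' j| * R ^ (w' j).length := fun j => by positivity
  have hS := h1.mul_of_nonneg h1' n1 n2
  refine ⟨J × J', inferInstance, fun p => c p.1 * c' p.2, fun p => w p.1 ++ w' p.2, ?_, ?_, ?_⟩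
  · rw [e]; exact hS
  · rw [e, ← h1.tsum_mul_tsum h1' hS]
    exact mul_le_mul h2 h2' (tsum_nonneg n2) hB
  · intro x hx
    simp only [h3 x hx, h3' x hx]
    have s1 : Summable (fun j => ‖c j * mon (w j) x‖) := summable_mon h1 hx
    have s2 : Summable (fun j => ‖c' j * mon (w' j) x‖) := summable_mon h1' hx
    rw [tsum_mul_tsum_of_summable_norm s1 s2]
    refine tsum_congr fun p => ?_
    rw [mon_append]; ring

theorem Rep.smul {R B : ℝ} (hR : 0 ≤ R) (b : ℝ) {f : (κ → ℝ) → ℝ} (hf : Rep R B f) :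
    Rep R (|b| * B) (fun x => b * f x) := (Rep.const b).mul hR hf

theorem Rep.neg {R B : ℝ} (hR : 0 ≤ R) {f : (κ → ℝ) → ℝ} (hf : Rep R B f) :
    Rep R B (fun x => - f x) := by
  simpa using hf.smul hR (-1)

theorem Rep.sub {R B B' : ℝ} (hR : 0 ≤ R) {f g : (κ → ℝ) → ℝ} (hf : Rep R B f)
    (hg : Rep R B' g) : Rep R (B + B') (fun x => f x - g x) := by
  simpa [sub_eq_add_neg] using hf.add hR (hg.neg hR)

theorem Rep.pow {R B : ℝ} (hR : 0 ≤ R) {f : (κ → ℝ) → ℝ} (hf : Rep R B f) (n : ℕ) :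
    Rep R (B ^ n) (fun x => f x ^ n) := by
  induction n with
  | zero => simpa using Rep.const (κ := κ) (R := R) 1
  | succ n ih => simpa [pow_succ] using ih.mul hR hf

theorem Rep.prod {A : Type} {R : ℝ} (hR : 0 ≤ R) (s : Finset A) {B : A → ℝ}
    {f : A → (κ → ℝ) → ℝ} (h : ∀ a ∈ s, Rep R (B a) (f a)) :
    Rep R (∏ a ∈ s, B a) (fun x => ∏ a ∈ s, f a x) := by
  classical
  induction s using Finset.induction_on with
  | empty => simpa using Rep.const (κ := κ) (R := R) 1
  | insert a s ha ih =>
    simp only [Finset.prod_insert ha]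
    exact (h a (by simp)).mul hR (ih fun b hb => h b (by simp [hb]))

theorem Rep.mon_comp {κ' : Type} {R S : ℝ} (hR : 0 ≤ R) {φ : κ' → (κ → ℝ) → ℝ}
    (h : ∀ i, Rep R S (φ i)) (w : List κ') :
    Rep R (S ^ w.length) (fun x => mon w (fun i => φ i x)) := by
  induction w with
  | nil => simpa [mon_nil] using Rep.const (κ := κ) (R := R) 1
  | cons i w ih =>
    simp only [mon_cons, List.length_cons, pow_succ']
    exact (h i).mul hR ih

/-- composition, general version -/
theorem Rep.comp {κ' : Type} {R S B : ℝ} (hR : 0 ≤ R) {φ : κ' → (κ → ℝ) → ℝ} {q : (κ' → ℝ) → ℝ}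
    (hq : Rep S B q) (h : ∀ i, Rep R S (φ i)) : Rep R B (fun x => q (fun i => φ i x)) := by
  obtain ⟨J, hJ, c, w, h1, h2, h3⟩ := hq
  refine (Rep.tsum hR (f := fun j x => c j * mon (w j) (fun i => φ i x))
    (fun j => (Rep.mon_comp hR h (w j)).smul hR (c j)) h1 ?_).mono h2
  intro x hx
  exact h3 _ (fun i => (h i).bound hx)

theorem PolyRep.rep {N : ℕ} {R B : ℝ} (hR : 0 ≤ R) {q : (κ → ℝ) → ℝ} (h : PolyRep N R B q) :
    Rep R B q := by
  obtain ⟨s, c, h1, h2, h3⟩ := h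
  refine ((Rep.sum hR s (fun w _ => Rep.monomial (c w) w)).mono h2).congr fun x _ => h3 x

theorem PolyRep.comp {κ' : Type} {N : ℕ} {R R' S B : ℝ} (hR : 0 ≤ R) (hR' : 0 < R') (hS : R' ≤ S)
    {φ : κ' → (κ → ℝ) → ℝ} {q : (κ' → ℝ) → ℝ}
    (hq : PolyRep N R' B q) (h : ∀ i, Rep R S (φ i)) :
    Rep R ((S / R') ^ N * B) (fun x => q (fun i => φ i x)) := by
  obtain ⟨s, c, h1, h2, h3⟩ := hq
  have h1S : 1 ≤ S / R' := by rwa [one_le_div hR']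
  refine ((Rep.sum hR s (fun w _ => (Rep.mon_comp hR h w).smul hR (c w))).mono ?_).congr
    fun x _ => h3 _
  refine le_trans ?_ (mul_le_mul_of_nonneg_left h2 (by positivity))
  rw [Finset.mul_sum]
  refine Finset.sum_le_sum fun w hw => ?_
  have : S ^ w.length = (S / R') ^ w.length * R' ^ w.length := by
    rw [← mul_pow, div_mul_cancel₀ _ hR'.ne']
  rw [this]
  have h5 : (S / R') ^ w.length ≤ (S / R') ^ N := pow_le_pow_right₀ h1S (h1 w hw)
  calc |c w| * ((S / R') ^ w.length * R' ^ w.length)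
      = (S / R') ^ w.length * (|c w| * R' ^ w.length) := by ring
    _ ≤ _ := mul_le_mul_of_nonneg_right h5 (by positivity)

theorem PolyRep.const {N : ℕ} {R : ℝ} (b : ℝ) : PolyRep N R |b| (fun _ : κ → ℝ => b) :=
  ⟨{[]}, fun _ => b, by simp, by simp, by simp [mon_nil]⟩

/-- canonical expansions -/
theorem Rep.canon {R B : ℝ} (hR : 0 ≤ R) {f : (κ → ℝ) → ℝ} (h : Rep R B f) :
    ∃ c : List κ → ℝ, Summable (fun w => |c w| * R ^ w.length) ∧
      ∑' w, |c w| * R ^ w.length ≤ B ∧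
      ∀ x : κ → ℝ, (∀ i, |x i| ≤ R) → f x = ∑' w, c w * mon w x := by
  obtain ⟨J, hJ, c, w, h1, h2, h3⟩ := h
  rcases hR.eq_or_lt with rfl | hR
  · refine ⟨fun v => if v = [] then f 0 else 0, ?_, ?_, ?_⟩
    · refine summable_of_ne_finset_zero (s := {[]}) ?_
      intro b hb
      simp at hb
      simp [hb]
    · rw [tsum_eq_single []]
      · simp
        exact Rep.bound ⟨J, hJ, c, w, h1, h2, h3⟩ (by simp)
      · intro b hb; simp [hb]
    · intro x hx
      rw [tsum_eq_single []]
      · have : x = 0 := by ext i; simpa using hx i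
        simp [mon_nil, this]
      · intro b hb; simp [hb]
  have hpos : ∀ v : List κ, 0 < R ^ v.length := fun v => by positivity
  let e := Equiv.sigmaFiberEquiv w
  have hS : Summable (fun p : (Σ v, {j // w j = v}) => |c p.2| * R ^ (w p.2).length) :=
    (e.summable_iff (f := fun j => |c j| * R ^ (w j).length)).2 h1
  have hf : ∀ v : List κ, Summable (fun j : {j // w j = v} => |c j|) := by
    intro v
    have := hS.sigma_factor v
    have h5 : (fun j : {j // w j = v} => |c j| * R ^ (w j).length) =
        fun j : {j // w j = v} => |c j| * R ^ v.length := by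
      ext j; rw [j.2]
    simp only at this
    rw [h5] at this
    exact (summable_mul_right_iff (hpos v).ne').1 this
  have hle : ∀ v : List κ, |∑' j : {j // w j = v}, c j| * R ^ v.length ≤
      ∑' j : {j // w j = v}, |c j| * R ^ (w j).length := by
    intro v
    have h5 : (fun j : {j // w j = v} => |c j| * R ^ (w j).length) =
        fun j : {j // w j = v} => |c j| * R ^ v.length := by
      ext j; rw [j.2]
    rw [h5, tsum_mul_right]
    refine mul_le_mul_of_nonneg_right ?_ (hpos v).le
    exact abs_tsum_le (hf v)
  have hSS := Summable.of_nonneg_of_le (fun v => by positivity) hle hS.sigma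
  refine ⟨fun v => ∑' j : {j // w j = v}, c j, hSS, ?_, ?_⟩
  · refine (hSS.tsum_le_tsum hle hS.sigma).trans ?_
    rw [← hS.tsum_sigma]
    refine le_trans (le_of_eq ?_) h2
    exact e.tsum_eq (fun j => |c j| * R ^ (w j).length)
  · intro x hx
    have h4 := (summable_mon hS hx).of_abs
    rw [h3 x hx, ← e.tsum_eq, ]
    refine h4.tsum_sigma.trans ?_
    refine tsum_congr fun v => ?_
    rw [← tsum_mul_right]
    refine tsum_congr fun j => ?_
    rw [j.2]

/-- truncation -/
theorem Rep.trunc [Finite κ] {B : ℝ} {f : (κ → ℝ) → ℝ} (h : Rep 4 B f) (N : ℕ) :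
    ∃ q, PolyRep N 4 B q ∧ ∀ x : κ → ℝ, (∀ i, |x i| ≤ 2) → |f x - q x| ≤ (1 / 2) ^ N * B := by
  obtain ⟨c, h1, h2, h3⟩ := h.canon (by norm_num)
  have hfin : {w : List κ | w.length ≤ N}.Finite := List.finite_length_le κ N
  let s := hfin.toFinset
  have hs : ∀ w, w ∈ s ↔ w.length ≤ N := fun w => by simp [s]
  refine ⟨fun x => ∑ w ∈ s, c w * mon w x, ⟨s, c, fun w hw => (hs w).1 hw, ?_, fun x => rfl⟩, ?_⟩
  · exact (h1.sum_le_tsum s (fun w _ => by positivity)).trans h2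
  · intro x hx
    have hx4 : ∀ i, |x i| ≤ 4 := fun i => (hx i).trans (by norm_num)
    have h4 := summable_mon (w := fun w => w) h1 hx4
    rw [h3 x hx4, ← h4.of_abs.sum_add_tsum_subtype_compl s, add_sub_cancel_left]
    have hle : ∀ w : {w // w ∉ s}, |c w * mon (w : List κ) x| ≤
        (1 / 2) ^ N * (|c w| * 4 ^ (w : List κ).length) := by
      intro w
      have hw := w.2
      rw [hs, not_le] at hw
      rw [abs_mul]
      have h5 := abs_mon_le (w : List κ) x hx
      have h6 : (2 : ℝ) ^ (w : List κ).length = (1 / 2) ^ (w : List κ).length *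
          4 ^ (w : List κ).length := by rw [← mul_pow]; norm_num
      have h7 : ((1 : ℝ) / 2) ^ (w : List κ).length ≤ (1 / 2) ^ N :=
        pow_le_pow_of_le_one (by norm_num) (by norm_num) hw.le
      calc |c w| * |mon (w : List κ) x| ≤ |c w| * ((1 / 2) ^ (w : List κ).length *
          4 ^ (w : List κ).length) := by
            rw [← h6]; exact mul_le_mul_of_nonneg_left h5 (abs_nonneg _)
        _ ≤ |c w| * ((1 / 2) ^ N * 4 ^ (w : List κ).length) := by gcongr
        _ = _ := by ring
    have hs1 : Summable (fun w : {w // w ∉ s} => |c w * mon (w : List κ) x|) :=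
      h4.subtype (fun w => w ∉ s)
    have hs2 : Summable (fun w : {w // w ∉ s} => |c w| * 4 ^ (w : List κ).length) :=
      h1.subtype (fun w => w ∉ s)
    calc |∑' w : {w // w ∉ s}, c w * mon (w : List κ) x|
        ≤ ∑' w : {w // w ∉ s}, |c w * mon (w : List κ) x| := abs_tsum_le hs1
      _ ≤ ∑' w : {w // w ∉ s}, (1 / 2) ^ N * (|c w| * 4 ^ (w : List κ).length) :=
        hs1.tsum_le_tsum hle (hs2.mul_left _)
      _ = (1 / 2) ^ N * ∑' w : {w // w ∉ s}, (|c w| * 4 ^ (w : List κ).length) := tsum_mul_left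
      _ ≤ (1 / 2) ^ N * B := by
        refine mul_le_mul_of_nonneg_left (le_trans ?_ h2) (by positivity)
        exact Summable.tsum_subtype_le _ {w | w ∉ s} (fun w => by positivity) h1

theorem PolyRep.of_mvPolynomial (p : MvPolynomial κ ℝ) :
    ∃ N B, PolyRep N 4 B (fun x => MvPolynomial.eval x p) := by
  classical
  let wd : (κ →₀ ℕ) → List κ := fun m => (Finsupp.toMultiset m).toList
  have hw : ∀ m, Multiset.toFinsupp (wd m : Multiset κ) = m := by
    intro m; simp [wd]
  have hinj : Function.Injective wd := fun a b hab => by rw [← hw a, hab, hw b]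
  refine ⟨(p.support.image wd).sup List.length,
    ∑ w ∈ p.support.image wd, |p.coeff (Multiset.toFinsupp (w : Multiset κ))| * 4 ^ w.length,
    p.support.image wd, fun w => p.coeff (Multiset.toFinsupp (w : Multiset κ)),
    fun w hw => Finset.le_sup (f := List.length) hw, le_rfl, fun x => ?_⟩
  rw [Finset.sum_image (fun a _ b _ h => hinj h)]
  beta_reduce
  rw [MvPolynomial.eval_eq]
  refine Finset.sum_congr rfl fun m _ => ?_
  rw [hw]
  congr 1
  have : mon (wd m) x = ((Finsupp.toMultiset m).map x).prod := by
    rw [mon, ← Multiset.prod_coe, ← Multiset.map_coe]; simp [wd]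
  rw [this, Finsupp.toMultiset_map, Finsupp.prod_toMultiset, Finsupp.prod_mapDomain_index]
  · rfl
  · simp
  · intros; rw [pow_add]
end
end GW

end

section

namespace GW

/-! ### Polynomial bump functions -/

/-- upper binomial tail -/
noncomputable def bin (K : ℕ) (v : ℝ) : ℝ :=
  ∑ j ∈ Finset.Ico K (2 * K + 1), (v ^ j * (1 - v) ^ (2 * K - j)) * ((2 * K).choose j)

theorem bin_split (K : ℕ) (v : ℝ) :
    ∑ j ∈ Finset.range K, (v ^ j * (1 - v) ^ (2 * K - j)) * ((2 * K).choose j) + bin K v = 1 := by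
  rw [bin, Finset.sum_range_add_sum_Ico _ (by omega), ← add_pow]
  simp

theorem bin_nonneg (K : ℕ) {v : ℝ} (h0 : 0 ≤ v) (h1 : v ≤ 1) : 0 ≤ bin K v := by
  have : 0 ≤ 1 - v := by linarith
  exact Finset.sum_nonneg fun j _ => by positivity

theorem bin_le_one (K : ℕ) {v : ℝ} (h0 : 0 ≤ v) (h1 : v ≤ 1) : bin K v ≤ 1 := by
  have h2 : 0 ≤ 1 - v := by linarith
  rw [← bin_split K v]
  have : 0 ≤ ∑ j ∈ Finset.range K, (v ^ j * (1 - v) ^ (2 * K - j)) * ((2 * K).choose j) :=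
    Finset.sum_nonneg fun j _ => by positivity
  linarith

theorem bin_small (K : ℕ) {v : ℝ} (h0 : 0 ≤ v) (h1 : v ≤ 1 / 4) : bin K v ≤ (3 / 4) ^ K := by
  have h2 : 0 ≤ 1 - v := by linarith
  have key : 3 ^ K * bin K v ≤ (3 * v + (1 - v)) ^ (2 * K) := by
    rw [add_pow, ← Finset.sum_range_add_sum_Ico _ (show K ≤ 2 * K + 1 by omega), bin,
      Finset.mul_sum]
    have : 0 ≤ ∑ j ∈ Finset.range K,
      ((3 * v) ^ j * (1 - v) ^ (2 * K - j)) * ((2 * K).choose j : ℝ) :=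
      Finset.sum_nonneg fun j _ => by positivity
    refine le_trans ?_ (le_add_of_nonneg_left this)
    refine Finset.sum_le_sum fun j hj => ?_
    have hj := (Finset.mem_Ico.1 hj).1
    have h3 : (3 : ℝ) ^ K ≤ 3 ^ j := pow_le_pow_right₀ (by norm_num) hj
    calc (3 : ℝ) ^ K * ((v ^ j * (1 - v) ^ (2 * K - j)) * ((2 * K).choose j))
        ≤ 3 ^ j * ((v ^ j * (1 - v) ^ (2 * K - j)) * ((2 * K).choose j)) := by gcongr
      _ = _ := by rw [mul_pow]; ring
  have h4 : (3 * v + (1 - v)) ^ (2 * K) ≤ 3 ^ K * (3 / 4) ^ K := by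
    rw [pow_mul, ← mul_pow]
    refine pow_le_pow_left₀ (by positivity) ?_ K
    nlinarith
  exact le_of_mul_le_mul_left (key.trans h4) (by positivity)

theorem bin_large (K : ℕ) {v : ℝ} (h0 : 3 / 4 ≤ v) (h1 : v ≤ 1) : 1 - bin K v ≤ (3 / 4) ^ K := by
  have h2 : 0 ≤ 1 - v := by linarith
  have h00 : 0 ≤ v := by linarith
  have key : 3 ^ K * (1 - bin K v) ≤ (v + 3 * (1 - v)) ^ (2 * K) := by
    rw [eq_sub_of_add_eq (bin_split K v) |>.symm, add_pow,
      ← Finset.sum_range_add_sum_Ico _ (show K ≤ 2 * K + 1 by omega), Finset.mul_sum]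
    have : 0 ≤ ∑ j ∈ Finset.Ico K (2 * K + 1),
      (v ^ j * (3 * (1 - v)) ^ (2 * K - j)) * ((2 * K).choose j : ℝ) :=
      Finset.sum_nonneg fun j _ => by positivity
    refine le_trans ?_ (le_add_of_nonneg_right this)
    refine Finset.sum_le_sum fun j hj => ?_
    have hj := Finset.mem_range.1 hj
    have h3 : (3 : ℝ) ^ K ≤ 3 ^ (2 * K - j) := pow_le_pow_right₀ (by norm_num) (by omega)
    calc (3 : ℝ) ^ K * ((v ^ j * (1 - v) ^ (2 * K - j)) * ((2 * K).choose j))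
        ≤ 3 ^ (2 * K - j) * ((v ^ j * (1 - v) ^ (2 * K - j)) * ((2 * K).choose j)) := by gcongr
      _ = _ := by rw [mul_pow]; ring
  have h4 : (v + 3 * (1 - v)) ^ (2 * K) ≤ 3 ^ K * (3 / 4) ^ K := by
    rw [pow_mul, ← mul_pow]
    refine pow_le_pow_left₀ (by positivity) ?_ K
    nlinarith
  exact le_of_mul_le_mul_left (key.trans h4) (by positivity)

/-- polynomial bump -/
noncomputable def chi {d : ℕ} (D K : ℕ) (y : Fin d → ℝ) : ℝ :=
  bin K ((1 - (∑ i, y i ^ 2) / D) ^ D)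

section
variable {d D : ℕ} (K : ℕ) {y : Fin d → ℝ}

theorem chi_mem (hD : 0 < D) (h : ∑ i, y i ^ 2 ≤ D) : 0 ≤ chi D K y ∧ chi D K y ≤ 1 := by
  have hD' : (0 : ℝ) < D := by exact_mod_cast hD
  have h1 : 0 ≤ 1 - (∑ i, y i ^ 2) / D := by
    rw [sub_nonneg, div_le_one hD']; exact h
  have h0 : 0 ≤ ∑ i, y i ^ 2 := Finset.sum_nonneg fun i _ => by positivity
  have h2 : 1 - (∑ i, y i ^ 2) / D ≤ 1 := by
    have : 0 ≤ (∑ i, y i ^ 2) / D := by positivity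
    linarith
  exact ⟨bin_nonneg _ (by positivity) (pow_le_one₀ h1 h2), bin_le_one _ (by positivity)
    (pow_le_one₀ h1 h2)⟩

theorem chi_small (hD : 0 < D) (h : ∑ i, y i ^ 2 ≤ D) (h4 : 4 ≤ ∑ i, y i ^ 2) :
    chi D K y ≤ (3 / 4) ^ K := by
  have hD' : (0 : ℝ) < D := by exact_mod_cast hD
  have h1 : 0 ≤ 1 - (∑ i, y i ^ 2) / D := by
    rw [sub_nonneg, div_le_one hD']; exact h
  refine bin_small _ (by positivity) ?_
  have h2 : 1 - (∑ i, y i ^ 2) / D ≤ Real.exp (-(4 / D)) := by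
    refine le_trans ?_ (Real.add_one_le_exp _)
    have : 4 / (D : ℝ) ≤ (∑ i, y i ^ 2) / D := by gcongr
    linarith
  calc (1 - (∑ i, y i ^ 2) / D) ^ D ≤ Real.exp (-(4 / D)) ^ D := pow_le_pow_left₀ h1 h2 _
    _ = Real.exp (-4) := by
      rw [← Real.exp_nat_mul]; congr 1; field_simp
    _ ≤ 1 / 4 := by
      rw [Real.exp_neg, inv_eq_one_div]
      have := Real.add_one_le_exp (4 : ℝ)
      gcongr
      linarith

theorem chi_large (hD : 0 < D) (h4 : ∑ i, y i ^ 2 ≤ 1 / 4) :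
    1 - chi D K y ≤ (3 / 4) ^ K := by
  have hD' : (1 : ℝ) ≤ D := by exact_mod_cast hD
  have h0 : 0 ≤ ∑ i, y i ^ 2 := Finset.sum_nonneg fun i _ => by positivity
  have h00 : 0 ≤ (∑ i, y i ^ 2) / D := by positivity
  have h01 : (∑ i, y i ^ 2) / D ≤ 1 := by
    rw [div_le_one (by linarith)]; linarith
  refine bin_large _ ?_ (pow_le_one₀ (by linarith) (by linarith))
  have := one_add_mul_le_pow (a := -((∑ i, y i ^ 2) / D)) (by linarith) D
  have h5 : (D : ℝ) * -((∑ i, y i ^ 2) / D) = - (∑ i, y i ^ 2) := by field_simp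
  rw [h5] at this
  rw [← sub_eq_add_neg, ← sub_eq_add_neg] at this
  linarith

end

theorem chi_rep {κ : Type} {d D : ℕ} (K : ℕ) (hD : 0 < D) {S R : ℝ} (hR : 0 ≤ R)
    (hS : d * S ^ 2 ≤ D) {φ : Fin d → (κ → ℝ) → ℝ} (h : ∀ i, Rep R S (φ i)) :
    Rep R (((1 + 2 ^ (D + 1)) ^ 2) ^ K) (fun x => chi D K (fun i => φ i x)) := by
  have hD' : (0 : ℝ) < D := by exact_mod_cast hD
  have h1 : Rep R (∑ i : Fin d, S ^ 2) (fun x => ∑ i, φ i x ^ 2) :=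
    Rep.sum hR _ fun i _ => (h i).pow hR 2
  have h2 : Rep R 2 (fun x => 1 - (∑ i, φ i x ^ 2) / D) := by
    have h3 := (Rep.const (κ := κ) (R := R) 1).sub hR (h1.smul hR (1 / (D : ℝ)))
    refine (h3.mono ?_).congr fun x _ => by ring
    have : |1 / (D : ℝ)| = 1 / D := abs_of_pos (by positivity)
    rw [this]
    simp only [Finset.sum_const, Finset.card_univ, Fintype.card_fin, nsmul_eq_mul, abs_one]
    have : 1 / (D : ℝ) * (d * S ^ 2) ≤ 1 / (D : ℝ) * D := by gcongr
    rw [one_div_mul_cancel hD'.ne'] at this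
    linarith
  have h3 := h2.pow hR D
  have h4 : Rep R (1 + 2 ^ D) (fun x => 1 - (1 - (∑ i, φ i x ^ 2) / D) ^ D) := by
    simpa using (Rep.const (κ := κ) (R := R) 1).sub hR h3
  have h5 := Rep.sum hR (Finset.Ico K (2 * K + 1)) fun j _ =>
    ((h3.pow hR j).mul hR (h4.pow hR (2 * K - j))).mul hR
      (Rep.const (κ := κ) (R := R) ((2 * K).choose j : ℝ))
  refine (h5.mono ?_).congr fun x _ => rfl
  rw [← pow_mul]
  have e : (1 + 2 ^ (D + 1) : ℝ) = 2 ^ D + (1 + 2 ^ D) := by ring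
  rw [e, add_pow, ← Finset.sum_range_add_sum_Ico _ (show K ≤ 2 * K + 1 by omega)]
  simp only [Nat.abs_cast]
  refine le_add_of_nonneg_left (Finset.sum_nonneg fun j _ => by positivity)

end GW

end

section

namespace GW

section weights
variable {ι : Type} [LinearOrder ι]

/-- ordered partition weights -/
noncomputable def wgt (s : Finset ι) (χ : ι → ℝ) (c : ι) : ℝ :=
  χ c * ∏ j ∈ s with j < c, (1 - χ j)

theorem prod01 {s : Finset ι} {χ : ι → ℝ} (h : ∀ c ∈ s, 0 ≤ χ c ∧ χ c ≤ 1) :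
    0 ≤ ∏ j ∈ s, (1 - χ j) ∧ ∏ j ∈ s, (1 - χ j) ≤ 1 :=
  ⟨Finset.prod_nonneg fun j hj => by linarith [(h j hj).2],
    Finset.prod_le_one (fun j hj => by linarith [(h j hj).2])
      (fun j hj => by linarith [(h j hj).1])⟩

theorem one_sub_prod_le {s : Finset ι} {χ : ι → ℝ} {δ : ℝ} (h : ∀ c ∈ s, 0 ≤ χ c ∧ χ c ≤ 1)
    (hδ : ∀ c ∈ s, χ c ≤ δ) : 1 - ∏ j ∈ s, (1 - χ j) ≤ s.card * δ := by
  induction s using Finset.induction_on with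
  | empty => simp
  | insert a s ha ih =>
    rw [Finset.prod_insert ha, Finset.card_insert_of_notMem ha]
    have h1 := ih (fun c hc => h c (by simp [hc])) (fun c hc => hδ c (by simp [hc]))
    have h2 := prod01 (s := s) (χ := χ) (fun c hc => h c (by simp [hc]))
    have h3 := h a (by simp)
    have h4 := hδ a (by simp)
    push_cast
    nlinarith

theorem wgt_mem {s : Finset ι} {χ : ι → ℝ} (h : ∀ c ∈ s, 0 ≤ χ c ∧ χ c ≤ 1) {c : ι}
    (hc : c ∈ s) : 0 ≤ wgt s χ c ∧ wgt s χ c ≤ χ c ∧ wgt s χ c ≤ 1 := by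
  have h2 := prod01 (s := s.filter (· < c)) (χ := χ) (fun c hc => h c (Finset.mem_filter.1 hc).1)
  have h3 := h c hc
  refine ⟨mul_nonneg h3.1 h2.1, mul_le_of_le_one_right h3.1 h2.2, ?_⟩
  exact (mul_le_of_le_one_right h3.1 h2.2).trans h3.2

theorem sum_wgt (s : Finset ι) (χ : ι → ℝ) :
    1 - ∑ c ∈ s, wgt s χ c = ∏ c ∈ s, (1 - χ c) := by
  rw [Finset.prod_one_sub_ordered]; rfl

theorem wgt_compare {s t : Finset ι} (hts : t ⊆ s) {χ P : ι → ℝ} {P0 δ E : ℝ} {m : ℕ}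
    (hm : s.card ≤ m) (h : ∀ c ∈ s, 0 ≤ χ c ∧ χ c ≤ 1) (hδ0 : 0 ≤ δ)
    (hδ : ∀ c ∈ s, c ∉ t → χ c ≤ δ) (hE : ∀ c ∈ s, |P c - P0| ≤ E) (hE0 : 0 ≤ E) :
    |∑ c ∈ s, wgt s χ c * (P c - P0) - ∑ c ∈ t, wgt t χ c * (P c - P0)|
      ≤ (m + m ^ 2) * (δ * E) := by
  have hm' : (s.card : ℝ) ≤ m := by exact_mod_cast hm
  have hc1 : ((s \ t).card : ℝ) ≤ m := by
    exact_mod_cast (Finset.card_le_card Finset.sdiff_subset).trans hm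
  have hc2 : (t.card : ℝ) ≤ m := by exact_mod_cast (Finset.card_le_card hts).trans hm
  rw [← Finset.sum_sdiff hts, add_sub_assoc, ← Finset.sum_sub_distrib]
  have e1 : |∑ c ∈ s \ t, wgt s χ c * (P c - P0)| ≤ m * (δ * E) := by
    refine (Finset.abs_sum_le_sum_abs _ _).trans ?_
    refine (Finset.sum_le_card_nsmul _ _ (δ * E) fun c hc => ?_).trans ?_
    · rw [Finset.mem_sdiff] at hc
      have := wgt_mem h hc.1
      rw [abs_mul, abs_of_nonneg this.1]
      exact mul_le_mul (this.2.1.trans (hδ c hc.1 hc.2)) (hE c hc.1) (abs_nonneg _) hδ0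
    · rw [nsmul_eq_mul]; gcongr
  have e2 : |∑ c ∈ t, (wgt s χ c * (P c - P0) - wgt t χ c * (P c - P0))| ≤
      m * (m * δ * E) := by
    refine (Finset.abs_sum_le_sum_abs _ _).trans ?_
    refine (Finset.sum_le_card_nsmul _ _ (m * δ * E) fun c hc => ?_).trans ?_
    · rw [← sub_mul, abs_mul]
      refine mul_le_mul ?_ (hE c (hts hc)) (abs_nonneg _) (by positivity)
      have h5 : (s.filter (· < c)) = (t.filter (· < c)) ∪ ((s \ t).filter (· < c)) := by
        rw [← Finset.filter_union, Finset.union_sdiff_of_subset hts]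
      have h6 : Disjoint (t.filter (· < c)) ((s \ t).filter (· < c)) :=
        Finset.disjoint_filter_filter Finset.disjoint_sdiff
      have h7 : wgt s χ c = wgt t χ c * ∏ j ∈ (s \ t) with j < c, (1 - χ j) := by
        rw [wgt, wgt, h5, Finset.prod_union h6, mul_assoc]
      have h8 := wgt_mem (s := t) (fun c hc => h c (hts hc)) hc
      have hmem : ∀ c' ∈ (s \ t).filter (· < c), c' ∈ s ∧ c' ∉ t := by
        intro c' hc'; simp at hc'; exact hc'.1
      have h9 := prod01 (s := (s \ t).filter (· < c)) (χ := χ) (fun c' hc' => h c' (hmem c' hc').1)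
      have h10 := one_sub_prod_le (s := (s \ t).filter (· < c)) (χ := χ) (δ := δ)
        (fun c' hc' => h c' (hmem c' hc').1) (fun c' hc' => hδ c' (hmem c' hc').1 (hmem c' hc').2)
      have h11 : (((s \ t).filter (· < c)).card : ℝ) ≤ m :=
        le_trans (by exact_mod_cast Finset.card_filter_le _ _) hc1
      have h12 : (((s \ t).filter (· < c)).card : ℝ) * δ ≤ m * δ := by gcongr
      rw [h7, abs_le]
      constructor <;> nlinarith [h8.1, h8.2.2, h9.1, h9.2]
    · rw [nsmul_eq_mul]; gcongr
  refine (abs_add_le _ _).trans ((add_le_add e1 e2).trans (le_of_eq ?_))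
  ring

theorem wgt_swap (t : Finset ι) (χ P : ι → ℝ) (A B : ℝ) :
    (B + ∑ c ∈ t, wgt t χ c * (P c - B)) - (A + ∑ c ∈ t, wgt t χ c * (P c - A)) =
      (B - A) * ∏ c ∈ t, (1 - χ c) := by
  rw [← sum_wgt]
  have : ∀ X : ℝ, ∑ c ∈ t, wgt t χ c * (P c - X) =
      ∑ c ∈ t, wgt t χ c * P c - (∑ c ∈ t, wgt t χ c) * X := by
    intro X
    rw [Finset.sum_mul, ← Finset.sum_sub_distrib]
    exact Finset.sum_congr rfl fun c _ => by ring
  rw [this, this]; ring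

end weights

/-- Uniformly controlled atlas data. -/
structure Geo (d : ℕ) (M ι : Type) where
  k : ι → M → (Fin d → ℝ)
  B : ι → Set M
  Nbr : ι → Finset ι
  φ : ι → ι → (Fin d → ℝ) → (Fin d → ℝ)
  m : ℕ
  S : ℝ
  hS : 4 ≤ S
  card : ∀ a, (Nbr a).card ≤ m
  mem_nbr : ∀ {a c x}, x ∈ B a → x ∈ B c → c ∈ Nbr a
  lt : ∀ {a x}, x ∈ B a → ∑ i, k a x i ^ 2 < 4
  surj : ∀ a y, ∑ i, y i ^ 2 < 4 → ∃ x ∈ B a, k a x = y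
  rep : ∀ {a c}, c ∈ Nbr a → ∀ i, Rep 4 S (fun y => φ a c y i)
  trans : ∀ {a c x}, x ∈ B a → c ∈ Nbr a → φ a c (k a x) = k c x
  inside : ∀ {a c x}, x ∈ B a → c ∈ Nbr a → ∑ i, k c x i ^ 2 < 4 → x ∈ B c
  cover : ∀ x, ∃ a, x ∈ B a ∧ ∑ i, k a x i ^ 2 ≤ 1 / 4

theorem abs_le_of_sq {d : ℕ} {y : Fin d → ℝ} (h : ∑ i, y i ^ 2 < 4) (i : Fin d) : |y i| ≤ 2 := by
  have : y i ^ 2 ≤ ∑ i, y i ^ 2 :=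
    Finset.single_le_sum (f := fun i => y i ^ 2) (fun i _ => by positivity) (Finset.mem_univ i)
  exact abs_le_of_sq_le_sq (by linarith) (by norm_num)

theorem step {d : ℕ} {M ι : Type} [LinearOrder ι] (g : Geo d M ι) :
    ∃ (β : ℕ) (Q C : ℝ), 1 ≤ Q ∧ 0 ≤ C ∧ ∀ K : ℕ, 1 ≤ K → ∀ E : ℝ, 0 ≤ E →
      ∀ p : ι → (Fin d → ℝ) → ℝ,
      (∀ a, ∀ c ∈ g.Nbr a, Rep 4 E (fun y => p c (g.φ a c y) - p a y)) →
      ∃ q : ι → (Fin d → ℝ) → ℝ, (∀ a, ∃ B, PolyRep (β * K) 4 B (q a)) ∧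
        (∀ a, ∀ c ∈ g.Nbr a,
          Rep 4 (Q ^ K * E) (fun y => (p c (g.φ a c y) + q c (g.φ a c y)) - (p a y + q a y))) ∧
        (∀ a b x, x ∈ g.B a → x ∈ g.B b →
          |(p b (g.k b x) + q b (g.k b x)) - (p a (g.k a x) + q a (g.k a x))|
            ≤ C * (3 / 4) ^ K * E) ∧
        (∀ ε, (∀ a b x, x ∈ g.B a → x ∈ g.B b → |p b (g.k b x) - p a (g.k a x)| ≤ ε) →
          ∀ a x, x ∈ g.B a → |q a (g.k a x)| ≤ g.m * ε + C * (3 / 4) ^ K * E) := by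
  classical
  set S := g.S with hSdef
  set m := g.m with hm
  have hS4 : 4 ≤ S := g.hS
  set D : ℕ := ⌈d * S ^ 2⌉₊ + 1 with hD
  have hD0 : 0 < D := by omega
  have hDS : d * S ^ 2 ≤ D := by
    rw [hD]; push_cast; linarith [Nat.le_ceil (d * S ^ 2)]
  set T : ℝ := (1 + 2 ^ (D + 1)) ^ 2 with hT
  have hT1 : 1 ≤ T := by
    rw [hT]
    refine one_le_pow₀ ?_
    have : (0 : ℝ) ≤ 2 ^ (D + 1) := by positivity
    linarith
  set W : ℝ := (2 * T) ^ (m + 1) with hW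
  have hW1 : 1 ≤ W := one_le_pow₀ (by linarith)
  obtain ⟨β, hβ⟩ : ∃ β : ℕ, (1 / 2 : ℝ) ^ β * W ≤ 3 / 4 := by
    obtain ⟨β, hβ⟩ := exists_pow_lt_of_lt_one (show (0 : ℝ) < 3 / 4 / W by positivity)
      (show (1 / 2 : ℝ) < 1 by norm_num)
    exact ⟨β, by rw [lt_div_iff₀ (by positivity)] at hβ; exact hβ.le⟩
  have hS1 : 1 ≤ S / 4 := by linarith
  refine ⟨β, (1 + 2 * m) * ((S / 4) ^ β * W), 2 * m ^ 2 + 4 * m + 1, ?_, by positivity, ?_⟩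
  · refine one_le_mul_of_one_le_of_one_le ?_ (one_le_mul_of_one_le_of_one_le (one_le_pow₀ hS1) hW1)
    have : (0 : ℝ) ≤ m := by positivity
    linarith
  intro K hK E hE p hp
  have R4 : (0 : ℝ) ≤ 4 := by norm_num
  -- weights as functions of the coordinate
  have hwr : ∀ a, ∀ c ∈ g.Nbr a,
      Rep 4 (W ^ K) (fun y => wgt (g.Nbr a) (fun c => chi D K (g.φ a c y)) c) := by
    intro a c hc
    have h1 : ∀ c ∈ g.Nbr a, Rep 4 (T ^ K) (fun y => chi D K (g.φ a c y)) := fun c hc =>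
      chi_rep K hD0 R4 hDS (fun i => g.rep hc i)
    have h2 : ∀ c ∈ g.Nbr a, Rep 4 ((2 * T) ^ K) (fun y => 1 - chi D K (g.φ a c y)) := by
      intro c hc
      have h3 := (Rep.const (κ := Fin d) (R := 4) 1).sub R4 (h1 c hc)
      refine h3.mono ?_
      rw [abs_one, mul_pow]
      have h4 : (1 : ℝ) ≤ T ^ K := one_le_pow₀ hT1
      have h5 : (2 : ℝ) ≤ 2 ^ K := by
        calc (2 : ℝ) = 2 ^ 1 := by norm_num
          _ ≤ _ := pow_le_pow_right₀ (by norm_num) hK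
      nlinarith
    have h3 := (h1 c hc).mul R4 (Rep.prod R4 ((g.Nbr a).filter (· < c))
      (fun j hj => h2 j (Finset.mem_filter.1 hj).1))
    refine h3.mono ?_
    have hWK : W ^ K = ((2 * T) ^ K) ^ m * (2 * T) ^ K := by
      rw [hW, ← pow_mul, ← pow_mul, ← pow_add]; congr 1; ring
    rw [Finset.prod_const, hWK, mul_comm]
    have h5 : ((g.Nbr a).filter (· < c)).card ≤ m := (Finset.card_filter_le _ _).trans (g.card a)
    have h6 : (1 : ℝ) ≤ (2 * T) ^ K := one_le_pow₀ (by linarith)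
    refine mul_le_mul (pow_le_pow_right₀ h6 h5) (pow_le_pow_left₀ (by positivity) (by linarith) _)
      (by positivity) (by positivity)
  let r : ι → (Fin d → ℝ) → ℝ := fun a y => ∑ c ∈ g.Nbr a,
    wgt (g.Nbr a) (fun c => chi D K (g.φ a c y)) c * (p c (g.φ a c y) - p a y)
  have hr : ∀ a, Rep 4 (m * (W ^ K * E)) (r a) := by
    intro a
    refine (Rep.sum R4 (g.Nbr a) fun c hc => (hwr a c hc).mul R4 (hp a c hc)).mono ?_
    rw [Finset.sum_const, nsmul_eq_mul]
    have : ((g.Nbr a).card : ℝ) ≤ m := by exact_mod_cast g.card a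
    gcongr
  have hq := fun a => (hr a).trunc (β * K)
  choose q hq1 hq2 using hq
  have htr : ∀ a x, x ∈ g.B a → |r a (g.k a x) - q a (g.k a x)| ≤ m * ((3 / 4) ^ K * E) := by
    intro a x hx
    refine (hq2 a _ (abs_le_of_sq (g.lt hx))).trans ?_
    have : ((1 / 2 : ℝ) ^ β * W) ^ K ≤ (3 / 4) ^ K := pow_le_pow_left₀ (by positivity) hβ K
    calc (1 / 2 : ℝ) ^ (β * K) * (m * (W ^ K * E))
        = m * (((1 / 2 : ℝ) ^ β * W) ^ K * E) := by rw [mul_pow, pow_mul]; ring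
      _ ≤ _ := by gcongr
  -- pointwise values
  have hrx : ∀ a x, x ∈ g.B a → r a (g.k a x) = ∑ c ∈ g.Nbr a,
      wgt (g.Nbr a) (fun c => chi D K (g.k c x)) c * (p c (g.k c x) - p a (g.k a x)) := by
    intro a x hx
    refine Finset.sum_congr rfl fun c hc => ?_
    rw [g.trans hx hc]
    congr 1
    simp only [wgt]
    rw [g.trans hx hc]
    congr 1
    refine Finset.prod_congr rfl fun j hj => ?_
    rw [g.trans hx (Finset.mem_filter.1 hj).1]
  have hsqD : ∀ a x, x ∈ g.B a → ∀ c ∈ g.Nbr a, ∑ i, g.k c x i ^ 2 ≤ D := by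
    intro a x hx c hc
    refine le_trans ?_ hDS
    have : ∀ i, |g.k c x i| ≤ S := by
      intro i
      rw [← g.trans hx hc]
      exact (g.rep hc i).bound fun j => (abs_le_of_sq (g.lt hx) j).trans (by norm_num)
    refine (Finset.sum_le_card_nsmul _ _ (S ^ 2) fun i _ => ?_).trans ?_
    · rw [← sq_abs]; exact pow_le_pow_left₀ (abs_nonneg _) (this i) 2
    · simp
  have hchi : ∀ a x, x ∈ g.B a → ∀ c ∈ g.Nbr a,
      0 ≤ chi D K (g.k c x) ∧ chi D K (g.k c x) ≤ 1 := fun a x hx c hc =>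
    chi_mem K hD0 (hsqD a x hx c hc)
  have hchis : ∀ a x, x ∈ g.B a → ∀ c ∈ g.Nbr a, x ∉ g.B c → chi D K (g.k c x) ≤ (3 / 4) ^ K := by
    intro a x hx c hc hxc
    refine chi_small K hD0 (hsqD a x hx c hc) ?_
    by_contra h
    exact hxc (g.inside hx hc (not_le.1 h))
  have hEb : ∀ a x, x ∈ g.B a → ∀ c ∈ g.Nbr a, |p c (g.k c x) - p a (g.k a x)| ≤ E := by
    intro a x hx c hc
    have := (hp a c hc).bound (x := g.k a x)
      fun j => (abs_le_of_sq (g.lt hx) j).trans (by norm_num)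
    simpa only [g.trans hx hc] using this
  have hρ : (0 : ℝ) ≤ (3 / 4) ^ K := by positivity
  refine ⟨q, fun a => ⟨_, hq1 a⟩, ?_, ?_, ?_⟩
  · intro a c hc
    have h1 := (hq1 c).comp R4 (by norm_num : (0 : ℝ) < 4) hS4 (fun i => g.rep hc i)
    have h2 := ((hp a c hc).add R4 h1).sub R4 ((hq1 a).rep R4)
    refine (h2.mono ?_).congr fun x _ => by ring
    set V : ℝ := (S / 4) ^ β * W with hV
    have hVW : W ≤ V := le_mul_of_one_le_left (by positivity) (one_le_pow₀ hS1)
    have e1 : (S / 4) ^ (β * K) * (m * (W ^ K * E)) = m * V ^ K * E := by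
      rw [hV, mul_pow, pow_mul]; ring
    have e2 : W ^ K ≤ V ^ K := pow_le_pow_left₀ (by positivity) hVW K
    have e3 : (1 : ℝ) ≤ V ^ K := one_le_pow₀ (hW1.trans hVW)
    have e4 : (1 + 2 * m : ℝ) ≤ (1 + 2 * m) ^ K := by
      refine le_self_pow₀ ?_ (by omega)
      have : (0 : ℝ) ≤ m := by positivity
      linarith
    rw [e1, mul_pow (1 + 2 * (m : ℝ)) V K]
    have e5 : E + m * V ^ K * E + m * (W ^ K * E) ≤ ((1 + 2 * m) * V ^ K) * E := by
      have : m * (W ^ K * E) ≤ m * (V ^ K * E) := by gcongr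
      nlinarith
    refine e5.trans ?_
    gcongr
  · intro a b x hxa hxb
    set t := (g.Nbr a).filter (fun c => x ∈ g.B c) with ht
    have hta : t ⊆ g.Nbr a := Finset.filter_subset _ _
    have htm : ∀ c, c ∈ t ↔ x ∈ g.B c := fun c => by
      rw [ht, Finset.mem_filter]; exact ⟨fun h => h.2, fun h => ⟨g.mem_nbr hxa h, h⟩⟩
    have htb : t ⊆ g.Nbr b := fun c hc => g.mem_nbr hxb ((htm c).1 hc)
    set χ : ι → ℝ := fun c => chi D K (g.k c x) with hχ
    set P : ι → ℝ := fun c => p c (g.k c x) with hP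
    have c1 := wgt_compare (χ := χ) (P := P) (P0 := P a) hta (g.card a) (hchi a x hxa) hρ
      (fun c hc hct => hchis a x hxa c hc (fun h => hct ((htm c).2 h))) (hEb a x hxa) hE
    have c2 := wgt_compare (χ := χ) (P := P) (P0 := P b) htb (g.card b) (hchi b x hxb) hρ
      (fun c hc hct => hchis b x hxb c hc (fun h => hct ((htm c).2 h))) (hEb b x hxb) hE
    have c3 := wgt_swap t χ P (P a) (P b)
    have c4 : |(P b - P a) * ∏ c ∈ t, (1 - χ c)| ≤ (3 / 4) ^ K * E := by
      rw [abs_mul, mul_comm]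
      refine mul_le_mul ?_ (hEb a x hxa b (g.mem_nbr hxa hxb)) (abs_nonneg _) hρ
      obtain ⟨e, hxe, he⟩ := g.cover x
      have het : e ∈ t := (htm e).2 hxe
      rw [← Finset.mul_prod_erase t _ het]
      have h1 := prod01 (s := t.erase e) (χ := χ) fun c hc =>
        hchi a x hxa c (hta (Finset.mem_of_mem_erase hc))
      have h2 := hchi a x hxa e (hta het)
      have h3 : 1 - χ e ≤ (3 / 4) ^ K := chi_large K hD0 he
      have h4 : 0 ≤ 1 - χ e := by linarith [h2.2]
      rw [abs_of_nonneg (mul_nonneg h4 h1.1)]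
      exact (mul_le_of_le_one_right h4 h1.2).trans h3
    have t1 := htr a x hxa
    have t2 := htr b x hxb
    rw [hrx a x hxa] at t1
    rw [hrx b x hxb] at t2
    change |(P b + q b (g.k b x)) - (P a + q a (g.k a x))| ≤ _
    rw [← c3] at c4
    change |∑ c ∈ g.Nbr a, wgt (g.Nbr a) χ c * (P c - P a) - _| ≤ _ at t1
    change |∑ c ∈ g.Nbr b, wgt (g.Nbr b) χ c * (P c - P b) - _| ≤ _ at t2
    rw [abs_le] at *
    rw [← hm] at c1 c2
    constructor <;> nlinarith [t1.1, t1.2, t2.1, t2.2, c1.1, c1.2, c2.1, c2.2, c4.1, c4.2]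
  · intro ε hε a x hx
    have t1 := htr a x hx
    rw [hrx a x hx] at t1
    have hε0 : 0 ≤ ε := (abs_nonneg _).trans (hε a a x hx hx)
    have h1 : |∑ c ∈ g.Nbr a, wgt (g.Nbr a) (fun c => chi D K (g.k c x)) c *
        (p c (g.k c x) - p a (g.k a x))| ≤ m * (ε + (3 / 4) ^ K * E) := by
      refine (Finset.abs_sum_le_sum_abs _ _).trans ?_
      refine (Finset.sum_le_card_nsmul _ _ (ε + (3 / 4) ^ K * E) fun c hc => ?_).trans ?_
      · have h2 := wgt_mem (hchi a x hx) hc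
        rw [abs_mul, abs_of_nonneg h2.1]
        by_cases hxc : x ∈ g.B c
        · have h3 := hε a c x hx hxc
          have : wgt (g.Nbr a) (fun c => chi D K (g.k c x)) c *
            |p c (g.k c x) - p a (g.k a x)| ≤ 1 * ε :=
            mul_le_mul h2.2.2 h3 (abs_nonneg _) (by norm_num)
          have : 0 ≤ (3 / 4 : ℝ) ^ K * E := by positivity
          linarith
        · have : wgt (g.Nbr a) (fun c => chi D K (g.k c x)) c *
            |p c (g.k c x) - p a (g.k a x)| ≤ (3 / 4) ^ K * E :=
            mul_le_mul (h2.2.1.trans (hchis a x hx c hc hxc)) (hEb a x hx c hc) (abs_nonneg _) hρ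
          linarith
      · rw [nsmul_eq_mul]
        have : ((g.Nbr a).card : ℝ) ≤ m := by exact_mod_cast g.card a
        gcongr
    have h5 : |q a (g.k a x)| ≤ m * (ε + (3 / 4) ^ K * E) + m * ((3 / 4) ^ K * E) := by
      rw [abs_le] at *
      constructor <;> linarith [t1.1, t1.2, h1.1, h1.2]
    refine h5.trans ?_
    have : 0 ≤ (3 / 4 : ℝ) ^ K * E := by positivity
    have h6 : (0 : ℝ) ≤ (2 * m ^ 2 + 2 * m + 1) * ((3 / 4 : ℝ) ^ K * E) := by positivity
    nlinarith

end GW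

end

section

namespace GW

/-- local class of functions: sums of polynomials with geometric control, in chart `a` -/
def Geo.ClsAt {d : ℕ} {M ι : Type} (g : Geo d M ι) (om : ℝ) (a : ι) (A : ℝ) (f : M → ℝ) : Prop :=
  ∃ (J : Type) (_ : Countable J) (q : J → (Fin d → ℝ) → ℝ) (N : J → ℕ) (η : J → ℝ),
    (∀ j, ∃ B, PolyRep (N j) 4 B (q j)) ∧ (∀ j, 0 ≤ η j) ∧
    (∀ j, ∀ x ∈ g.B a, |q j (g.k a x)| ≤ η j) ∧
    Summable (fun j => η j * om ^ N j) ∧ ∑' j, η j * om ^ N j ≤ A ∧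
    ∀ x ∈ g.B a, f x = ∑' j, q j (g.k a x)

theorem PolyRep.smul {κ : Type} {N : ℕ} {R B : ℝ} (b : ℝ) {q : (κ → ℝ) → ℝ}
    (h : PolyRep N R B q) : PolyRep N R (|b| * B) (fun x => b * q x) := by
  obtain ⟨s, c, h1, h2, h3⟩ := h
  refine ⟨s, fun w => b * c w, h1, ?_, fun x => ?_⟩
  · refine le_trans (le_of_eq ?_) (mul_le_mul_of_nonneg_left h2 (abs_nonneg b))
    rw [Finset.mul_sum]
    refine Finset.sum_congr rfl fun w _ => ?_
    rw [abs_mul, mul_assoc]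
  · simp only [h3 x, Finset.mul_sum, mul_assoc]

theorem Geo.ClsAt.tsum {d : ℕ} {M ι : Type} {g : Geo d M ι} {om : ℝ} (hom : 1 ≤ om) {a : ι}
    {I : Type} [Countable I] {A : I → ℝ} {f : I → M → ℝ} (e : I → ℝ)
    (h : ∀ i, g.ClsAt om a (A i) (f i)) (hs : Summable (fun i => |e i| * A i)) :
    g.ClsAt om a (∑' i, |e i| * A i) (fun x => ∑' i, e i * f i x) := by
  choose J hJ q N η h1 h0 h2 h3 h4 h5 using h
  have hom0 : 0 ≤ om := by linarith
  have hnn : ∀ p : (Σ i, J i), 0 ≤ |e p.1| * η p.1 p.2 * om ^ N p.1 p.2 := fun p =>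
    mul_nonneg (mul_nonneg (abs_nonneg _) (h0 _ _)) (by positivity)
  have hin : ∀ i, ∑' j, |e i| * η i j * om ^ N i j ≤ |e i| * A i := by
    intro i
    simp only [mul_assoc]
    rw [tsum_mul_left]
    exact mul_le_mul_of_nonneg_left (h4 i) (abs_nonneg _)
  have hS : Summable (fun p : (Σ i, J i) => |e p.1| * η p.1 p.2 * om ^ N p.1 p.2) := by
    rw [summable_sigma_of_nonneg hnn]
    refine ⟨fun i => ?_, ?_⟩
    · simpa only [mul_assoc] using (h3 i).mul_left |e i|
    · exact Summable.of_nonneg_of_le (fun i => tsum_nonneg fun j => hnn ⟨i, j⟩) hin hs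
  have hb : ∀ (p : Σ i, J i) (x : M), x ∈ g.B a →
      |e p.1 * q p.1 p.2 (g.k a x)| ≤ |e p.1| * η p.1 p.2 := by
    intro p x hx
    rw [abs_mul]
    exact mul_le_mul_of_nonneg_left (h2 _ _ x hx) (abs_nonneg _)
  refine ⟨Σ i, J i, inferInstance, fun p y => e p.1 * q p.1 p.2 y, fun p => N p.1 p.2,
    fun p => |e p.1| * η p.1 p.2, ?_, ?_, ?_, hS, ?_, ?_⟩
  · intro p
    obtain ⟨B, hB⟩ := h1 p.1 p.2
    exact ⟨_, hB.smul (e p.1)⟩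
  · intro p; exact mul_nonneg (abs_nonneg _) (h0 _ _)
  · intro p x hx; exact hb p x hx
  · rw [hS.tsum_sigma]
    exact Summable.tsum_le_tsum hin hS.sigma hs
  · intro x hx
    have hs2 : Summable (fun p : (Σ i, J i) => e p.1 * q p.1 p.2 (g.k a x)) := by
      refine Summable.of_abs (Summable.of_nonneg_of_le (fun _ => abs_nonneg _) (fun p => ?_) hS)
      refine (hb p x hx).trans ?_
      exact le_mul_of_one_le_right (mul_nonneg (abs_nonneg _) (h0 _ _)) (one_le_pow₀ hom)
    rw [hs2.tsum_sigma]
    refine tsum_congr fun i => ?_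
    rw [h5 i x hx, ← tsum_mul_left]

theorem approx {d : ℕ} {M ι : Type} [LinearOrder ι] (g : Geo d M ι) :
    ∃ (om C : ℝ), 1 < om ∧ 0 ≤ C ∧ ∀ (p : ι → (Fin d → ℝ) → ℝ) (E ε : ℝ), 0 ≤ E → 0 ≤ ε →
      (∀ a, ∃ N B, PolyRep N 4 B (p a)) →
      (∀ a, ∀ c ∈ g.Nbr a, Rep 4 E (fun y => p c (g.φ a c y) - p a y)) →
      (∀ a b x, x ∈ g.B a → x ∈ g.B b → |p b (g.k b x) - p a (g.k a x)| ≤ ε) →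
      ∀ K0 : ℕ, 1 ≤ K0 → ∃ f : M → ℝ, (∀ a, ∃ A, g.ClsAt om a A f) ∧
        ∀ a x, x ∈ g.B a → |f x - p a (g.k a x)| ≤ g.m * ε + C * (7 / 8) ^ K0 * E := by
  classical
  obtain ⟨β, Q, C, hQ, hC, hstep⟩ := step g
  obtain ⟨Λ, hΛ2, hΛ⟩ : ∃ Λ : ℕ, 2 ≤ Λ ∧ Q * (7 / 6) ≤ (7 / 6 : ℝ) ^ Λ := by
    obtain ⟨n, hn⟩ := pow_unbounded_of_one_lt (Q * (7 / 6)) (show (1 : ℝ) < 7 / 6 by norm_num)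
    exact ⟨max n 2, le_max_right _ _,
      hn.le.trans (pow_le_pow_right₀ (by norm_num) (le_max_left _ _))⟩
  obtain ⟨om, hom1, hom⟩ : ∃ om : ℝ, 1 < om ∧ om ^ (β * Λ) < 15 / 14 := by
    have hc : ContinuousAt (fun w : ℝ => w ^ (β * Λ)) 1 := (continuous_pow _).continuousAt
    have h1 : ∀ᶠ w in nhds (1 : ℝ), w ^ (β * Λ) < 15 / 14 :=
      hc.eventually_lt_const (by norm_num)
    have h2 := (h1.filter_mono nhdsWithin_le_nhds).and
      (self_mem_nhdsWithin : Set.Ioi (1 : ℝ) ∈ nhdsWithin 1 (Set.Ioi 1))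
    obtain ⟨w, hw1, hw2⟩ := h2.exists
    exact ⟨w, hw2, hw1⟩
  refine ⟨om, C + 8 * ((g.m + 1) * C), hom1, by positivity, ?_⟩
  intro p E ε hE hε hpoly hrep hmis K0 hK0
  let K : ℕ → ℕ := fun n => K0 * Λ ^ n
  have hKs : ∀ n, K (n + 1) = Λ * K n := fun n => by simp only [K]; ring
  have hKn : ∀ n, K0 + n ≤ K n := by
    intro n
    induction n with
    | zero => simp [K]
    | succ n ih =>
      rw [hKs]
      have : 2 * K n ≤ Λ * K n := Nat.mul_le_mul_right _ hΛ2
      omega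
  have hK1 : ∀ n, 1 ≤ K n := fun n => by have := hKn n; omega
  let Good : ℕ → (ι → (Fin d → ℝ) → ℝ) → Prop := fun n p =>
    ∀ a, ∀ c ∈ g.Nbr a, Rep 4 ((7 / 6) ^ K n * E) (fun y => p c (g.φ a c y) - p a y)
  have hgood0 : Good 0 p := fun a c hc => (hrep a c hc).mono
    (le_mul_of_one_le_left hE (one_le_pow₀ (by norm_num)))
  have hEn : ∀ n, 0 ≤ (7 / 6 : ℝ) ^ K n * E := fun n => by positivity
  choose q hq1 hq2 hq3 hq4 using fun n p (h : Good n p) => hstep (K n) (hK1 n) _ (hEn n) p h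
  have hnext : ∀ n p (h : Good n p), Good (n + 1) (fun a y => p a y + q n p h a y) := by
    intro n p h a c hc
    refine (hq2 n p h a c hc).mono ?_
    have h1 : (Q * (7 / 6)) ^ K n ≤ ((7 / 6) ^ Λ) ^ K n :=
      pow_le_pow_left₀ (by positivity) hΛ _
    rw [← mul_assoc, ← mul_pow, hKs, pow_mul (7 / 6 : ℝ) Λ (K n)]
    exact mul_le_mul_of_nonneg_right h1 hE
  let P : (n : ℕ) → {p // Good n p} := fun n =>
    Nat.rec (⟨p, hgood0⟩ : {p // Good 0 p}) (fun n r => ⟨fun a y => r.1 a y + q n r.1 r.2 a y, hnext n r.1 r.2⟩) n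
  let qq : ℕ → ι → (Fin d → ℝ) → ℝ := fun n => q n (P n).1 (P n).2
  have hP0 : (P 0).1 = p := rfl
  have hPs : ∀ n a y, (P (n + 1)).1 a y = (P n).1 a y + qq n a y := fun n a y => rfl
  have hPsum : ∀ n a y, (P n).1 a y = p a y + ∑ i ∈ Finset.range n, qq i a y := by
    intro n a y
    induction n with
    | zero => simp [hP0]
    | succ n ih => rw [hPs, ih, Finset.sum_range_succ, add_assoc]
  have hthe : ∀ n, C * (3 / 4) ^ K n * ((7 / 6) ^ K n * E) = C * (7 / 8) ^ K n * E := by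
    intro n
    have : (7 / 8 : ℝ) = 3 / 4 * (7 / 6) := by norm_num
    rw [this, mul_pow]; ring
  have hmisn : ∀ n a b x, x ∈ g.B a → x ∈ g.B b →
      |(P (n + 1)).1 b (g.k b x) - (P (n + 1)).1 a (g.k a x)| ≤ C * (7 / 8) ^ K n * E := by
    intro n a b x ha hb
    rw [← hthe]
    exact hq3 n (P n).1 (P n).2 a b x ha hb
  have hqq0 : ∀ a x, x ∈ g.B a → |qq 0 a (g.k a x)| ≤ g.m * ε + C * (7 / 8) ^ K0 * E := by
    intro a x hx
    have := hq4 0 (P 0).1 (P 0).2 ε hmis a x hx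
    rw [hthe] at this
    simpa [K] using this
  have hqqs : ∀ n a x, x ∈ g.B a →
      |qq (n + 1) a (g.k a x)| ≤ (g.m + 1) * C * (7 / 8) ^ K n * E := by
    intro n a x hx
    have := hq4 (n + 1) (P (n + 1)).1 (P (n + 1)).2 _ (hmisn n) a x hx
    rw [hthe] at this
    refine this.trans ?_
    have h1 : (7 / 8 : ℝ) ^ K (n + 1) ≤ (7 / 8) ^ K n := by
      refine pow_le_pow_of_le_one (by norm_num) (by norm_num) ?_
      rw [hKs]; exact Nat.le_mul_of_pos_left _ (by omega)
    have h2 : C * (7 / 8) ^ K (n + 1) * E ≤ C * (7 / 8) ^ K n * E := by gcongr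
    nlinarith
  have hthn : ∀ n, (7 / 8 : ℝ) ^ K n ≤ (7 / 8) ^ K0 * (7 / 8) ^ n := by
    intro n
    rw [← pow_add]
    exact pow_le_pow_of_le_one (by norm_num) (by norm_num) (hKn n)
  have hsumg : Summable (fun n : ℕ => (g.m + 1) * C * ((7 / 8) ^ K0 * (7 / 8 : ℝ) ^ n) * E) := by
    refine Summable.mul_right _ (Summable.mul_left _ (Summable.mul_left _ ?_))
    exact summable_geometric_of_lt_one (by norm_num) (by norm_num)
  have hqqs' : ∀ n a x, x ∈ g.B a →
      |qq (n + 1) a (g.k a x)| ≤ (g.m + 1) * C * ((7 / 8) ^ K0 * (7 / 8) ^ n) * E := by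
    intro n a x hx
    refine (hqqs n a x hx).trans ?_
    have := hthn n
    gcongr
  have hsumab : ∀ a x, x ∈ g.B a → Summable (fun n => |qq (n + 1) a (g.k a x)|) := fun a x hx =>
    Summable.of_nonneg_of_le (fun _ => abs_nonneg _) (fun n => hqqs' n a x hx) hsumg
  have hsumq : ∀ a x, x ∈ g.B a → Summable (fun n => qq n a (g.k a x)) := fun a x hx =>
    (summable_nat_add_iff 1).1 (hsumab a x hx).of_abs
  choose ac hac hac2 using g.cover
  let F : ι → M → ℝ := fun a x => p a (g.k a x) + ∑' n, qq n a (g.k a x)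
  have hF : ∀ a x, x ∈ g.B a →
      Filter.Tendsto (fun n => (P n).1 a (g.k a x)) Filter.atTop (nhds (F a x)) := by
    intro a x hx
    simp only [hPsum]
    exact (hsumq a x hx).hasSum.tendsto_sum_nat.const_add _
  have hFF : ∀ a b x, x ∈ g.B a → x ∈ g.B b → F b x = F a x := by
    intro a b x ha hb
    have h1 := (((hF b x hb).sub (hF a x ha)).comp (Filter.tendsto_add_atTop_nat 1)).abs
    have h3 : Filter.Tendsto (fun n : ℕ => C * ((7 / 8) ^ K0 * (7 / 8 : ℝ) ^ n) * E)
        Filter.atTop (nhds 0) := by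
      have := ((tendsto_pow_atTop_nhds_zero_of_lt_one (show (0 : ℝ) ≤ 7 / 8 by norm_num)
        (by norm_num)).const_mul ((7 / 8 : ℝ) ^ K0)).const_mul C |>.mul_const E
      simpa using this
    have h4 := le_of_tendsto_of_tendsto' h1 h3 (fun n => by
      refine (hmisn n a b x ha hb).trans ?_
      have := hthn n
      gcongr)
    have h5 : |F b x - F a x| = 0 := le_antisymm h4 (abs_nonneg _)
    exact sub_eq_zero.1 (abs_eq_zero.1 h5)
  refine ⟨fun x => F (ac x) x, fun a => ?_, fun a x hx => ?_⟩
  · obtain ⟨N0, B0, hB0⟩ := hpoly a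
    let q' : ℕ → (Fin d → ℝ) → ℝ := fun n => Nat.casesOn n (p a) (fun n => qq n a)
    let N' : ℕ → ℕ := fun n => Nat.casesOn n N0 (fun n => β * K n)
    let η' : ℕ → ℝ := fun n => Nat.casesOn n B0 (fun n => Nat.casesOn n
      (g.m * ε + C * (7 / 8) ^ K0 * E) (fun n => (g.m + 1) * C * (7 / 8) ^ K n * E))
    have hη : ∀ n, 0 ≤ η' n := by
      intro n
      rcases n with _ | _ | n
      · exact (hB0.rep (by norm_num)).nonneg (by norm_num)
      · change 0 ≤ g.m * ε + C * (7 / 8) ^ K0 * E; positivity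
      · change 0 ≤ (g.m + 1) * C * (7 / 8) ^ K n * E; positivity
    refine ⟨_, ℕ, inferInstance, q', N', η', ?_, hη, ?_, ?_, le_rfl, ?_⟩
    · intro n
      rcases n with _ | n
      · exact ⟨B0, hB0⟩
      · exact hq1 n (P n).1 (P n).2 a
    · intro n x hx
      rcases n with _ | _ | n
      · exact (hB0.rep (by norm_num)).bound fun j =>
          (abs_le_of_sq (g.lt hx) j).trans (by norm_num)
      · exact hqq0 a x hx
      · exact hqqs n a x hx
    · refine (summable_nat_add_iff 2).1 ?_
      have hlast : Summable (fun n : ℕ => (g.m + 1) * C * (15 / 16 : ℝ) ^ n * E) := by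
        refine Summable.mul_right _ (Summable.mul_left _ ?_)
        exact summable_geometric_of_lt_one (by norm_num) (by norm_num)
      refine Summable.of_nonneg_of_le (fun n => ?_) (fun n => ?_) hlast
      · exact mul_nonneg (hη (n + 2)) (by positivity)
      · change (g.m + 1) * C * (7 / 8) ^ K n * E * om ^ (β * K (n + 1)) ≤ _
        have h1 : (7 / 8) ^ K n * om ^ (β * K (n + 1)) ≤ (15 / 16 : ℝ) ^ n := by
          rw [hKs, ← mul_assoc, pow_mul om, ← mul_pow]
          calc (7 / 8 * om ^ (β * Λ)) ^ K n ≤ (15 / 16) ^ K n :=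
                pow_le_pow_left₀ (by positivity) (by linarith) _
            _ ≤ _ := pow_le_pow_of_le_one (by norm_num) (by norm_num) (by have := hKn n; omega)
        calc (g.m + 1) * C * (7 / 8) ^ K n * E * om ^ (β * K (n + 1))
            = (g.m + 1) * C * ((7 / 8) ^ K n * om ^ (β * K (n + 1))) * E := by ring
          _ ≤ _ := by gcongr
    · intro x hx
      have hsq : Summable (fun n => q' n (g.k a x)) := (summable_nat_add_iff 1).1 (hsumq a x hx)
      rw [hsq.tsum_eq_zero_add]
      exact hFF a (ac x) x hx (hac x)
  · have e1 : F (ac x) x = F a x := hFF a (ac x) x hx (hac x)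
    beta_reduce
    rw [e1]
    change |p a (g.k a x) + ∑' n, qq n a (g.k a x) - p a (g.k a x)| ≤ _
    rw [add_sub_cancel_left, (hsumq a x hx).tsum_eq_zero_add]
    have h1 : |∑' n, qq (n + 1) a (g.k a x)| ≤ (g.m + 1) * C * ((7 / 8) ^ K0 * 8) * E := by
      refine (abs_tsum_le (hsumab a x hx)).trans ?_
      refine ((hsumab a x hx).tsum_le_tsum (fun n => hqqs' n a x hx) hsumg).trans (le_of_eq ?_)
      rw [tsum_mul_right, tsum_mul_left, tsum_mul_left,
        tsum_geometric_of_lt_one (by norm_num) (by norm_num)]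
      norm_num
    refine (abs_add_le _ _).trans ((add_le_add (hqq0 a x hx) h1).trans (le_of_eq ?_))
    ring

end GW

end

section

namespace GW

section
variable {κ : Type} [Fintype κ]

theorem mon_ofFn {n : ℕ} (w : Fin n → κ) (x : κ → ℝ) :
    mon (List.ofFn w) x = ∏ i, x (w i) := by
  simp [mon, List.map_ofFn, List.prod_ofFn]

/-- monomials as continuous multilinear maps -/
noncomputable def monM (n : ℕ) (w : Fin n → κ) :
    ContinuousMultilinearMap ℝ (fun _ : Fin n => κ → ℝ) ℝ :=
  (ContinuousMultilinearMap.mkPiAlgebra ℝ (Fin n) ℝ).compContinuousLinearMap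
    (fun i => ContinuousLinearMap.proj (w i))

theorem monM_apply (n : ℕ) (w : Fin n → κ) (v : Fin n → κ → ℝ) :
    monM n w v = ∏ i, v i (w i) := by
  simp [monM]

theorem monM_norm (n : ℕ) (w : Fin n → κ) : ‖monM n w‖ ≤ 1 := by
  refine ContinuousMultilinearMap.opNorm_le_bound (by norm_num) fun v => ?_
  rw [monM_apply, norm_prod, one_mul]
  exact Finset.prod_le_prod (fun _ _ => norm_nonneg _) fun i _ => norm_le_pi_norm (v i) (w i)

theorem Rep.analyticAt {R B : ℝ} (hR : 0 < R) {f : (κ → ℝ) → ℝ} (h : Rep R B f) :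
    AnalyticAt ℝ f 0 := by
  classical
  obtain ⟨c, h1, -, h3⟩ := h.canon hR.le
  let e := (List.equivSigmaTuple (α := κ)).symm
  have he : ∀ p : (Σ n, Fin n → κ), e p = List.ofFn p.2 := fun p => rfl
  have h1' : Summable (fun p : (Σ n, Fin n → κ) => |c (List.ofFn p.2)| * R ^ p.1) := by
    have := (e.summable_iff (f := fun w : List κ => |c w| * R ^ w.length)).2 h1
    refine this.congr fun p => ?_
    simp [he]
  let p : FormalMultilinearSeries ℝ (κ → ℝ) ℝ := fun n =>
    ∑ w : Fin n → κ, c (List.ofFn w) • monM n w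
  have hpn : ∀ n, ‖p n‖ ≤ ∑ w : Fin n → κ, |c (List.ofFn w)| := by
    intro n
    refine (norm_sum_le _ _).trans (Finset.sum_le_sum fun w _ => ?_)
    rw [norm_smul, Real.norm_eq_abs]
    exact mul_le_of_le_one_right (abs_nonneg _) (monM_norm n w)
  have hsum : Summable (fun n => ‖p n‖ * R ^ n) := by
    refine Summable.of_nonneg_of_le (fun n => by positivity) (fun n => ?_) h1'.sigma
    rw [tsum_fintype]
    show ‖p n‖ * R ^ n ≤ ∑ b : Fin n → κ, |c (List.ofFn b)| * R ^ n
    rw [← Finset.sum_mul]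
    exact mul_le_mul_of_nonneg_right (hpn n) (by positivity)
  refine HasFPowerSeriesAt.analyticAt (p := p) ⟨ENNReal.ofReal R, ?_, by simpa using hR, ?_⟩
  · have := p.le_radius_of_summable (r := R.toNNReal) (by simpa [hR.le] using hsum)
    exact this
  · intro y hy
    have hy' : ∀ i, |y i| ≤ R := by
      intro i
      rw [Metric.mem_eball, edist_zero_right] at hy
      have h5 : ‖y‖ < R := by
        rw [← ofReal_norm] at hy
        exact (ENNReal.ofReal_lt_ofReal_iff hR).1 hy
      exact (norm_le_pi_norm y i).trans h5.le
    rw [zero_add, h3 y hy', ← e.tsum_eq]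
    have hs : Summable (fun q : (Σ n, Fin n → κ) => c (e q) * mon (e q) y) := by
      have := (e.summable_iff (f := fun w : List κ => c w * mon w y)).2
        (summable_mon (w := fun w => w) h1 hy').of_abs
      exact this
    have h6 := hs.hasSum.sigma (fun n => hasSum_fintype _)
    refine h6.congr_fun ?_ |> fun h => h
    intro n
    simp only [p, ContinuousMultilinearMap.sum_apply, ContinuousMultilinearMap.smul_apply,
      monM_apply, smul_eq_mul]
    exact Finset.sum_congr rfl fun w _ => by simp only [he, mon_ofFn]

theorem fps_rep {f : (κ → ℝ) → ℝ} {p : FormalMultilinearSeries ℝ (κ → ℝ) ℝ} {u : κ → ℝ}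
    (h : HasFPowerSeriesAt f p u) (k : ℕ) :
    ∃ R0 B : ℝ, 0 < R0 ∧ 0 ≤ B ∧ ∀ R, 0 ≤ R → R ≤ R0 →
      Rep R (B * R ^ k) (fun x => f (u + x) - p.partialSum k x) := by
  classical
  obtain ⟨r, hr⟩ := h
  obtain ⟨ρ, hρ0, hρ⟩ : ∃ ρ : NNReal, 0 < ρ ∧ (ρ : ENNReal) < r := by
    obtain ⟨ρ, h1, h2⟩ := ENNReal.lt_iff_exists_nnreal_btwn.1 hr.r_pos
    exact ⟨ρ, by exact_mod_cast h1, h2⟩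
  have hs := p.summable_norm_mul_pow (lt_of_lt_of_le hρ hr.r_le)
  set D : ℝ := Fintype.card κ + 1 with hD
  have hD1 : 1 ≤ D := by rw [hD]; linarith [(Nat.cast_nonneg (Fintype.card κ) : (0 : ℝ) ≤ _)]
  have hρ0' : (0 : ℝ) < ρ := by exact_mod_cast hρ0
  have hs1 : Summable (fun l => ‖p (k + l)‖ * D ^ (k + l) * (ρ / D) ^ l) := by
    have h2 := ((summable_nat_add_iff k).2 hs).mul_left ((D / ρ) ^ k)
    refine h2.congr fun l => ?_
    rw [add_comm l k]
    rw [div_pow, div_pow, pow_add, pow_add]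
    field_simp
  refine ⟨ρ / D, ∑' l, ‖p (k + l)‖ * D ^ (k + l) * (ρ / D) ^ l, by positivity,
    tsum_nonneg fun l => by positivity, fun R hR0 hR => ?_⟩
  have hle : ∀ l, ‖p (k + l)‖ * D ^ (k + l) * R ^ (k + l) ≤
      ‖p (k + l)‖ * D ^ (k + l) * (ρ / D) ^ l * R ^ k := by
    intro l
    rw [pow_add R, mul_comm (R ^ k), ← mul_assoc]
    gcongr
  have hs2 : Summable (fun l => ‖p (k + l)‖ * D ^ (k + l) * R ^ (k + l)) :=
    Summable.of_nonneg_of_le (fun l => by positivity) hle (hs1.mul_right _)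
  have key : Rep R (∑' l, ‖p (k + l)‖ * D ^ (k + l) * R ^ (k + l))
      (fun x => f (u + x) - p.partialSum k x) := by
    refine Rep.tsum hR0 (f := fun l x => p (k + l) (fun _ => x)) (fun l => ?_) hs2 ?_
    · have h5 : ∀ x : κ → ℝ, p (k + l) (fun _ => x) = ∑ w : Fin (k + l) → κ,
          (p (k + l) fun i => Pi.single (w i) 1) * mon (List.ofFn w) x := by
        intro x
        have e1 : (fun _ : Fin (k + l) => x) = fun _ => ∑ j : κ, (x j) • (Pi.single j 1) := by
          funext i
          ext j
          simp [Finset.sum_apply, Pi.single_apply]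
        rw [e1, ContinuousMultilinearMap.map_sum]
        refine Finset.sum_congr rfl fun w _ => ?_
        rw [ContinuousMultilinearMap.map_smul_univ, mon_ofFn, smul_eq_mul, mul_comm]
      refine ((Rep.sum hR0 Finset.univ (fun w _ => Rep.monomial
        (p (k + l) fun i => Pi.single (w i) 1) (List.ofFn w))).mono ?_).congr fun x _ => h5 x
      refine (Finset.sum_le_card_nsmul _ _ (‖p (k + l)‖ * R ^ (k + l)) fun w _ => ?_).trans ?_
      · rw [List.length_ofFn]
        refine mul_le_mul_of_nonneg_right ?_ (by positivity)
        refine ((p (k + l)).le_opNorm _).trans (mul_le_of_le_one_right (norm_nonneg _) ?_)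
        refine Finset.prod_le_one (fun _ _ => norm_nonneg _) fun i _ => ?_
        refine (pi_norm_le_iff_of_nonneg (by norm_num)).2 fun j => ?_
        by_cases hj : j = w i
        · subst hj; simp
        · simp [Pi.single_apply, hj]
      · rw [nsmul_eq_mul]
        simp only [Finset.card_univ, Fintype.card_fun, Fintype.card_fin]
        have : ((Fintype.card κ ^ (k + l) : ℕ) : ℝ) ≤ D ^ (k + l) := by
          push_cast
          exact pow_le_pow_left₀ (by positivity) (by rw [hD]; linarith) _
        calc ((Fintype.card κ ^ (k + l) : ℕ) : ℝ) * (‖p (k + l)‖ * R ^ (k + l))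
            ≤ D ^ (k + l) * (‖p (k + l)‖ * R ^ (k + l)) := by gcongr
          _ = _ := by ring
    · intro x hx
      have hx' : x ∈ Metric.eball (0 : κ → ℝ) r := by
        rw [Metric.mem_eball, edist_zero_right]
        have : ‖x‖ ≤ ρ := by
          refine (pi_norm_le_iff_of_nonneg hρ0'.le).2 fun i => (hx i).trans (hR.trans ?_)
          exact div_le_self hρ0'.le hD1
        refine lt_of_le_of_lt ?_ hρ
        rw [← ofReal_norm]
        exact ENNReal.ofReal_le_of_le_toReal (by simpa using this)
      have h6 := hr.hasSum hx'
      have h7 := (hasSum_nat_add_iff' k).2 h6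
      rw [FormalMultilinearSeries.partialSum, ← h7.tsum_eq]
      refine tsum_congr fun l => ?_
      rw [add_comm]
  refine key.mono ?_
  rw [← tsum_mul_right]
  exact hs2.tsum_le_tsum hle (hs1.mul_right _)

end
end GW

end

section

namespace GW

noncomputable section Bern
open MeasureTheory UnitAddTorus

local instance : MeasureSpace UnitAddCircle := ⟨AddCircle.haarAddCircle⟩

local instance : Measure.IsAddHaarMeasure (volume : Measure UnitAddCircle) :=
  inferInstanceAs (Measure.IsAddHaarMeasure AddCircle.haarAddCircle)

local instance : IsProbabilityMeasure (volume : Measure UnitAddCircle) :=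
  inferInstanceAs (IsProbabilityMeasure AddCircle.haarAddCircle)

variable {κ : Type} [Fintype κ]

theorem trig_coeff [DecidableEq κ] (s : Finset (κ → ℤ)) (c : (κ → ℤ) → ℂ) (l : κ → ℤ) (hl : l ∈ s) :
    ‖c l‖ ≤ ‖∑ k ∈ s, c k • (mFourier k : C(UnitAddTorus κ, ℂ))‖ := by
  have h1 := (orthonormal_mFourier (d := κ)).inner_right_sum c hl
  have h2 : (ContinuousMap.toLp (E := ℂ) 2 (volume : Measure (UnitAddTorus κ)) ℂ)
      (∑ k ∈ s, c k • (mFourier k : C(UnitAddTorus κ, ℂ))) =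
      ∑ k ∈ s, c k • mFourierLp 2 k := by
    rw [map_sum]
    simp only [map_smul]
  rw [← h1, ← h2]
  refine (norm_inner_le_norm _ _).trans ?_
  rw [(orthonormal_mFourier (d := κ)).1 l, one_mul]
  refine (ContinuousLinearMap.le_opNorm _ _).trans ?_
  refine mul_le_of_le_one_left (norm_nonneg _) ?_
  refine (ContinuousMap.toLp_norm_le (volume : Measure (UnitAddTorus κ)) (p := 2) (E := ℂ) (𝕜 := ℂ)).trans ?_
  have : measureUnivNNReal (volume : Measure (UnitAddTorus κ)) = 1 := by
    simp [measureUnivNNReal]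
  rw [this]
  simp

/-- the box of frequencies -/
noncomputable def fbox (κ : Type) [Fintype κ] (N : ℕ) : Finset (κ → ℤ) := by
  classical exact Fintype.piFinset fun _ => Finset.Icc (-(N : ℤ)) N

theorem mem_fbox {N : ℕ} {l : κ → ℤ} : l ∈ fbox κ N ↔ ∀ i, |l i| ≤ N := by
  simp [fbox, abs_le]

theorem card_fbox (N : ℕ) : (fbox κ N).card = (2 * N + 1) ^ (Fintype.card κ) := by
  classical
  have : ((N : ℤ) + 1 + N).toNat = 2 * N + 1 := by omega
  simp [fbox, this]

/-- trigonometric polynomials of degree at most `N` -/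
noncomputable def trigs (κ : Type) [Fintype κ] (N : ℕ) : Submodule ℂ C(UnitAddTorus κ, ℂ) :=
  Submodule.span ℂ (mFourier '' (fbox κ N : Set (κ → ℤ)))

theorem trigs_mono {N N' : ℕ} (h : N ≤ N') : trigs κ N ≤ trigs κ N' := by
  refine Submodule.span_mono (Set.image_mono ?_)
  intro l hl
  simp only [Finset.mem_coe, mem_fbox] at hl ⊢
  intro i
  exact (hl i).trans (by exact_mod_cast h)

theorem trigs_mul {N N' : ℕ} {F F' : C(UnitAddTorus κ, ℂ)} (h : F ∈ trigs κ N)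
    (h' : F' ∈ trigs κ N') : F * F' ∈ trigs κ (N + N') := by
  have h1 := Submodule.mul_mem_mul h h'
  rw [trigs, trigs, Submodule.span_mul_span] at h1
  refine Submodule.span_mono ?_ h1
  rintro _ ⟨_, ⟨l, hl, rfl⟩, _, ⟨l', hl', rfl⟩, rfl⟩
  refine ⟨l + l', ?_, ?_⟩
  · simp only [Finset.mem_coe, mem_fbox] at hl hl' ⊢
    intro i
    push_cast
    exact (abs_add_le _ _).trans (add_le_add (hl i) (hl' i))
  · ext x; simp [mFourier_add]

theorem one_mem_trigs (N : ℕ) : (1 : C(UnitAddTorus κ, ℂ)) ∈ trigs κ N := by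
  refine Submodule.subset_span ⟨0, ?_, mFourier_zero⟩
  simp [mem_fbox]

/-- `y + t sin` -/
noncomputable def sinC (y t : ℝ) (i : κ) : C(UnitAddTorus κ, ℂ) :=
  (y : ℂ) • 1 + ((t : ℂ) / (2 * Complex.I)) •
    (⟨fun x => fourier 1 (x i), by fun_prop⟩ - ⟨fun x => fourier (-1) (x i), by fun_prop⟩)

theorem sinC_mem [DecidableEq κ] (y t : ℝ) (i : κ) : sinC y t i ∈ trigs κ 1 := by
  refine Submodule.add_mem _ (Submodule.smul_mem _ _ (one_mem_trigs 1))
    (Submodule.smul_mem _ _ (Submodule.sub_mem _ ?_ ?_))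
  · refine Submodule.subset_span ⟨Pi.single i 1, ?_, ?_⟩
    · simp only [Finset.mem_coe, mem_fbox]
      intro j
      by_cases h : j = i
      · subst h; simp
      · simp [h]
    · ext x; exact mFourier_single x i
  · refine Submodule.subset_span ⟨-Pi.single i 1, ?_, ?_⟩
    · simp only [Finset.mem_coe, mem_fbox]
      intro j
      by_cases h : j = i
      · subst h; simp
      · simp [h]
    · ext x
      rw [mFourier_neg, mFourier_single]
      exact fourier_neg.symm

theorem sinC_apply (y t : ℝ) (i : κ) (θ : κ → ℝ) :
    sinC y t i (fun j => ((θ j / (2 * Real.pi) : ℝ) : UnitAddCircle)) =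
      ((y + t * Real.sin (θ i) : ℝ) : ℂ) := by
  have hpi : (Real.pi : ℂ) ≠ 0 := by exact_mod_cast Real.pi_ne_zero
  simp only [sinC, ContinuousMap.add_apply, ContinuousMap.smul_apply, ContinuousMap.one_apply,
    ContinuousMap.sub_apply, ContinuousMap.coe_mk, fourier_coe_apply]
  have e1 : 2 * (Real.pi : ℂ) * Complex.I * ((1 : ℤ) : ℂ) * ((θ i / (2 * Real.pi) : ℝ) : ℂ) / ((1 : ℝ) : ℂ)
      = θ i * Complex.I := by
    push_cast; field_simp
  have e2 : 2 * (Real.pi : ℂ) * Complex.I * ((-1 : ℤ) : ℂ) * ((θ i / (2 * Real.pi) : ℝ) : ℂ) / ((1 : ℝ) : ℂ)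
      = -θ i * Complex.I := by
    push_cast; field_simp
  rw [e1, e2]
  push_cast
  rw [Complex.sin]
  simp only [smul_eq_mul]
  have := Complex.I_ne_zero
  have h2 : (Complex.exp (-(θ i : ℂ) * Complex.I) - Complex.exp (θ i * Complex.I)) * Complex.I / 2 =
    (Complex.exp (θ i * Complex.I) - Complex.exp (-(θ i : ℂ) * Complex.I)) / (2 * Complex.I) := by
    field_simp
    rw [Complex.I_sq]; ring
  rw [h2]; ring

theorem exists_angle (x : UnitAddTorus κ) :
    ∃ θ : κ → ℝ, x = fun j => ((θ j / (2 * Real.pi) : ℝ) : UnitAddCircle) := by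
  have : ∀ j, ∃ θ : ℝ, x j = ((θ / (2 * Real.pi) : ℝ) : UnitAddCircle) := by
    intro j
    obtain ⟨u, hu⟩ := QuotientAddGroup.mk_surjective (x j)
    refine ⟨u * (2 * Real.pi), ?_⟩
    rw [mul_div_cancel_right₀ _ (by positivity)]
    exact hu.symm
  choose θ h using this
  exact ⟨θ, funext h⟩

/-- the pulled back polynomial -/
theorem poly_trig [DecidableEq κ] {N : ℕ} {B : ℝ} {q : (κ → ℝ) → ℝ} (h : PolyRep N 4 B q) (y : κ → ℝ) (t : ℝ) :
    ∃ F ∈ trigs κ N, ∀ θ : κ → ℝ,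
      F (fun j => ((θ j / (2 * Real.pi) : ℝ) : UnitAddCircle)) =
        ((q (fun i => y i + t * Real.sin (θ i)) : ℝ) : ℂ) := by
  have hw : ∀ w : List κ, ∃ F ∈ trigs κ w.length, ∀ θ : κ → ℝ,
      F (fun j => ((θ j / (2 * Real.pi) : ℝ) : UnitAddCircle)) =
        ((mon w (fun i => y i + t * Real.sin (θ i)) : ℝ) : ℂ) := by
    intro w
    induction w with
    | nil => exact ⟨1, one_mem_trigs _, fun θ => by simp [mon_nil]⟩
    | cons i w ih =>
      obtain ⟨F, h1, h2⟩ := ih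
      refine ⟨sinC (y i) t i * F, ?_, fun θ => ?_⟩
      · have := trigs_mul (sinC_mem (y i) t i) h1
        rwa [add_comm] at this
      · rw [ContinuousMap.mul_apply, sinC_apply, h2, mon_cons]
        push_cast; rfl
  choose W hW1 hW2 using hw
  obtain ⟨s, c, h1, -, h3⟩ := h
  refine ⟨∑ w ∈ s, (c w : ℂ) • W w, Submodule.sum_mem _ fun w hw =>
    Submodule.smul_mem _ _ (trigs_mono (h1 w hw) (hW1 w)), fun θ => ?_⟩
  rw [h3, ContinuousMap.sum_apply]
  simp only [ContinuousMap.smul_apply, hW2, smul_eq_mul]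
  push_cast; rfl

theorem rep_exp_aux (ε : ℕ → ℝ) (hε : ∀ n, |ε n| ≤ 1) {ℓ : ℝ} (hl : 0 ≤ ℓ) (g : ℝ → ℝ)
    (hg : ∀ x, HasSum (fun n => ε n * x ^ n / n.factorial) (g x)) {R : ℝ} (hR : 0 ≤ R)
    {Λ : (κ → ℝ) → ℝ} (hΛ : Rep R ℓ Λ) : Rep R (Real.exp ℓ) (fun x => g (Λ x)) := by
  have hs : Summable (fun n : ℕ => ℓ ^ n / n.factorial) := Real.summable_pow_div_factorial ℓ
  have := Rep.tsum (A := ℕ) hR (B := fun n => ℓ ^ n / n.factorial)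
    (f := fun n x => (ε n / n.factorial) * Λ x ^ n) (fun n => ?_) hs
    (g := fun x => g (Λ x)) (fun x _ => ?_)
  · rwa [Real.exp_eq_exp_ℝ, NormedSpace.exp_eq_tsum_div]
  · refine ((hΛ.pow hR n).smul hR _).mono ?_
    rw [abs_div, Nat.abs_cast, div_mul_eq_mul_div]
    gcongr
    exact mul_le_of_le_one_left (by positivity) (hε n)
  · rw [← (hg (Λ x)).tsum_eq]
    exact tsum_congr fun n => by ring

theorem rep_cos {ℓ R : ℝ} (hl : 0 ≤ ℓ) (hR : 0 ≤ R) {Λ : (κ → ℝ) → ℝ} (hΛ : Rep R ℓ Λ) :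
    Rep R (Real.exp ℓ) (fun x => Real.cos (Λ x)) := by
  refine rep_exp_aux (fun n => (Complex.I ^ n).re) (fun n => ?_) hl Real.cos (fun x => ?_) hR hΛ
  · exact (Complex.abs_re_le_norm _).trans (by simp)
  · have h := Complex.hasSum_re (NormedSpace.expSeries_div_hasSum_exp (𝔸 := ℂ) (x * Complex.I))
    rw [← Complex.exp_eq_exp_ℂ, Complex.exp_ofReal_mul_I_re] at h
    refine h.congr_fun fun n => ?_
    have : ((x : ℂ) * Complex.I) ^ n / n.factorial = ((x ^ n / n.factorial : ℝ) : ℂ) * Complex.I ^ n := by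
      push_cast; ring
    rw [this, Complex.re_ofReal_mul]; ring

theorem rep_sin {ℓ R : ℝ} (hl : 0 ≤ ℓ) (hR : 0 ≤ R) {Λ : (κ → ℝ) → ℝ} (hΛ : Rep R ℓ Λ) :
    Rep R (Real.exp ℓ) (fun x => Real.sin (Λ x)) := by
  refine rep_exp_aux (fun n => (Complex.I ^ n).im) (fun n => ?_) hl Real.sin (fun x => ?_) hR hΛ
  · exact (Complex.abs_im_le_norm _).trans (by simp)
  · have h := Complex.hasSum_im (NormedSpace.expSeries_div_hasSum_exp (𝔸 := ℂ) (x * Complex.I))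
    rw [← Complex.exp_eq_exp_ℂ, Complex.exp_ofReal_mul_I_im] at h
    refine h.congr_fun fun n => ?_
    have : ((x : ℂ) * Complex.I) ^ n / n.factorial = ((x ^ n / n.factorial : ℝ) : ℂ) * Complex.I ^ n := by
      push_cast; ring
    rw [this, Complex.im_ofReal_mul]; ring

theorem mFourier_angle (l : κ → ℤ) (θ : κ → ℝ) :
    mFourier l (fun j => ((θ j / (2 * Real.pi) : ℝ) : UnitAddCircle)) =
      Complex.exp (((∑ j, (l j : ℝ) * θ j : ℝ) : ℂ) * Complex.I) := by
  have hpi : (Real.pi : ℂ) ≠ 0 := by exact_mod_cast Real.pi_ne_zero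
  simp only [mFourier, ContinuousMap.coe_mk, fourier_coe_apply]
  rw [← Complex.exp_sum]
  congr 1
  push_cast
  rw [Finset.sum_mul]
  refine Finset.sum_congr rfl fun j _ => ?_
  field_simp

theorem bern_one [DecidableEq κ] {N : ℕ} {B : ℝ} {q : (κ → ℝ) → ℝ} (h : PolyRep N 4 B q) (y : κ → ℝ) (t η : ℝ)
    (hη : 0 ≤ η) (hq : ∀ θ : κ → ℝ, |q (fun i => y i + t * Real.sin (θ i))| ≤ η) {R : ℝ} (hR : 0 ≤ R) :
    Rep R ((2 * N + 1) ^ (Fintype.card κ) * (2 * η * Real.exp (Fintype.card κ * N * R)))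
      (fun θ => q (fun i => y i + t * Real.sin (θ i))) := by
  obtain ⟨F, hF, hFq⟩ := poly_trig h y t
  have hFn : ‖F‖ ≤ η := by
    rw [ContinuousMap.norm_le _ hη]
    intro x
    obtain ⟨θ, rfl⟩ := exists_angle x
    rw [hFq, Complex.norm_real]
    exact hq θ
  obtain ⟨c0, hc0⟩ := (Submodule.mem_span_image_finset_iff_exists_fun ℂ).1 hF
  let c : (κ → ℤ) → ℂ := fun l => if hl : l ∈ fbox κ N then c0 ⟨l, hl⟩ else 0
  have hc : ∑ l ∈ fbox κ N, c l • (mFourier l : C(UnitAddTorus κ, ℂ)) = F := by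
    rw [← hc0, ← Finset.sum_coe_sort]
    refine Finset.sum_congr rfl fun l _ => ?_
    simp [c]
  have hcl : ∀ l ∈ fbox κ N, ‖c l‖ ≤ η := fun l hl =>
    (trig_coeff _ c l hl).trans (by rw [hc]; exact hFn)
  have hval : ∀ θ : κ → ℝ, q (fun i => y i + t * Real.sin (θ i)) = ∑ l ∈ fbox κ N,
      ((c l).re * Real.cos (∑ j, (l j : ℝ) * θ j) - (c l).im * Real.sin (∑ j, (l j : ℝ) * θ j)) := by
    intro θ
    have h1 := hFq θ
    rw [← hc, ContinuousMap.sum_apply] at h1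
    have h2 := congrArg Complex.re h1
    rw [Complex.ofReal_re, Complex.re_sum] at h2
    rw [← h2]
    refine Finset.sum_congr rfl fun l _ => ?_
    rw [ContinuousMap.smul_apply, mFourier_angle, smul_eq_mul, Complex.mul_re,
      Complex.exp_ofReal_mul_I_re, Complex.exp_ofReal_mul_I_im]
  have hrep := Rep.sum hR (fbox κ N) (B := fun _ => 2 * η * Real.exp (Fintype.card κ * N * R))
    (f := fun l θ => (c l).re * Real.cos (∑ j, (l j : ℝ) * θ j) - (c l).im * Real.sin (∑ j, (l j : ℝ) * θ j))
    (fun l hl => ?_)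
  · rw [Finset.sum_const, card_fbox, nsmul_eq_mul] at hrep
    push_cast at hrep
    exact hrep.congr fun θ _ => hval θ
  · have hL : Rep R (Fintype.card κ * N * R) (fun θ : κ → ℝ => ∑ j, (l j : ℝ) * θ j) := by
      have := Rep.sum hR (Finset.univ : Finset κ) (B := fun _ => (N : ℝ) * R)
        (f := fun j θ => (l j : ℝ) * θ j) (fun j _ => ?_)
      · refine this.mono (le_of_eq ?_)
        simp [mul_assoc]
      · refine ((Rep.coord j).smul hR _).mono ?_
        refine mul_le_mul_of_nonneg_right ?_ hR
        have := mem_fbox.1 hl j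
        exact_mod_cast this
    have h0 : (0 : ℝ) ≤ Fintype.card κ * N * R := by positivity
    refine (((rep_cos h0 hR hL).smul hR _).sub hR ((rep_sin h0 hR hL).smul hR _)).mono ?_
    have e1 := (Complex.abs_re_le_norm (c l)).trans (hcl l hl)
    have e2 := (Complex.abs_im_le_norm (c l)).trans (hcl l hl)
    have e3 := Real.exp_pos (Fintype.card κ * N * R)
    nlinarith

theorem bern [DecidableEq κ] {om : ℝ} (hom : 1 < om) : ∃ R C : ℝ, 0 < R ∧ 0 ≤ C ∧
    ∀ (N : ℕ) (B : ℝ) (q : (κ → ℝ) → ℝ), PolyRep N 4 B q → ∀ (y : κ → ℝ) (t η : ℝ), 0 ≤ η →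
    (∀ θ : κ → ℝ, |q (fun i => y i + t * Real.sin (θ i))| ≤ η) →
    Rep R (C * (η * om ^ N)) (fun θ => q (fun i => y i + t * Real.sin (θ i))) := by
  set m := Fintype.card κ
  set s := Real.sqrt om with hs
  have hs1 : 1 < s := by rw [hs]; exact Real.lt_sqrt_of_sq_lt (by simpa using hom)
  have hss : s * s = om := Real.mul_self_sqrt (by linarith)
  have h1 : ∃ C, ∀ N : ℕ, (N : ℝ) ^ m * (s⁻¹) ^ N ≤ C := by
    have := (summable_pow_mul_geometric_of_norm_lt_one m (r := s⁻¹) (by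
      rw [norm_inv, Real.norm_eq_abs, abs_of_pos (by linarith)]
      exact inv_lt_one_of_one_lt₀ hs1)).tendsto_atTop_zero
    obtain ⟨C, hC⟩ := this.bddAbove_range
    exact ⟨C, fun N => hC ⟨N, rfl⟩⟩
  obtain ⟨C, hC⟩ := h1
  refine ⟨Real.log s / (m + 1), 2 * (3 ^ m * max C 1), div_pos (Real.log_pos hs1) (by positivity),
    by positivity, ?_⟩
  intro N B q hq y t η hη hb
  have hR : 0 ≤ Real.log s / (m + 1) := (div_pos (Real.log_pos hs1) (by positivity)).le
  refine (bern_one hq y t η hη hb hR).mono ?_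
  have e1 : Real.exp (m * N * (Real.log s / (m + 1))) ≤ s ^ N := by
    rw [← Real.exp_log (show 0 < s by linarith), ← Real.exp_nat_mul, Real.exp_le_exp, Real.exp_log (by linarith)]
    rw [mul_div_assoc', div_le_iff₀ (by positivity)]
    have : 0 ≤ N * Real.log s := mul_nonneg (by positivity) (Real.log_pos hs1).le
    nlinarith
  have e2 : (2 * (N : ℝ) + 1) ^ m ≤ 3 ^ m * max C 1 * s ^ N := by
    rcases Nat.eq_zero_or_pos N with rfl | hN
    · simp
      have : (1 : ℝ) ≤ 3 ^ m := one_le_pow₀ (by norm_num)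
      nlinarith [le_max_right C 1]
    · have hN' : (1 : ℝ) ≤ N := by exact_mod_cast hN
      calc (2 * (N : ℝ) + 1) ^ m ≤ (3 * N) ^ m := by gcongr; linarith
        _ = 3 ^ m * (((N : ℝ) ^ m * (s⁻¹) ^ N) * s ^ N) := by
            rw [mul_assoc, ← mul_pow s⁻¹, inv_mul_cancel₀ (by linarith), mul_pow]; simp
        _ ≤ 3 ^ m * (max C 1 * s ^ N) := by
            gcongr
            exact (hC N).trans (le_max_left _ _)
        _ = _ := by ring
  calc (2 * (N : ℝ) + 1) ^ m * (2 * η * Real.exp (m * N * (Real.log s / (m + 1))))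
      ≤ (3 ^ m * max C 1 * s ^ N) * (2 * η * s ^ N) := by gcongr
    _ = 2 * (3 ^ m * max C 1) * (η * om ^ N) := by rw [← hss, mul_pow]; ring

end Bern

end GW

end

section

namespace GW

theorem Geo.ClsAt.analytic {d : ℕ} {M ι : Type} {g : Geo d M ι} {om : ℝ} (hom : 1 < om) {a : ι}
    {A : ℝ} {f : M → ℝ} (h : g.ClsAt om a A f) :
    ∃ F : (Fin d → ℝ) → ℝ, (∀ y, ∑ i, y i ^ 2 < 4 → AnalyticAt ℝ F y) ∧
      ∀ x ∈ g.B a, f x = F (g.k a x) := by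
  obtain ⟨J, hJ, q, N, η, h1, h0, h2, h3, h4, h5⟩ := h
  refine ⟨fun y => ∑' j, q j y, fun y0 hy0 => ?_, h5⟩
  obtain ⟨R, C, hR, hC, hb⟩ := bern (κ := Fin d) hom
  -- choose the size of the box
  obtain ⟨t, ht, htb⟩ : ∃ t : ℝ, 0 < t ∧ ∀ y : Fin d → ℝ, (∀ i, |y i - y0 i| ≤ t) → ∑ i, y i ^ 2 < 4 := by
    have hc : Continuous (fun y : Fin d → ℝ => ∑ i, y i ^ 2) := by fun_prop
    have ho : IsOpen {y : Fin d → ℝ | ∑ i, y i ^ 2 < 4} := isOpen_lt hc continuous_const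
    obtain ⟨e, he, hball⟩ := Metric.isOpen_iff.1 ho y0 hy0
    refine ⟨e / 2, by positivity, fun y hy => hball ?_⟩
    rw [Metric.mem_ball]
    refine lt_of_le_of_lt ((dist_pi_le_iff (by positivity)).2 fun i => ?_) (show e / 2 < e by linarith)
    rw [Real.dist_eq]; exact hy i
  have hrep : Rep R (∑' j, C * (η j * om ^ N j))
      (fun θ : Fin d → ℝ => ∑' j, q j (fun i => y0 i + t * Real.sin (θ i))) := by
    refine Rep.tsum (A := J) hR.le (fun j => ?_) (h3.mul_left C) (fun θ _ => rfl)
    obtain ⟨B, hB⟩ := h1 j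
    refine hb _ B _ hB _ _ _ (h0 j) fun θ => ?_
    obtain ⟨x, hx, hxy⟩ := g.surj a (fun i => y0 i + t * Real.sin (θ i)) (htb _ fun i => by
      rw [add_sub_cancel_left, abs_mul, abs_of_pos ht]
      exact mul_le_of_le_one_right ht.le (Real.abs_sin_le_one _))
    rw [← hxy]
    exact h2 j x hx
  have han := hrep.analyticAt hR
  have hin : AnalyticAt ℝ (fun y : Fin d → ℝ => fun i => Real.arcsin ((y i - y0 i) / t)) y0 := by
    rw [analyticAt_pi_iff]
    intro i
    have h6 : AnalyticAt ℝ (fun y : Fin d → ℝ => (y i - y0 i) / t) y0 := by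
      have : AnalyticAt ℝ (fun y : Fin d → ℝ => y i) y0 :=
        (ContinuousLinearMap.proj (R := ℝ) (φ := fun _ : Fin d => ℝ) i).analyticAt y0
      exact (this.sub analyticAt_const).div_const
    have h7 : AnalyticAt ℝ Real.arcsin ((y0 i - y0 i) / t) := by
      refine ContDiffAt.analyticAt ?_
      apply Real.contDiffAt_arcsin <;> simp
    exact h7.comp_of_eq h6 rfl
  have h0' : (fun i => Real.arcsin ((y0 i - y0 i) / t)) = 0 := by ext i; simp
  have hcomp := AnalyticAt.comp_of_eq han hin h0'
  refine hcomp.congr ?_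
  filter_upwards [Metric.closedBall_mem_nhds y0 ht] with y hy
  show ∑' j, q j (fun i => y0 i + t * Real.sin (Real.arcsin ((y i - y0 i) / t))) = ∑' j, q j y
  have : (fun i => y0 i + t * Real.sin (Real.arcsin ((y i - y0 i) / t))) = y := by
    ext i
    have h8 : |y i - y0 i| ≤ t := by
      have := (dist_le_pi_dist y y0 i).trans (Metric.mem_closedBall.1 hy)
      rwa [Real.dist_eq] at this
    rw [abs_le] at h8
    rw [Real.sin_arcsin]
    · field_simp; ring
    · rw [le_div_iff₀ ht]; linarith
    · rw [div_le_iff₀ ht]; linarith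
  rw [this]

end GW

end

section

namespace GW

/-- charts which are real analytic together with their inverses -/
def AnChart {d : ℕ} {M : Type} [TopologicalSpace M] [ChartedSpace (EuclideanSpace ℝ (Fin d)) M]
    (ψ : OpenPartialHomeomorph M (EuclideanSpace ℝ (Fin d))) : Prop :=
  ContMDiffOn 𝓘(ℝ, EuclideanSpace ℝ (Fin d)) 𝓘(ℝ, EuclideanSpace ℝ (Fin d)) ω ψ ψ.source ∧
  ContMDiffOn 𝓘(ℝ, EuclideanSpace ℝ (Fin d)) 𝓘(ℝ, EuclideanSpace ℝ (Fin d)) ω ψ.symm ψ.target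

theorem exists_iso {d : ℕ} {H : Type*} [NormedAddCommGroup H] [InnerProductSpace ℝ H]
    (T : EuclideanSpace ℝ (Fin d) →L[ℝ] H) (hT : Function.Injective T) :
    ∃ A : EuclideanSpace ℝ (Fin d) ≃L[ℝ] EuclideanSpace ℝ (Fin d), ∀ w, ‖A w‖ = ‖T w‖ := by
  let T' := LinearEquiv.ofInjective (T : EuclideanSpace ℝ (Fin d) →ₗ[ℝ] H) hT
  have hfr : Module.finrank ℝ (LinearMap.range (T : EuclideanSpace ℝ (Fin d) →ₗ[ℝ] H)) = d := by
    rw [← T'.finrank_eq, finrank_euclideanSpace_fin]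
  let b := (stdOrthonormalBasis ℝ (LinearMap.range (T : EuclideanSpace ℝ (Fin d) →ₗ[ℝ] H))).reindex
    (finCongr hfr)
  refine ⟨(T'.trans b.repr.toLinearEquiv).toContinuousLinearEquiv, fun w => ?_⟩
  show ‖b.repr (T' w)‖ = _
  rw [LinearIsometryEquiv.norm_map]
  rfl

theorem bilip {d : ℕ} {H : Type*} [NormedAddCommGroup H] [InnerProductSpace ℝ H]
    {h : EuclideanSpace ℝ (Fin d) → H} {u0 : EuclideanSpace ℝ (Fin d)}
    {DT : EuclideanSpace ℝ (Fin d) →L[ℝ] H} (hst : HasStrictFDerivAt h DT u0)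
    (hDTn : ∀ w, ‖w‖ ≤ ‖DT w‖) :
    ∃ A : EuclideanSpace ℝ (Fin d) ≃L[ℝ] EuclideanSpace ℝ (Fin d), ∃ V ∈ nhds u0,
      ∀ u ∈ V, ∀ v ∈ V, ‖A u - A v‖ ≤ 2 * ‖h u - h v‖ ∧ ‖h u - h v‖ ≤ 2 * ‖A u - A v‖ := by
  have hDTi : Function.Injective DT := by
    rw [injective_iff_map_eq_zero]
    intro w hw
    have := hDTn w
    rw [hw, norm_zero] at this
    exact norm_le_zero_iff.1 this
  obtain ⟨A, hA⟩ := exists_iso DT hDTi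
  have hev := hst.isLittleO.def (c := 1 / 2) (by norm_num)
  rw [nhds_prod_eq] at hev
  obtain ⟨V, hV, h3⟩ := Filter.mem_prod_self_iff.1 hev
  refine ⟨A, V, hV, fun u hu v hv => ?_⟩
  have h3 : ‖h u - h v - DT (u - v)‖ ≤ 1 / 2 * ‖u - v‖ := h3 (Set.mk_mem_prod hu hv)
  have h4 : ‖A u - A v‖ = ‖DT (u - v)‖ := by
    rw [← hA, map_sub]
  rw [h4]
  have h5 := hDTn (u - v)
  have h6 := norm_sub_norm_le (h u - h v) (DT (u - v))
  have h7 := norm_sub_norm_le (DT (u - v)) (h u - h v)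
  rw [norm_sub_rev (DT (u - v)) (h u - h v)] at h7
  constructor <;> linarith

set_option maxHeartbeats 400000 in
theorem exists_metric (d : ℕ) (M : Type) [TopologicalSpace M] [T2Space M] [SigmaCompactSpace M]
    [ChartedSpace (EuclideanSpace ℝ (Fin d)) M]
    [IsManifold 𝓘(ℝ, EuclideanSpace ℝ (Fin d)) ω M] :
    ∃ (H : Type) (_ : MetricSpace H) (J : M → H), Topology.IsEmbedding J ∧
      ∀ x0, ∃ (ψ : OpenPartialHomeomorph M (EuclideanSpace ℝ (Fin d))) (r : ℝ), AnChart ψ ∧ 0 < r ∧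
        (∀ y, dist (J x0) (J y) < r → y ∈ ψ.source) ∧
        ∀ y z, dist (J x0) (J y) < r → dist (J x0) (J z) < r →
          ‖ψ y - ψ z‖ ≤ 2 * dist (J y) (J z) ∧ dist (J y) (J z) ≤ 2 * ‖ψ y - ψ z‖ := by
  classical
  let E := EuclideanSpace ℝ (Fin d)
  have : IsManifold 𝓘(ℝ, E) ∞ M := IsManifold.of_le (m := ∞) (n := ω) le_top
  obtain ⟨ι, f, -⟩ := SmoothBumpCovering.exists_isSubordinate (I := 𝓘(ℝ, E)) (M := M) (s := Set.univ)
    isClosed_univ (U := fun _ => Set.univ) (fun _ _ => Filter.univ_mem)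
  let F := WithLp 2 (ℝ × E)
  let H := lp (fun _ : ι => F) 2
  let T : (ℝ × E) ≃L[ℝ] F := (WithLp.prodContinuousLinearEquiv 2 ℝ ℝ E).symm
  let Si : ι → F →L[ℝ] H := fun i => lp.singleContinuousLinearMap ℝ (fun _ : ι => F) 2 i
  let Φ : ι → M → H := fun i x => f i x • Si i (T (1, chartAt E (f.c i) x))
  let J : M → H := fun x => ∑ᶠ i, Φ i x
  have hΦs : ∀ i, Function.support (Φ i) ⊆ Function.support (f i) := by
    intro i x hx hx0
    apply hx
    simp only [Φ, hx0, zero_smul]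
  have hlf : LocallyFinite fun i => Function.support (Φ i) := f.locallyFinite.subset hΦs
  have hΦ : ∀ i, ContMDiff 𝓘(ℝ, E) 𝓘(ℝ, H) ∞ (Φ i) := by
    intro i
    refine (f i).contMDiff_smul ?_
    have h1 : ContMDiffOn 𝓘(ℝ, E) 𝓘(ℝ, E) ∞ (chartAt E (f.c i)) (chartAt E (f.c i)).source :=
      contMDiffOn_chart
    have h2 : ContDiff ℝ ∞ (fun v : E => Si i (T (1, v))) := by fun_prop
    exact h2.contMDiff.comp_contMDiffOn h1
  have hJ : ContMDiff 𝓘(ℝ, E) 𝓘(ℝ, H) ∞ J := contMDiff_finsum hΦ hlf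
  -- coordinates
  let π : ι → H →L[ℝ] F := fun i => LinearMap.mkContinuous
    { toFun := fun g => g i, map_add' := fun _ _ => rfl, map_smul' := fun _ _ => rfl } 1
    (fun g => by rw [one_mul]; exact lp.norm_apply_le_norm two_ne_zero g i)
  have hJc : ∀ i x, π i (J x) = f i x • T (1, chartAt E (f.c i) x) := by
    intro i x
    have hfin : (Function.support fun j => Φ j x).Finite := hlf.point_finite x
    show π i (∑ᶠ j, Φ j x) = _
    rw [show π i (∑ᶠ j, Φ j x) = ∑ᶠ j, π i (Φ j x) from
      map_finsum (π i) hfin, finsum_eq_single _ i]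
    · show (f i x • Si i (T (1, chartAt E (f.c i) x)) : H) i = _
      rw [lp.coeFn_smul, Pi.smul_apply]
      congr 1
      exact lp.single_apply_self 2 i _
    · intro j hj
      show (f j x • Si j (T (1, chartAt E (f.c j) x)) : H) i = _
      rw [lp.coeFn_smul, Pi.smul_apply]
      have : (Si j (T (1, chartAt E (f.c j) x)) : H) i = 0 := lp.single_apply_ne 2 j _ hj.symm
      rw [this, smul_zero]
  let p1 : ι → H → ℝ := fun i g => (T.symm (π i g)).1
  let p2 : ι → H →L[ℝ] E := fun i => (ContinuousLinearMap.snd ℝ ℝ E) ∘L (T.symm : F →L[ℝ] (ℝ × E)) ∘L (π i)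
  have hp1 : ∀ i x, p1 i (J x) = f i x := by
    intro i x
    simp [p1, hJc]
  have hp2 : ∀ i x, p2 i (J x) = f i x • chartAt E (f.c i) x := by
    intro i x
    simp [p2, hJc]
  have hp1c : ∀ i, Continuous (p1 i) := by intro i; fun_prop
  have hind : Topology.IsInducing J := by
    rw [Topology.isInducing_iff_nhds]
    intro x0
    refine le_antisymm (Filter.map_le_iff_le_comap.1 hJ.continuous.continuousAt) ?_
    set i := f.ind x0 (Set.mem_univ _) with hi
    have hx0s : x0 ∈ (chartAt E (f.c i)).source := f.mem_chartAt_ind_source x0 _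
    have h1x : f i x0 = 1 := f.apply_ind x0 _
    have hc1 : Filter.Tendsto (fun y => f i y) (Filter.comap J (nhds (J x0))) (nhds 1) := by
      have := ((hp1c i).tendsto (J x0)).comp (Filter.tendsto_comap (f := J))
      rw [hp1, h1x] at this
      refine this.congr fun y => hp1 i y
    have hc2 : Filter.Tendsto (fun y => f i y • chartAt E (f.c i) y) (Filter.comap J (nhds (J x0)))
        (nhds (chartAt E (f.c i) x0)) := by
      have := ((p2 i).continuous.tendsto (J x0)).comp (Filter.tendsto_comap (f := J))
      rw [hp2, h1x, one_smul] at this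
      refine this.congr fun y => hp2 i y
    have hne : ∀ᶠ y in Filter.comap J (nhds (J x0)), f i y ≠ 0 := hc1.eventually_ne one_ne_zero
    have hc3 : Filter.Tendsto (fun y => chartAt E (f.c i) y) (Filter.comap J (nhds (J x0)))
        (nhds (chartAt E (f.c i) x0)) := by
      have := (hc1.inv₀ one_ne_zero).smul hc2
      rw [inv_one, one_smul] at this
      refine this.congr' ?_
      filter_upwards [hne] with y hy
      rw [smul_smul, inv_mul_cancel₀ hy, one_smul]
    have hc4 := ((chartAt E (f.c i)).continuousAt_symm ((chartAt E (f.c i)).map_source hx0s)).tendsto.comp hc3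
    rw [(chartAt E (f.c i)).left_inv hx0s] at hc4
    have : Filter.Tendsto id (Filter.comap J (nhds (J x0))) (nhds x0) := by
      refine hc4.congr' ?_
      filter_upwards [hne] with y hy
      exact (chartAt E (f.c i)).left_inv ((f i).support_subset_source hy)
    exact this
  refine ⟨H, inferInstance, J, ⟨hind, hind.injective⟩, fun x0 => ?_⟩
  set i := f.ind x0 (Set.mem_univ _) with hi
  set ψ0 := chartAt E (f.c i) with hψ0
  have hx0s : x0 ∈ ψ0.source := f.mem_chartAt_ind_source x0 _
  have h1e : ∀ᶠ y in nhds x0, f i y = 1 := f.eventuallyEq_one x0 _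
  let u0 := ψ0 x0
  have hu0 : u0 ∈ ψ0.target := ψ0.map_source hx0s
  let h : E → H := fun u => J (ψ0.symm u)
  have hsm : ContDiffAt ℝ ∞ h u0 := by
    have h1 : ContMDiffOn 𝓘(ℝ, E) 𝓘(ℝ, E) ∞ ψ0.symm ψ0.target := contMDiffOn_chart_symm
    have h2 := hJ.comp_contMDiffOn h1
    exact (contMDiffOn_iff_contDiffOn.1 h2).contDiffAt (ψ0.open_target.mem_nhds hu0)
  have hst := hsm.hasStrictFDerivAt (by simp)
  set DT := fderiv ℝ h u0 with hDT
  have hsymm : Filter.Tendsto ψ0.symm (nhds u0) (nhds x0) := by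
    have := (ψ0.continuousAt_symm hu0).tendsto
    rwa [ψ0.left_inv hx0s] at this
  have hcomp : (p2 i) ∘L DT = ContinuousLinearMap.id ℝ E := by
    have e1 : HasFDerivAt (fun u => p2 i (h u)) ((p2 i) ∘L DT) u0 :=
      (p2 i).hasFDerivAt.comp u0 hst.hasFDerivAt
    have e2 : HasFDerivAt (fun u => p2 i (h u)) (ContinuousLinearMap.id ℝ E) u0 := by
      refine (hasFDerivAt_id u0).congr_of_eventuallyEq ?_
      filter_upwards [hsymm.eventually h1e, ψ0.open_target.mem_nhds hu0] with u hu hut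
      show p2 i (J (ψ0.symm u)) = u
      rw [hp2, hu, one_smul, ← hψ0, ψ0.right_inv hut]
    exact e1.unique e2
  have hp2n : ∀ g : H, ‖p2 i g‖ ≤ ‖g‖ := by
    intro g
    refine le_trans ?_ (lp.norm_apply_le_norm two_ne_zero g i)
    exact WithLp.norm_snd_le (p := 2) (α := ℝ) (β := E) (g i)
  have hDTn : ∀ w, ‖w‖ ≤ ‖DT w‖ := by
    intro w
    have := congrArg (fun L => L w) hcomp
    simp only [ContinuousLinearMap.comp_apply, ContinuousLinearMap.id_apply] at this
    calc ‖w‖ = ‖p2 i (DT w)‖ := by rw [this]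
      _ ≤ _ := hp2n _
  obtain ⟨A, V, hV, hVp⟩ := bilip hst hDTn
  have hU : ψ0.source ∩ ψ0 ⁻¹' V ∈ nhds x0 :=
    Filter.inter_mem (ψ0.open_source.mem_nhds hx0s) ((ψ0.continuousAt hx0s).preimage_mem_nhds hV)
  rw [hind.nhds_eq_comap, Filter.mem_comap] at hU
  obtain ⟨W, hW, hWU⟩ := hU
  obtain ⟨r, hr, hrW⟩ := Metric.mem_nhds_iff.1 hW
  have hrU : ∀ y, dist (J x0) (J y) < r → y ∈ ψ0.source ∩ ψ0 ⁻¹' V := fun y hy =>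
    hWU (hrW (by rwa [Metric.mem_ball, dist_comm]))
  refine ⟨ψ0.transHomeomorph A.toHomeomorph, r, ⟨?_, ?_⟩, hr, fun y hy => (hrU y hy).1, ?_⟩
  · have h1 : ContMDiffOn 𝓘(ℝ, E) 𝓘(ℝ, E) ω ψ0 ψ0.source := contMDiffOn_chart
    exact A.contDiff.contMDiff.comp_contMDiffOn h1
  · have h1 : ContMDiffOn 𝓘(ℝ, E) 𝓘(ℝ, E) ω ψ0.symm ψ0.target := contMDiffOn_chart_symm
    exact h1.comp A.symm.contDiff.contMDiff.contMDiffOn (fun u hu => hu)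
  · intro y z hy hz
    obtain ⟨hy1, hy2⟩ := hrU y hy
    obtain ⟨hz1, hz2⟩ := hrU z hz
    have h3 := hVp _ hy2 _ hz2
    simp only [h, ψ0.left_inv hy1, ψ0.left_inv hz1] at h3
    rw [dist_eq_norm]
    exact h3

end GW

end

section

namespace GW

theorem diffRep_mon {κ : Type} {R : ℝ} (hR : 0 < R) {u : κ → ℝ} (hu : ∀ i, |u i| ≤ R / 2)
    {τ : ℝ} (hτ : 0 < τ) (hτR : τ ≤ R / 8) (w : List κ) :
    Rep 4 (8 / R * R ^ w.length) (fun v => (mon w (fun i => u i + τ * v i) - mon w u) / τ) := by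
  have h4 : (0:ℝ) ≤ 4 := by norm_num
  have hc : ∀ i, Rep 4 R (fun v : κ → ℝ => u i + τ * v i) := by
    intro i
    refine ((Rep.const (u i)).add h4 ((Rep.coord i).smul h4 τ)).mono ?_
    rw [abs_of_pos hτ]
    have := hu i
    linarith
  induction w with
  | nil =>
    refine ((Rep.const 0).mono ?_).congr (fun x _ => by simp [mon_nil])
    simp; positivity
  | cons i w ih =>
    have h1 := (ih.smul h4 (u i)).add h4 ((Rep.coord i).mul h4 (Rep.mon_comp h4 hc w))
    refine (h1.mono ?_).congr (fun v _ => ?_)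
    · have h2 : |u i| * (8 / R * R ^ w.length) ≤ R / 2 * (8 / R * R ^ w.length) :=
        mul_le_mul_of_nonneg_right (hu i) (by positivity)
      rw [List.length_cons, pow_succ]
      have h3 : R / 2 * (8 / R * R ^ w.length) = 4 * R ^ w.length := by field_simp; ring
      have h5 : 8 / R * (R ^ w.length * R) = 8 * R ^ w.length := by field_simp
      linarith
    · simp only [mon_cons]
      field_simp
      ring

theorem diffRep {κ : Type} {R B : ℝ} (hR : 0 < R) {g : (κ → ℝ) → ℝ} (h : Rep R B g)
    {u : κ → ℝ} (hu : ∀ i, |u i| ≤ R / 2) {τ : ℝ} (hτ : 0 < τ) (hτR : τ ≤ R / 8) :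
    Rep 4 (8 / R * B) (fun v => (g (fun i => u i + τ * v i) - g u) / τ) := by
  have h4 : (0:ℝ) ≤ 4 := by norm_num
  obtain ⟨J, hJ, c, w, h1, h2, h3⟩ := h
  have hs : Summable (fun j => |c j| * (8 / R * R ^ (w j).length)) := by
    refine (h1.mul_left (8 / R)).congr fun j => by ring
  refine (Rep.tsum h4 (fun j => (diffRep_mon hR hu hτ hτR (w j)).smul h4 (c j)) hs ?_).mono ?_
  · intro v hv
    have e1 : ∀ i, |u i + τ * v i| ≤ R := by
      intro i
      have a1 := abs_add_le (u i) (τ * v i)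
      have a2 : |τ * v i| ≤ R / 8 * 4 := by
        rw [abs_mul, abs_of_pos hτ]
        exact mul_le_mul hτR (hv i) (abs_nonneg _) (by positivity)
      have := hu i
      linarith
    have e2 : ∀ i, |u i| ≤ R := fun i => (hu i).trans (by linarith)
    rw [h3 _ e1, h3 _ e2, ← (summable_mon h1 e1).of_abs.tsum_sub (summable_mon h1 e2).of_abs,
      ← tsum_div_const]
    refine tsum_congr fun j => ?_
    ring
  · have : ∑' j, |c j| * (8 / R * R ^ (w j).length) = 8 / R * ∑' j, |c j| * R ^ (w j).length := by
      rw [← tsum_mul_left]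
      exact tsum_congr fun j => by ring
    rw [this]
    exact mul_le_mul_of_nonneg_left h2 (by positivity)

theorem uniRep {d : ℕ} {g : (Fin d → ℝ) → ℝ} {u0 : Fin d → ℝ} (hg : AnalyticAt ℝ g u0)
    {Λ : ℝ} (hΛ : 0 ≤ Λ) (hl : ∀ᶠ x in nhds u0, ‖g x - g u0‖ ≤ Λ * ‖x - u0‖) :
    ∃ ρ : ℝ, 0 < ρ ∧ ∀ u : Fin d → ℝ, (∀ i, |u i - u0 i| ≤ ρ) → ∀ τ, 0 < τ → τ ≤ ρ →
      Rep 4 (4 * d * Λ + 8) (fun v => (g (fun i => u i + τ * v i) - g u) / τ) := by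
  have h4 : (0:ℝ) ≤ 4 := by norm_num
  obtain ⟨p, hp⟩ := hg
  obtain ⟨R0, B, hR0, hB, hrep⟩ := fps_rep hp 2
  set L := (continuousMultilinearCurryFin1 ℝ (Fin d → ℝ) ℝ) (p 1) with hL
  have hLn : ‖L‖ ≤ Λ := hp.hasFDerivAt.le_of_lip' hΛ hl
  have hps : ∀ x, p.partialSum 2 x = p 0 ![] + L x := by
    intro x
    rw [FormalMultilinearSeries.partialSum, Finset.sum_range_succ, Finset.sum_range_one]
    congr 1
    · congr 1; ext i; exact i.elim0
  have hLe : ∀ x : Fin d → ℝ, L x = ∑ k, x k * L (Pi.single k 1) := by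
    intro x
    conv_lhs => rw [pi_eq_sum_univ' x]
    simp [map_sum]
  set R := min R0 (1 / (B + 1)) with hR
  have hRp : 0 < R := lt_min hR0 (by positivity)
  have hBR : B * R ≤ 1 := by
    have : R * (B + 1) ≤ 1 := by
      rw [← le_div_iff₀ (by positivity)]; exact min_le_right _ _
    nlinarith
  have hr := hrep R hRp.le (min_le_left _ _)
  refine ⟨R / 8, by positivity, fun u hu τ hτ hτR => ?_⟩
  have hd := diffRep hRp hr (u := fun i => u i - u0 i) (fun i => (hu i).trans (by linarith)) hτ hτR
  have hlin : Rep 4 (∑ k : Fin d, 4 * Λ) (fun v : Fin d → ℝ => ∑ k, v k * L (Pi.single k 1)) := by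
    refine Rep.sum h4 _ fun k _ => ((Rep.coord k).mul h4 (Rep.const _)).mono ?_
    have h1 : |L (Pi.single k 1)| ≤ Λ := by
      have h2 := L.le_opNorm (Pi.single k 1)
      have h3 : ‖(Pi.single k 1 : Fin d → ℝ)‖ ≤ 1 := by
        rw [pi_norm_le_iff_of_nonneg zero_le_one]
        intro i
        by_cases hik : i = k
        · subst hik; simp
        · simp [Pi.single_eq_of_ne hik]
      calc |L (Pi.single k 1)| ≤ ‖L‖ * ‖(Pi.single k 1 : Fin d → ℝ)‖ := h2
        _ ≤ Λ * 1 := mul_le_mul hLn h3 (norm_nonneg _) hΛ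
        _ = Λ := mul_one _
    linarith
  refine ((hlin.add h4 hd).mono ?_).congr fun v _ => ?_
  · have : 8 / R * (B * R ^ 2) = 8 * (B * R) := by field_simp
    rw [this]
    simp only [Finset.sum_const, Finset.card_univ, Fintype.card_fin, nsmul_eq_mul]
    linarith
  · rw [← hLe]
    have e1 : (u0 + fun i => u i - u0 i + τ * v i) = fun i => u i + τ * v i := by
      ext i; simp only [Pi.add_apply]; ring
    have e2 : (u0 + fun i => u i - u0 i) = u := by
      ext i; simp
    have e3 : (fun i => u i - u0 i + τ * v i) = (fun i => u i - u0 i) + τ • v := by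
      ext i; simp
    rw [e1, e2, hps, hps, e3, map_add, map_smul, smul_eq_mul]
    field_simp
    ring

theorem scale {M : Type} [MetricSpace M] (Good : M → ℝ → Prop) (h : ∀ y, ∃ t, 0 < t ∧ Good y t)
    (hb : ∀ y t, Good y t → t ≤ 1) :
    ∃ τ : M → ℝ, (∀ a, 0 < τ a) ∧ (∀ a b, τ a - τ b ≤ dist a b / 100) ∧
      ∀ a, ∃ y t, Good y t ∧ dist y a + 50 * τ a < t := by
  let A : M → Set ℝ := fun z => {s | ∃ y t, Good y t ∧ s = t - dist y z}
  have hbdd : ∀ z, BddAbove (A z) := by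
    intro z
    refine ⟨1, ?_⟩
    rintro s ⟨y, t, h1, rfl⟩
    have := hb y t h1
    have := dist_nonneg (x := y) (y := z)
    linarith
  have hne : ∀ z, (A z).Nonempty := fun z => by
    obtain ⟨t, h1, h2⟩ := h z
    exact ⟨_, z, t, h2, rfl⟩
  have hpos : ∀ z, 0 < sSup (A z) := by
    intro z
    obtain ⟨t, h1, h2⟩ := h z
    exact h1.trans_le (le_csSup (hbdd z) ⟨z, t, h2, by simp⟩)
  refine ⟨fun z => sSup (A z) / 100, fun a => by have := hpos a; positivity, fun a b => ?_, fun a => ?_⟩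
  · have : sSup (A a) ≤ sSup (A b) + dist a b := by
      refine csSup_le (hne a) ?_
      rintro s ⟨y, t, h1, rfl⟩
      have h2 : t - dist y b ≤ sSup (A b) := le_csSup (hbdd b) ⟨y, t, h1, rfl⟩
      have h3 := dist_triangle y a b
      linarith
    linarith
  · obtain ⟨s, ⟨y, t, h1, rfl⟩, h2⟩ := exists_lt_of_lt_csSup (hne a)
      (show sSup (A a) / 2 < sSup (A a) by have := hpos a; linarith)
    exact ⟨y, t, h1, by linarith⟩

theorem exists_net {M : Type} [MetricSpace M] (τ : M → ℝ) (hτ : ∀ a, 0 < τ a) :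
    ∃ N : Set M, (∀ a ∈ N, ∀ c ∈ N, a ≠ c → min (τ a) (τ c) / 5 ≤ dist a c) ∧
      ∀ x, ∃ a ∈ N, dist a x < τ a / 5 := by
  obtain ⟨N, hN⟩ := zorn_subset
    {N : Set M | ∀ a ∈ N, ∀ c ∈ N, a ≠ c → min (τ a) (τ c) / 5 ≤ dist a c} (by
      intro c hc hchain
      refine ⟨⋃₀ c, ?_, fun s hs => Set.subset_sUnion_of_mem hs⟩
      rintro a ⟨s, hs, ha⟩ b ⟨t, ht, hb⟩ hab
      rcases hchain.total hs ht with h | h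
      · exact hc ht a (h ha) b hb hab
      · exact hc hs a ha b (h hb) hab)
  refine ⟨N, hN.prop, fun x => ?_⟩
  by_contra hcon
  push Not at hcon
  have hx : x ∉ N := fun hx => by
    have := hcon x hx
    rw [dist_self] at this
    have := hτ x
    linarith
  have hins : insert x N ∈
      {N : Set M | ∀ a ∈ N, ∀ c ∈ N, a ≠ c → min (τ a) (τ c) / 5 ≤ dist a c} := by
    rintro a (rfl | ha) c (rfl | hc) hac
    · exact absurd rfl hac
    · have := hcon c hc
      have := min_le_right (τ a) (τ c)
      rw [dist_comm]
      linarith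
    · have := hcon a ha
      have := min_le_left (τ a) (τ c)
      linarith
    · exact hN.prop a ha c hc hac
  exact hx (hN.le_of_ge hins (Set.subset_insert _ _) (Set.mem_insert _ _))

theorem packing (d : ℕ) : ∃ m : ℕ, ∀ {α : Type} (s : Set α) (u : α → EuclideanSpace ℝ (Fin d)),
    (∀ c ∈ s, ‖u c‖ ≤ 20) → (∀ c ∈ s, ∀ c' ∈ s, c ≠ c' → 9 / 100 ≤ ‖u c - u c'‖) →
    ∃ h : s.Finite, h.toFinset.card ≤ m := by
  classical
  obtain ⟨t, -, ht, hcov⟩ := (isCompact_closedBall (0 : EuclideanSpace ℝ (Fin d)) 20).finite_cover_balls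
    (e := 4 / 100) (by norm_num)
  refine ⟨ht.toFinset.card, fun {α} s u h1 h2 => ?_⟩
  have h3 : ∀ c, ∃ p, c ∈ s → p ∈ t ∧ dist (u c) p < 4 / 100 := by
    intro c
    by_cases hc : c ∈ s
    · have := hcov (mem_closedBall_zero_iff.2 (h1 c hc))
      simp only [Set.mem_iUnion, Metric.mem_ball] at this
      obtain ⟨p, hp, hp2⟩ := this
      exact ⟨p, fun _ => ⟨hp, hp2⟩⟩
    · exact ⟨0, fun h => absurd h hc⟩
  choose p hp using h3
  have hmaps : Set.MapsTo p s t := fun c hc => (hp c hc).1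
  have hinj : Set.InjOn p s := by
    intro c hc c' hc' hcc
    by_contra hne
    have h4 := h2 c hc c' hc' hne
    have h5 := (hp c hc).2
    have h6 := (hp c' hc').2
    rw [← hcc] at h6
    have := dist_triangle_right (u c) (u c') (p c)
    rw [← dist_eq_norm] at h4
    linarith
  have hf : s.Finite := Set.Finite.of_injOn hmaps hinj ht
  refine ⟨hf, Finset.card_le_card_of_injOn p ?_ ?_⟩
  · intro c hc
    simpa using hmaps (by simpa using hc)
  · simpa using hinj

end GW

end

section

namespace GW

/-- coordinate transition -/
noncomputable def Phi {d : ℕ} {M : Type} [TopologicalSpace M]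
    (ψ ψ' : OpenPartialHomeomorph M (EuclideanSpace ℝ (Fin d))) (k : Fin d) (v : Fin d → ℝ) : ℝ :=
  ψ' (ψ.symm (WithLp.toLp 2 v)) k

theorem abs_coord_le {d : ℕ} (v : EuclideanSpace ℝ (Fin d)) (k : Fin d) : |v k| ≤ ‖v‖ := by
  have := PiLp.norm_apply_le (p := 2) v k
  simpa using this

theorem norm_toLp_le {d : ℕ} (v : Fin d → ℝ) : ‖(WithLp.toLp 2 v : EuclideanSpace ℝ (Fin d))‖ ≤ d * ‖v‖ := by
  rw [EuclideanSpace.norm_eq]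
  apply Real.sqrt_le_iff.2
  refine ⟨by positivity, ?_⟩
  have h1 : ∑ i : Fin d, ‖v i‖ ^ 2 ≤ ∑ i : Fin d, ‖v‖ ^ 2 :=
    Finset.sum_le_sum fun i _ => pow_le_pow_left₀ (norm_nonneg _) (norm_le_pi_norm v i) 2
  simp only [Finset.sum_const, Finset.card_univ, Fintype.card_fin, nsmul_eq_mul] at h1
  refine h1.trans ?_
  rw [mul_pow]
  refine mul_le_mul_of_nonneg_right ?_ (by positivity)
  norm_cast
  nlinarith [Nat.zero_le d]

section
variable {d : ℕ} {M : Type} [MetricSpace M] [ChartedSpace (EuclideanSpace ℝ (Fin d)) M]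

theorem good_beta {ψ ψ' : OpenPartialHomeomorph M (EuclideanSpace ℝ (Fin d))}
    (hψ : AnChart ψ) (hψ' : AnChart ψ') {x x' : M} {r r' : ℝ}
    (hs : ∀ y, dist x y < r → y ∈ ψ.source)
    (hs' : ∀ y, dist x' y < r' → y ∈ ψ'.source)
    (hl : ∀ y z, dist x y < r → dist x z < r → ‖ψ y - ψ z‖ ≤ 2 * dist y z ∧ dist y z ≤ 2 * ‖ψ y - ψ z‖)
    (hl' : ∀ y z, dist x' y < r' → dist x' z < r' →
      ‖ψ' y - ψ' z‖ ≤ 2 * dist y z ∧ dist y z ≤ 2 * ‖ψ' y - ψ' z‖)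
    {y : M} (hy : dist x y < r) (hy' : dist x' y < r') :
    ∃ ρ : ℝ, 0 < ρ ∧ ∀ a, dist y a < ρ → ∀ τ, 0 < τ → τ ≤ ρ → ∀ k : Fin d,
      Rep 4 (4 * d * (4 * d) + 8) (fun v : Fin d → ℝ => (Phi ψ ψ' k (fun l => ψ a l + τ * v l) - ψ' a k) / τ) := by
  let E := EuclideanSpace ℝ (Fin d)
  let T : (Fin d → ℝ) ≃L[ℝ] E := (EuclideanSpace.equiv (Fin d) ℝ).symm
  have hT : ∀ v, T v = WithLp.toLp 2 v := fun v => rfl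
  let u0 : Fin d → ℝ := fun l => ψ y l
  have hTu : T u0 = ψ y := rfl
  have hyt : T u0 ∈ ψ.target := by rw [hTu]; exact ψ.map_source (hs y hy)
  have hsy : ψ.symm (T u0) = y := by rw [hTu]; exact ψ.left_inv (hs y hy)
  -- neighbourhood
  have hcont : Filter.Tendsto (fun v => ψ.symm (T v)) (nhds u0) (nhds y) := by
    have h1 := (ψ.continuousAt_symm hyt).tendsto
    rw [hsy] at h1
    exact h1.comp T.continuous.continuousAt
  have hbx : ∀ᶠ z in nhds y, dist x z < r :=
    (continuous_const.dist continuous_id).continuousAt.eventually_lt_const hy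
  have hbx' : ∀ᶠ z in nhds y, dist x' z < r' :=
    (continuous_const.dist continuous_id).continuousAt.eventually_lt_const hy'
  have htg : ∀ᶠ v in nhds u0, T v ∈ ψ.target :=
    T.continuous.continuousAt.eventually_mem (ψ.open_target.mem_nhds hyt)
  have hk : ∀ k : Fin d, ∃ ρ : ℝ, 0 < ρ ∧ ∀ u : Fin d → ℝ, (∀ i, |u i - u0 i| ≤ ρ) → ∀ τ, 0 < τ → τ ≤ ρ →
      Rep 4 (4 * d * (4 * d) + 8) (fun v => (Phi ψ ψ' k (fun i => u i + τ * v i) - Phi ψ ψ' k u) / τ) := by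
    intro k
    refine uniRep ?_ (by positivity) ?_
    · have h1 : ContMDiffAt 𝓘(ℝ, E) 𝓘(ℝ, E) ω ψ.symm (T u0) :=
        hψ.2.contMDiffAt (ψ.open_target.mem_nhds hyt)
      have h2 : ContMDiffAt 𝓘(ℝ, E) 𝓘(ℝ, E) ω ψ' (ψ.symm (T u0)) := by
        rw [hsy]; exact hψ'.1.contMDiffAt (ψ'.open_source.mem_nhds (hs' y hy'))
      have h3 : ContDiffAt ℝ ω (fun u => ψ' (ψ.symm u)) (T u0) := (h2.comp _ h1).contDiffAt
      have h4 : ContDiffAt ℝ ω (fun v => ψ' (ψ.symm (T v))) u0 :=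
        h3.comp u0 T.contDiff.contDiffAt
      have h5 : ContDiffAt ℝ ω (fun v => T.symm (ψ' (ψ.symm (T v)))) u0 :=
        T.symm.contDiff.contDiffAt.comp u0 h4
      have h6 : ContDiffAt ℝ ω (fun v => T.symm (ψ' (ψ.symm (T v))) k) u0 := contDiffAt_pi.1 h5 k
      exact h6.analyticAt
    · filter_upwards [hcont.eventually hbx, hcont.eventually hbx', htg] with v h1 h2 h3
      have h4 := (hl' _ _ h2 hy').1
      have h5 := (hl _ _ h1 hy).2
      rw [ψ.right_inv h3] at h5
      have h6 : ‖T v - ψ y‖ ≤ d * ‖v - u0‖ := by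
        rw [← hTu, ← map_sub]; exact norm_toLp_le _
      have h7 := abs_coord_le (ψ' (ψ.symm (T v)) - ψ' y) k
      have h8 : Phi ψ ψ' k v - Phi ψ ψ' k u0 = (ψ' (ψ.symm (T v)) - ψ' y) k := by
        show ψ' (ψ.symm (T v)) k - ψ' (ψ.symm (T u0)) k = _
        rw [hsy]; rfl
      rw [h8, Real.norm_eq_abs]
      linarith
  choose ρ hρ hρ2 using hk
  obtain ⟨ρ0, h0, h00⟩ : ∃ ρ0 : ℝ, 0 < ρ0 ∧ ∀ k, ρ0 ≤ ρ k := by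
    have hev : ∀ᶠ t in nhdsWithin (0:ℝ) (Set.Ioi 0), 0 < t ∧ ∀ k, t ≤ ρ k := by
      refine Filter.Eventually.and self_mem_nhdsWithin (Filter.eventually_all.2 fun k => ?_)
      exact nhdsWithin_le_nhds (Iic_mem_nhds (hρ k))
    exact hev.exists
  obtain ⟨ρ1, h1, h11⟩ := Metric.eventually_nhds_iff.1 hbx
  refine ⟨min (ρ0 / 2) ρ1, by positivity, fun a ha τ hτ hτρ k => ?_⟩
  have hax : dist x a < r := h11 (by rw [dist_comm]; exact ha.trans_le (min_le_right _ _))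
  have h2 := (hl _ _ hax hy).1
  have h3 : dist a y < ρ0 / 2 := by rw [dist_comm]; exact ha.trans_le (min_le_left _ _)
  have h4 := hρ2 k (fun l => ψ a l) (fun i => by
    have h5 := abs_coord_le (ψ a - ψ y) i
    have h6 : (ψ a - ψ y) i = ψ a i - u0 i := rfl
    rw [h6] at h5
    have := h00 k
    linarith) τ hτ (by have := min_le_left (ρ0 / 2) ρ1; have := h00 k; linarith)
  have h5 : Phi ψ ψ' k (fun l => ψ a l) = ψ' a k := by
    show ψ' (ψ.symm (ψ a)) k = _
    rw [ψ.left_inv (hs a hax)]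
  rw [h5] at h4
  exact h4

theorem good_alpha {ψ : OpenPartialHomeomorph M (EuclideanSpace ℝ (Fin d))}
    {x : M} {r : ℝ} (hs : ∀ y, dist x y < r → y ∈ ψ.source)
    (hl : ∀ y z, dist x y < r → dist x z < r → ‖ψ y - ψ z‖ ≤ 2 * dist y z ∧ dist y z ≤ 2 * ‖ψ y - ψ z‖)
    {y : M} (hy : dist x y < r) :
    ∃ ρ : ℝ, 0 < ρ ∧ (∀ z, dist y z < ρ → dist x z < r) ∧
      ∀ a, dist y a < ρ → ∀ u, ‖u - ψ a‖ < 10 * ρ → u ∈ ψ.target ∧ dist x (ψ.symm u) < r := by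
  have hyt : ψ y ∈ ψ.target := ψ.map_source (hs y hy)
  have hsy : ψ.symm (ψ y) = y := ψ.left_inv (hs y hy)
  have hbx : ∀ᶠ z in nhds y, dist x z < r :=
    (continuous_const.dist continuous_id).continuousAt.eventually_lt_const hy
  have hcont : Filter.Tendsto ψ.symm (nhds (ψ y)) (nhds y) := by
    have h1 := (ψ.continuousAt_symm hyt).tendsto
    rwa [hsy] at h1
  obtain ⟨ρ1, h1, h11⟩ := Metric.eventually_nhds_iff.1 hbx
  obtain ⟨ρ2, h2, h22⟩ := Metric.eventually_nhds_iff.1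
    ((hcont.eventually hbx).and (ψ.open_target.mem_nhds hyt))
  have hA : ∀ z, dist y z < min ρ1 (ρ2 / 12) → dist x z < r := fun z hz =>
    h11 (by rw [dist_comm]; exact hz.trans_le (min_le_left _ _))
  refine ⟨min ρ1 (ρ2 / 12), by positivity, hA, fun a ha u hu => ?_⟩
  have h3 := (hl _ _ (hA a ha) hy).1
  have h4 : dist a y < ρ2 / 12 := by rw [dist_comm]; exact ha.trans_le (min_le_right _ _)
  have h5 : dist u (ψ y) < ρ2 := by
    rw [dist_eq_norm]
    have := norm_sub_le_norm_sub_add_norm_sub u (ψ a) (ψ y)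
    have := min_le_right ρ1 (ρ2 / 12)
    linarith
  exact (h22 h5).symm

/-- scale at which everything is controlled -/
def Good (X : ℕ → M) (ψ : ℕ → OpenPartialHomeomorph M (EuclideanSpace ℝ (Fin d))) (r : ℕ → ℝ)
    (j : M → ℕ) (y : M) (t : ℝ) : Prop :=
  t ≤ 1 ∧ ∀ a, dist y a < t →
    (∀ z, dist y z < t → dist (X (j a)) z < r (j a)) ∧
    (∀ u, ‖u - ψ (j a) a‖ < 10 * t → u ∈ (ψ (j a)).target ∧ dist (X (j a)) ((ψ (j a)).symm u) < r (j a)) ∧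
    ∀ c, dist y c < t → ∀ τ, 0 < τ → τ ≤ t → ∀ k : Fin d,
      Rep 4 (4 * d * (4 * d) + 8) (fun v : Fin d → ℝ =>
        (Phi (ψ (j a)) (ψ (j c)) k (fun l => ψ (j a) a l + τ * v l) - ψ (j c) a k) / τ)

theorem exists_good {X : ℕ → M} {ψ : ℕ → OpenPartialHomeomorph M (EuclideanSpace ℝ (Fin d))} {r : ℕ → ℝ}
    {j : M → ℕ} (hψ : ∀ n, AnChart (ψ n)) (hr : ∀ n, 0 < r n)
    (hs : ∀ n y, dist (X n) y < r n → y ∈ (ψ n).source)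
    (hl : ∀ n y z, dist (X n) y < r n → dist (X n) z < r n →
      ‖ψ n y - ψ n z‖ ≤ 2 * dist y z ∧ dist y z ≤ 2 * ‖ψ n y - ψ n z‖)
    (hj : ∀ y, dist (X (j y)) y < r (j y) / 4)
    (hj2 : ∀ y n, dist (X n) y < r n / 4 → j y ≤ n) (y : M) :
    ∃ t, 0 < t ∧ Good X ψ r j y t := by
  have hA : ∀ n, ∃ ρ : ℝ, 0 < ρ ∧ (dist (X n) y < r n → (∀ z, dist y z < ρ → dist (X n) z < r n) ∧
      ∀ a, dist y a < ρ → ∀ u, ‖u - ψ n a‖ < 10 * ρ → u ∈ (ψ n).target ∧ dist (X n) ((ψ n).symm u) < r n) := by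
    intro n
    by_cases hn : dist (X n) y < r n
    · obtain ⟨ρ, h1, h2⟩ := good_alpha (hs n) (hl n) hn
      exact ⟨ρ, h1, fun _ => h2⟩
    · exact ⟨1, one_pos, fun h => absurd h hn⟩
  have hB : ∀ n n', ∃ ρ : ℝ, 0 < ρ ∧ (dist (X n) y < r n → dist (X n') y < r n' →
      ∀ a, dist y a < ρ → ∀ τ, 0 < τ → τ ≤ ρ → ∀ k : Fin d,
      Rep 4 (4 * d * (4 * d) + 8) (fun v : Fin d → ℝ =>
        (Phi (ψ n) (ψ n') k (fun l => ψ n a l + τ * v l) - ψ n' a k) / τ)) := by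
    intro n n'
    by_cases hn : dist (X n) y < r n
    · by_cases hn' : dist (X n') y < r n'
      · obtain ⟨ρ, h1, h2⟩ := good_beta (hψ n) (hψ n') (hs n) (hs n') (hl n) (hl n') hn hn'
        exact ⟨ρ, h1, fun _ _ => h2⟩
      · exact ⟨1, one_pos, fun _ h => absurd h hn'⟩
    · exact ⟨1, one_pos, fun h => absurd h hn⟩
  choose ρA hA1 hA2 using hA
  choose ρB hB1 hB2 using hB
  have hev : ∀ᶠ t in nhdsWithin (0:ℝ) (Set.Ioi 0), 0 < t ∧ t < 1 ∧ t < r (j y) / 4 - dist (X (j y)) y ∧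
      (∀ n ∈ Finset.range (j y + 1), t < ρA n ∧ t < r n / 2 ∧ ∀ n' ∈ Finset.range (j y + 1), t < ρB n n') := by
    have hlt : ∀ {s : ℝ}, 0 < s → ∀ᶠ t in nhdsWithin (0:ℝ) (Set.Ioi 0), t < s := fun {s} h =>
      nhdsWithin_le_nhds (Iio_mem_nhds h)
    refine Filter.Eventually.and self_mem_nhdsWithin ((hlt one_pos).and ((hlt (by have := hj y; linarith)).and ?_))
    refine (Filter.eventually_all_finset _).2 fun n _ => ?_
    exact (hlt (hA1 n)).and ((hlt (by have := hr n; linarith)).and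
      ((Filter.eventually_all_finset _).2 fun n' _ => hlt (hB1 n n')))
  obtain ⟨t, ht0, ht1, ht2, ht3⟩ := hev.exists
  have hjn : ∀ a, dist y a < t → j a ∈ Finset.range (j y + 1) ∧ dist (X (j a)) y < r (j a) := by
    intro a ha
    have h1 : j a ∈ Finset.range (j y + 1) := by
      rw [Finset.mem_range]
      refine Nat.lt_succ_of_le (hj2 a _ ?_)
      have := dist_triangle (X (j y)) y a
      linarith
    refine ⟨h1, ?_⟩
    have := (ht3 _ h1).2.1
    have := hj a
    have := dist_triangle_right (X (j a)) y a
    have := hr (j a)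
    linarith
  refine ⟨t, ht0, ht1.le, fun a ha => ?_⟩
  obtain ⟨h1, h2⟩ := hjn a ha
  have h3 := ht3 _ h1
  refine ⟨fun z hz => (hA2 _ h2).1 z (hz.trans h3.1), fun u hu =>
    (hA2 _ h2).2 a (ha.trans h3.1) u (hu.trans (by linarith [h3.1])), fun c hc τ hτ hτt k => ?_⟩
  obtain ⟨h4, h5⟩ := hjn c hc
  have h6 := h3.2.2 _ h4
  exact hB2 _ _ h2 h5 a (ha.trans h6) τ hτ (hτt.trans h6.le) k

end

end GW

end

section

namespace GW

theorem sum_div_sq {d : ℕ} (u : EuclideanSpace ℝ (Fin d)) (τ : ℝ) :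
    ∑ l, (u l / τ) ^ 2 = ‖u‖ ^ 2 / τ ^ 2 := by
  rw [EuclideanSpace.norm_sq_eq, Finset.sum_div]
  exact Finset.sum_congr rfl fun l _ => by rw [div_pow, Real.norm_eq_abs, sq_abs]

/-- bounded geometry atlas, with actual charts -/
structure GeoX (d : ℕ) (M ι : Type) [TopologicalSpace M] [ChartedSpace (EuclideanSpace ℝ (Fin d)) M]
    extends Geo d M ι where
  K : ι → OpenPartialHomeomorph M (EuclideanSpace ℝ (Fin d))
  an : ∀ a, AnChart (K a)
  K_eq : ∀ a x, K a x = WithLp.toLp 2 (k a x)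
  src : ∀ a, B a ⊆ (K a).source
  tgt : ∀ a u, ‖u‖ ≤ 2 → u ∈ (K a).target
  inB : ∀ a u, ‖u‖ < 2 → (K a).symm u ∈ B a
  op : ∀ a, IsOpen (B a)
  symm_nbr : ∀ {a c}, c ∈ Nbr a → a ∈ Nbr c

set_option maxHeartbeats 1000000 in
theorem exists_geo_aux {d : ℕ} {M : Type} [MetricSpace M] [SecondCountableTopology M]
    [ChartedSpace (EuclideanSpace ℝ (Fin d)) M]
    (hch : ∀ x0 : M, ∃ (ψ : OpenPartialHomeomorph M (EuclideanSpace ℝ (Fin d))) (r : ℝ),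
        AnChart ψ ∧ 0 < r ∧ (∀ y, dist x0 y < r → y ∈ ψ.source) ∧
        ∀ y z, dist x0 y < r → dist x0 z < r →
          ‖ψ y - ψ z‖ ≤ 2 * dist y z ∧ dist y z ≤ 2 * ‖ψ y - ψ z‖) :
    ∃ (ι : Type) (_ : Countable ι), Nonempty (GeoX d M ι) := by
  classical
  rcases isEmpty_or_nonempty M with hM | hM
  · refine ⟨Empty, inferInstance, ⟨{
      k := fun a => a.elim, B := fun a => a.elim, Nbr := fun a => a.elim, φ := fun a => a.elim,
      m := 0, S := 4, hS := le_rfl, card := fun a => a.elim, mem_nbr := fun {a} => a.elim,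
      lt := fun {a} => a.elim, surj := fun a => a.elim, rep := fun {a} => a.elim,
      trans := fun {a} => a.elim, inside := fun {a} => a.elim, cover := fun x => hM.elim x,
      K := fun a => a.elim, an := fun a => a.elim, K_eq := fun a => a.elim, src := fun a => a.elim,
      tgt := fun a => a.elim, inB := fun a => a.elim, op := fun a => a.elim,
      symm_nbr := fun {a} => a.elim }⟩⟩
  choose ψ' r' hψ' hr' hs' hl' using hch
  obtain ⟨s, hsc, hsu⟩ := TopologicalSpace.countable_cover_nhds (f := fun x => Metric.ball x (r' x / 4))
    (fun x => Metric.ball_mem_nhds x (by have := hr' x; positivity))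
  have hsne : s.Nonempty := by
    by_contra hcon
    rw [Set.not_nonempty_iff_eq_empty] at hcon
    rw [hcon] at hsu
    simp only [Set.mem_empty_iff_false, Set.iUnion_of_empty, Set.iUnion_empty] at hsu
    exact Set.empty_ne_univ hsu
  obtain ⟨X, hX⟩ := hsc.exists_eq_range hsne
  have hex : ∀ y, ∃ n, dist (X n) y < r' (X n) / 4 := by
    intro y
    have : y ∈ ⋃ x ∈ s, Metric.ball x (r' x / 4) := by rw [hsu]; trivial
    simp only [Set.mem_iUnion] at this
    obtain ⟨x, hx, hy⟩ := this
    rw [hX] at hx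
    obtain ⟨n, rfl⟩ := hx
    exact ⟨n, by rwa [dist_comm]⟩
  let ψ : ℕ → OpenPartialHomeomorph M (EuclideanSpace ℝ (Fin d)) := fun n => ψ' (X n)
  let r : ℕ → ℝ := fun n => r' (X n)
  have hψ : ∀ n, AnChart (ψ n) := fun n => hψ' (X n)
  have hr : ∀ n, 0 < r n := fun n => hr' (X n)
  have hs : ∀ n y, dist (X n) y < r n → y ∈ (ψ n).source := fun n => hs' (X n)
  have hl : ∀ n y z, dist (X n) y < r n → dist (X n) z < r n →
      ‖ψ n y - ψ n z‖ ≤ 2 * dist y z ∧ dist y z ≤ 2 * ‖ψ n y - ψ n z‖ := fun n => hl' (X n)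
  let j : M → ℕ := fun y => Nat.find (hex y)
  have hj : ∀ y, dist (X (j y)) y < r (j y) / 4 := fun y => Nat.find_spec (hex y)
  have hj2 : ∀ y n, dist (X n) y < r n / 4 → j y ≤ n := fun y n h => Nat.find_min' (hex y) h
  obtain ⟨τ, hτ, hτl, hτg⟩ := scale (Good X ψ r j) (exists_good hψ hr hs hl hj hj2)
    (fun y t h => h.1)
  obtain ⟨N, hN1, hN2⟩ := exists_net τ hτ
  obtain ⟨m, hm⟩ := packing d
  clear_value ψ r j
  have hV : ∀ a, dist (X (j a)) a < r (j a) := fun a => by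
    have := hj a; have := hr (j a); linarith
  have G1 : ∀ a c z, dist c a < 50 * τ a → dist z a < 50 * τ a → dist (X (j c)) z < r (j c) := by
    intro a c z hc hz
    obtain ⟨y, t, h1, h2⟩ := hτg a
    have := dist_triangle_right y c a
    have := dist_triangle_right y z a
    exact (h1.2 c (by linarith)).1 z (by linarith)
  have G2 : ∀ a u, ‖u - ψ (j a) a‖ < 100 * τ a →
      u ∈ (ψ (j a)).target ∧ dist (X (j a)) ((ψ (j a)).symm u) < r (j a) := by
    intro a u hu
    obtain ⟨y, t, h1, h2⟩ := hτg a
    have := hτ a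
    have := dist_nonneg (x := y) (y := a)
    exact (h1.2 a (by linarith)).2.1 u (by linarith)
  have G3 : ∀ a c, dist c a < 50 * τ a → ∀ k : Fin d,
      Rep 4 (4 * d * (4 * d) + 8) (fun v : Fin d → ℝ =>
        (Phi (ψ (j a)) (ψ (j c)) k (fun l => ψ (j a) a l + τ a * v l) - ψ (j c) a k) / τ a) := by
    intro a c hc
    obtain ⟨y, t, h1, h2⟩ := hτg a
    have := hτ a
    have := dist_nonneg (x := y) (y := a)
    have := dist_triangle_right y c a
    exact (h1.2 a (by linarith)).2.2 c (by linarith) (τ a) (hτ a) (by linarith)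
  let B : N → Set M := fun a => {x | dist (X (j a)) x < r (j a) ∧ ‖ψ (j a) x - ψ (j a) a‖ < 2 * τ a}
  have F1 : ∀ (a : N) x, x ∈ B a → dist x a < 4 * τ a := by
    intro a x hx
    have := (hl _ _ _ hx.1 (hV a)).2
    linarith [hx.2]
  let k : N → M → (Fin d → ℝ) := fun a x l => (ψ (j a) x - ψ (j a) a) l / τ a
  have hk2 : ∀ a x, ∑ l, k a x l ^ 2 = ‖ψ (j a) x - ψ (j a) a‖ ^ 2 / τ a ^ 2 := fun a x =>
    sum_div_sq _ _
  have hk4 : ∀ (a : N) x, ∑ l, k a x l ^ 2 < 4 ↔ ‖ψ (j a) x - ψ (j a) a‖ < 2 * τ a := by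
    intro a x
    have := hτ a
    rw [hk2, div_lt_iff₀ (by positivity), show (4:ℝ) * τ a ^ 2 = (2 * τ a) ^ 2 by ring]
    exact pow_lt_pow_iff_left₀ (norm_nonneg _) (by positivity) two_ne_zero
  have hnear : ∀ a c : M, dist a c < 10 * τ a → τ a < 2 * τ c ∧ τ c < 2 * τ a ∧ 9 / 10 * τ a ≤ τ c := by
    intro a c h
    have h1 := hτl a c
    have h2 := hτl c a
    have := hτ a
    have := hτ c
    rw [dist_comm] at h2
    exact ⟨by linarith, by linarith, by linarith⟩
  let Ns : N → Set N := fun a => {c | dist (a : M) c < 10 * τ a ∧ dist (a : M) c < 10 * τ c}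
  have hNs : ∀ a : N, ∃ h : (Ns a).Finite, h.toFinset.card ≤ m := by
    intro a
    have hta := hτ a
    have hVc : ∀ c ∈ Ns a, dist (X (j a)) (c : M) < r (j a) := by
      intro c hc
      refine G1 a a c (by simp [hta]) ?_
      rw [dist_comm]
      linarith [hc.1]
    refine hm (Ns a) (fun c => (τ a)⁻¹ • (ψ (j a) c - ψ (j a) a)) (fun c hc => ?_)
      (fun c hc c' hc' hcc => ?_)
    · rw [norm_smul, Real.norm_eq_abs, abs_of_pos (inv_pos.2 hta), inv_mul_le_iff₀ hta]
      have h1 := (hl _ _ _ (hVc c hc) (hV a)).1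
      rw [dist_comm] at h1
      linarith [hc.1]
    · rw [← smul_sub, sub_sub_sub_cancel_right, norm_smul, Real.norm_eq_abs,
        abs_of_pos (inv_pos.2 hta), le_inv_mul_iff₀ hta]
      have h1 := (hl _ _ _ (hVc c hc) (hVc c' hc')).2
      have h2 := hN1 c c.2 c' c'.2 (fun h => hcc (Subtype.ext h))
      have h3 : 9 / 10 * τ a ≤ min (τ c) (τ c') :=
        le_min (hnear _ _ hc.1).2.2 (hnear _ _ hc'.1).2.2
      linarith
  choose hNf hNc using hNs
  have hBop : ∀ a, IsOpen (B a) := by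
    intro a
    have h1 : IsOpen {x | dist (X (j a)) x < r (j a)} :=
      isOpen_lt (continuous_const.dist continuous_id) continuous_const
    have h2 : ContinuousOn (ψ (j a)) {x | dist (X (j a)) x < r (j a)} :=
      (ψ (j a)).continuousOn.mono (fun x hx => hs _ x hx)
    have h3 := h2.isOpen_inter_preimage h1 (Metric.isOpen_ball (x := ψ (j a) a) (ε := 2 * τ a))
    convert h3 using 1
    ext x
    simp only [B, Set.mem_ofPred_eq, Set.mem_inter_iff, Set.mem_preimage, Metric.mem_ball, dist_eq_norm]
  let A : N → EuclideanSpace ℝ (Fin d) ≃ₜ EuclideanSpace ℝ (Fin d) := fun a =>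
    (Homeomorph.subRight (ψ (j a) a)).trans (Homeomorph.smulOfNeZero (τ a)⁻¹ (inv_ne_zero (hτ a).ne'))
  have hA : ∀ a u, A a u = (τ a)⁻¹ • (u - ψ (j a) a) := fun a u => rfl
  have hAs : ∀ a u, (A a).symm u = τ a • u + ψ (j a) a := by
    intro a u
    rw [Homeomorph.symm_apply_eq, hA, add_sub_cancel_right, inv_smul_smul₀ (hτ a).ne']
  let K : N → OpenPartialHomeomorph M (EuclideanSpace ℝ (Fin d)) := fun a =>
    (ψ (j a)).transHomeomorph (A a)
  have hKs : ∀ a u, (K a).symm u = (ψ (j a)).symm (τ a • u + ψ (j a) a) := by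
    intro a u
    show (ψ (j a)).symm ((A a).symm u) = _
    rw [hAs]
  have hKt : ∀ a u, u ∈ (K a).target ↔ τ a • u + ψ (j a) a ∈ (ψ (j a)).target := by
    intro a u
    show (A a).symm u ∈ (ψ (j a)).target ↔ _
    rw [hAs]
  have hinB : ∀ (a : N) u, ‖u‖ < 2 → (ψ (j a)).symm (τ a • u + ψ (j a) a) ∈ B a := by
    intro a u hu
    have hta := hτ a
    have h0 : ‖τ a • u + ψ (j a) a - ψ (j a) a‖ < 2 * τ a := by
      rw [add_sub_cancel_right, norm_smul, Real.norm_eq_abs, abs_of_pos hta]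
      nlinarith
    have h1 := G2 a (τ a • u + ψ (j a) a) (by linarith)
    refine ⟨h1.2, ?_⟩
    rw [(ψ (j a)).right_inv h1.1]
    exact h0
  refine ⟨N, ?_, ⟨{
    k := k
    B := B
    Nbr := fun a => (hNf a).toFinset
    φ := fun a c v l => (Phi (ψ (j a)) (ψ (j c)) l (fun i => ψ (j a) a i + τ a * v i) - ψ (j c) c l) / τ c
    m := m
    S := 2 * (4 * d * (4 * d) + 8) + 20
    hS := by nlinarith [(Nat.cast_nonneg d : (0:ℝ) ≤ d)]
    card := hNc
    mem_nbr := ?_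
    lt := fun {a x} hx => (hk4 a x).2 hx.2
    surj := ?_
    rep := ?_
    trans := ?_
    inside := ?_
    cover := ?_
    K := K
    an := ?_
    K_eq := ?_
    src := fun a x hx => hs _ _ hx.1
    tgt := ?_
    inB := fun a u hu => by rw [hKs]; exact hinB a u hu
    op := hBop
    symm_nbr := ?_ }⟩⟩
  · have hdis : (N : Set M).PairwiseDisjoint (fun a => Metric.ball a (τ a / 20)) := by
      intro a ha c hc hac
      rw [Function.onFun, Set.disjoint_left]
      intro z hz hz'
      rw [Metric.mem_ball] at hz hz'
      have h1 := hN1 a ha c hc hac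
      have h2 := dist_triangle_left a c z
      have h3 := hτl a c
      have h4 := hτl c a
      rw [dist_comm] at h4
      rcases min_choice (τ a) (τ c) with h5 | h5 <;> rw [h5] at h1 <;> linarith [hτ a, hτ c]
    exact (hdis.countable_of_isOpen (fun a _ => Metric.isOpen_ball)
      (fun a _ => ⟨a, Metric.mem_ball_self (by have := hτ a; positivity)⟩)).to_subtype
  · intro a c x hxa hxc
    rw [Set.Finite.mem_toFinset]
    have h1 := F1 a x hxa
    have h2 := F1 c x hxc
    have h3 := dist_triangle_left (a : M) c x
    have h4 := hτl a c
    have h5 := hτl c a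
    rw [dist_comm] at h5
    exact ⟨by linarith, by linarith⟩
  · intro a y hy
    have hy2 : ‖(WithLp.toLp 2 y : EuclideanSpace ℝ (Fin d))‖ < 2 := by
      have : ‖(WithLp.toLp 2 y : EuclideanSpace ℝ (Fin d))‖ ^ 2 < 2 ^ 2 := by
        rw [EuclideanSpace.norm_sq_eq]
        simp only [Real.norm_eq_abs, sq_abs]
        linarith
      exact lt_of_pow_lt_pow_left₀ 2 (by norm_num) this
    refine ⟨_, hinB a _ hy2, ?_⟩
    have hta := hτ a
    have h1 := G2 a (τ a • WithLp.toLp 2 y + ψ (j a) a) (by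
      rw [add_sub_cancel_right, norm_smul, Real.norm_eq_abs, abs_of_pos hta]
      nlinarith)
    ext l
    simp only [k]
    rw [(ψ (j a)).right_inv h1.1, add_sub_cancel_right]
    show τ a * y l / τ a = y l
    field_simp
  · intro a c hc l
    rw [Set.Finite.mem_toFinset] at hc
    have hta := hτ a
    have htc := hτ c
    have h4 : (0:ℝ) ≤ 4 := by norm_num
    have hd : dist (c : M) a < 50 * τ a := by rw [dist_comm]; linarith [hc.1]
    have h1 := ((G3 a c hd l).smul h4 (τ a / τ c)).add h4
      (Rep.const ((ψ (j c) a - ψ (j c) c) l / τ c))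
    refine (h1.mono ?_).congr fun v _ => ?_
    · have e1 : |τ (a:M) / τ c| ≤ 2 := by
        rw [abs_of_pos (by positivity), div_le_iff₀ htc]
        exact (hnear _ _ hc.1).1.le
      have e2 : |(ψ (j c) a - ψ (j c) c) l / τ c| ≤ 20 := by
        rw [abs_div, abs_of_pos htc, div_le_iff₀ htc]
        have e3 := abs_coord_le (ψ (j c) a - ψ (j c) c) l
        have e4 := (hl _ _ _ (G1 a c a hd (by simp [hta])) (hV c)).1
        linarith [hc.2]
      have e5 : (0:ℝ) ≤ 4 * d * (4 * d) + 8 := by positivity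
      exact add_le_add (mul_le_mul_of_nonneg_right e1 e5) e2
    · show _ = τ (a:M) / τ c * ((_ - ψ (j c) a l) / τ a) + (ψ (j c) a l - ψ (j c) c l) / τ c
      field_simp
      ring
  · intro a c x hx hc
    rw [Set.Finite.mem_toFinset] at hc
    have hta := hτ a
    ext l
    have e1 : (WithLp.toLp 2 (fun i => ψ (j a) a i + τ a * k a x i) : EuclideanSpace ℝ (Fin d))
        = ψ (j a) x := by
      ext i
      show ψ (j a) a i + τ a * ((ψ (j a) x i - ψ (j a) a i) / τ a) = ψ (j a) x i
      field_simp
      ring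
    show (Phi _ _ l (fun i => ψ (j a) a i + τ a * k a x i) - _) / _ = (ψ (j c) x l - ψ (j c) c l) / τ c
    rw [Phi, e1, (ψ (j a)).left_inv (hs _ _ hx.1)]
  · intro a c x hx hc hlt
    rw [Set.Finite.mem_toFinset] at hc
    have hta := hτ a
    have hd : dist (c : M) a < 50 * τ a := by rw [dist_comm]; linarith [hc.1]
    exact ⟨G1 a c x hd (by linarith [F1 a x hx]), (hk4 c x).1 hlt⟩
  · intro x
    obtain ⟨a, ha, hax⟩ := hN2 x
    have hta := hτ a
    have h1 : dist (X (j a)) x < r (j a) := G1 a a x (by simp [hta]) (by rw [dist_comm]; linarith)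
    have h2 := (hl _ _ _ h1 (hV a)).1
    rw [dist_comm] at h2
    refine ⟨⟨a, ha⟩, ⟨h1, by show ‖_‖ < 2 * τ a; linarith⟩, ?_⟩
    rw [hk2]
    show ‖ψ (j a) x - ψ (j a) a‖ ^ 2 / τ a ^ 2 ≤ 1 / 4
    rw [div_le_iff₀ (by positivity)]
    have h3 : ‖ψ (j a) x - ψ (j a) a‖ ≤ τ a / 2 := by linarith
    nlinarith [norm_nonneg (ψ (j a) x - ψ (j a) a)]
  · intro a
    constructor
    · have h1 : ContDiff ℝ ω (fun u : EuclideanSpace ℝ (Fin d) => (τ a)⁻¹ • (u - ψ (j a) a)) := by fun_prop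
      exact h1.contMDiff.comp_contMDiffOn (hψ (j a)).1
    · have h1 : ContDiff ℝ ω (fun u : EuclideanSpace ℝ (Fin d) => τ a • u + ψ (j a) a) := by fun_prop
      have h2 := (hψ (j a)).2.comp h1.contMDiff.contMDiffOn (s := (K a).target)
        (fun u hu => (hKt a u).1 hu)
      exact h2.congr fun u hu => hKs a u
  · intro a x
    ext l
    show (τ a)⁻¹ * (ψ (j a) x l - ψ (j a) a l) = (ψ (j a) x l - ψ (j a) a l) / τ a
    rw [inv_mul_eq_div]
  · intro a u hu
    rw [hKt]
    have hta := hτ a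
    refine (G2 a _ ?_).1
    rw [add_sub_cancel_right, norm_smul, Real.norm_eq_abs, abs_of_pos hta]
    nlinarith
  · intro a c hc
    simp only [Set.Finite.mem_toFinset, Ns, Set.mem_ofPred_eq] at hc ⊢
    rw [dist_comm]
    exact ⟨hc.2, hc.1⟩

theorem exists_geo (d : ℕ) (M : Type) [TopologicalSpace M] [T2Space M] [SecondCountableTopology M]
    [SigmaCompactSpace M]
    [ChartedSpace (EuclideanSpace ℝ (Fin d)) M]
    [IsManifold 𝓘(ℝ, EuclideanSpace ℝ (Fin d)) ω M] :
    ∃ (ι : Type) (_ : Countable ι), Nonempty (GeoX d M ι) := by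
  obtain ⟨H, _, J, hJ, h⟩ := exists_metric d M
  letI : MetricSpace M := hJ.comapMetricSpace J
  exact exists_geo_aux h

end GW

end

section

namespace GW

theorem mon_split {κ κ' : Type} (w : List (κ ⊕ κ')) : ∃ (w1 : List κ) (w2 : List κ'),
    w.length = w1.length + w2.length ∧
    ∀ (u : κ → ℝ) (y : κ' → ℝ), mon w (Sum.elim u y) = mon w1 u * mon w2 y := by
  induction w with
  | nil => exact ⟨[], [], rfl, fun u y => by simp [mon_nil]⟩
  | cons i w ih =>
    obtain ⟨w1, w2, h1, h2⟩ := ih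
    cases i with
    | inl i =>
      refine ⟨i :: w1, w2, by simp [h1]; ring, fun u y => ?_⟩
      rw [mon_cons, mon_cons, h2, Sum.elim_inl]; ring
    | inr i =>
      refine ⟨w1, i :: w2, by simp [h1]; ring, fun u y => ?_⟩
      rw [mon_cons, mon_cons, h2, Sum.elim_inr]; ring

theorem measurable_mon {A κ : Type} [MeasurableSpace A] {U : A → κ → ℝ}
    (hU : ∀ i, Measurable fun a => U a i) (w : List κ) : Measurable fun a => mon w (U a) := by
  induction w with
  | nil => simp only [mon_nil]; exact measurable_const
  | cons i w ih => simp only [mon_cons]; exact (hU i).mul ih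

open MeasureTheory in
theorem rep_integral {A κ κ' : Type} [MeasurableSpace A] (μ : Measure A) [IsFiniteMeasure μ]
    {R B : ℝ} (hR : 0 ≤ R) {F : (κ ⊕ κ' → ℝ) → ℝ} (hF : Rep R B F) {U : A → κ → ℝ}
    (hU : ∀ i, Measurable fun a => U a i) (hUR : ∀ a i, |U a i| ≤ R) :
    Rep R (B * μ.real Set.univ) (fun y => ∫ a, F (Sum.elim (U a) y) ∂μ) := by
  obtain ⟨J, hJ, c, w, h1, h2, h3⟩ := hF
  choose w1 w2 hw hm using fun j => mon_split (w j)
  let I : J → ℝ := fun j => ∫ a, mon (w1 j) (U a) ∂μ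
  have hmb : ∀ j a, ‖mon (w1 j) (U a)‖ ≤ R ^ (w1 j).length := fun j a => abs_mon_le _ _ (hUR a)
  have hI : ∀ j, |I j| ≤ R ^ (w1 j).length * μ.real Set.univ := fun j =>
    norm_integral_le_of_norm_le_const (Filter.Eventually.of_forall (hmb j))
  have hμ : 0 ≤ μ.real Set.univ := measureReal_nonneg
  have hle : ∀ j, |c j * I j| * R ^ (w2 j).length ≤ |c j| * R ^ (w j).length * μ.real Set.univ := by
    intro j
    rw [abs_mul, hw, pow_add]
    have := mul_le_mul_of_nonneg_right (mul_le_mul_of_nonneg_left (hI j) (abs_nonneg (c j)))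
      (pow_nonneg hR (w2 j).length)
    linarith
  have hs := h1.mul_right (μ.real Set.univ)
  have hs2 : Summable fun j => |c j * I j| * R ^ (w2 j).length :=
    Summable.of_nonneg_of_le (fun j => by positivity) hle hs
  refine ⟨J, hJ, fun j => c j * I j, w2, hs2, ?_, fun y hy => ?_⟩
  · refine (hs2.tsum_le_tsum hle hs).trans ?_
    rw [tsum_mul_right]
    exact mul_le_mul_of_nonneg_right h2 hμ
  · have e1 : ∀ a, F (Sum.elim (U a) y) = ∑' j, c j * (mon (w1 j) (U a) * mon (w2 j) y) := by
      intro a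
      rw [h3 _ (by rintro (i | i); exacts [hUR a i, hy i])]
      exact tsum_congr fun j => by rw [hm]
    simp only [e1]
    have hb : ∀ j a, ‖c j * (mon (w1 j) (U a) * mon (w2 j) y)‖ ≤ |c j| * R ^ (w j).length := by
      intro j a
      rw [norm_mul, norm_mul, hw, pow_add]
      refine mul_le_mul_of_nonneg_left ?_ (abs_nonneg _)
      exact mul_le_mul (hmb j a) (abs_mon_le _ _ hy) (abs_nonneg _) (pow_nonneg hR _)
    have hmeas : ∀ j, Measurable fun a => c j * (mon (w1 j) (U a) * mon (w2 j) y) := fun j =>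
      ((measurable_mon hU (w1 j)).mul_const _).const_mul _
    have hIntg : ∀ j, Integrable (fun a => c j * (mon (w1 j) (U a) * mon (w2 j) y)) μ := fun j =>
      (integrable_const (|c j| * R ^ (w j).length)).mono' (hmeas j).aestronglyMeasurable
        (Filter.Eventually.of_forall (hb j))
    rw [← integral_tsum_of_summable_integral_norm hIntg]
    · refine tsum_congr fun j => ?_
      rw [integral_const_mul, integral_mul_const]
      ring
    · refine Summable.of_nonneg_of_le (fun j => integral_nonneg fun a => norm_nonneg _) (fun j => ?_) hs
      have := norm_integral_le_of_norm_le_const (μ := μ) (f := fun a => ‖c j * (mon (w1 j) (U a) * mon (w2 j) y)‖)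
        (Filter.Eventually.of_forall (fun a => by rw [norm_norm]; exact hb j a))
      rwa [Real.norm_of_nonneg (integral_nonneg fun a => norm_nonneg _)] at this

end GW

end

section

namespace GW

open MeasureTheory

theorem avg_analytic {dG d : ℕ} {G M : Type} [TopologicalSpace G] [CompactSpace G]
    [ChartedSpace (EuclideanSpace ℝ (Fin dG)) G]
    [IsManifold 𝓘(ℝ, EuclideanSpace ℝ (Fin dG)) ω G]
    [TopologicalSpace M] [ChartedSpace (EuclideanSpace ℝ (Fin d)) M]
    [IsManifold 𝓘(ℝ, EuclideanSpace ℝ (Fin d)) ω M] [SMul G M]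
    (hact : ContMDiff (𝓘(ℝ, EuclideanSpace ℝ (Fin dG)).prod 𝓘(ℝ, EuclideanSpace ℝ (Fin d)))
      𝓘(ℝ, EuclideanSpace ℝ (Fin d)) ω (fun p : G × M => p.1 • p.2))
    [MeasurableSpace G] [BorelSpace G] (μ : Measure G) [IsFiniteMeasure μ]
    {f : M → ℝ} (hf : ContMDiff 𝓘(ℝ, EuclideanSpace ℝ (Fin d)) 𝓘(ℝ, ℝ) ω f) :
    ContMDiff 𝓘(ℝ, EuclideanSpace ℝ (Fin d)) 𝓘(ℝ, ℝ) ω (fun x => ∫ g, f (g • x) ∂μ) := by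
  classical
  intro x0
  let E := EuclideanSpace ℝ (Fin d)
  let EG := EuclideanSpace ℝ (Fin dG)
  let T : (Fin d → ℝ) ≃L[ℝ] E := (EuclideanSpace.equiv (Fin d) ℝ).symm
  let TG : (Fin dG → ℝ) ≃L[ℝ] EG := (EuclideanSpace.equiv (Fin dG) ℝ).symm
  let ψ := chartAt E x0
  let y0 : Fin d → ℝ := T.symm (ψ x0)
  have hTy : T y0 = ψ x0 := T.apply_symm_apply _
  have hx0 : x0 ∈ ψ.source := mem_chart_source E x0
  have hIntg : ∀ x, Integrable (fun g : G => f (g • x)) μ := by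
    intro x
    have : Continuous fun g : G => f (g • x) :=
      hf.continuous.comp (hact.continuous.comp (continuous_id.prodMk continuous_const))
    exact this.integrable_of_hasCompactSupport (HasCompactSupport.of_compactSpace _)
  let P : Set G → Prop := fun A => ∃ R B : ℝ, 0 < R ∧
    Rep R B (fun y => ∫ g in A, f (g • ψ.symm (T (y0 + y))) ∂μ)
  have key : ∃ s', MeasurableSet s' ∧ Set.univ ⊆ s' ∧ ∀ A, MeasurableSet A → A ⊆ s' → P A := by
    refine isCompact_univ.induction_on
      (p := fun s => ∃ s', MeasurableSet s' ∧ s ⊆ s' ∧ ∀ A, MeasurableSet A → A ⊆ s' → P A) ?_ ?_ ?_ ?_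
    · refine ⟨∅, MeasurableSet.empty, subset_rfl, fun A _ hA => ?_⟩
      rw [Set.subset_empty_iff] at hA
      subst hA
      exact ⟨1, |0|, one_pos, (Rep.const 0).congr fun y _ => by simp⟩
    · rintro s t hst ⟨s', h1, h2, h3⟩
      exact ⟨s', h1, hst.trans h2, h3⟩
    · rintro s t ⟨s', h1, h2, h3⟩ ⟨t', k1, k2, k3⟩
      refine ⟨s' ∪ t', h1.union k1, Set.union_subset_union h2 k2, fun A hA hAs => ?_⟩
      obtain ⟨R, B, hR, hRB⟩ := h3 (A ∩ s') (hA.inter h1) Set.inter_subset_right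
      obtain ⟨R', B', hR', hRB'⟩ := k3 (A \ s') (hA.diff h1) (fun a ha =>
        (hAs ha.1).resolve_left ha.2)
      have hm : 0 < min R R' := lt_min hR hR'
      refine ⟨min R R', _, hm, ((hRB.mono_radius hm.le (min_le_left _ _)).add hm.le
        (hRB'.mono_radius hm.le (min_le_right _ _))).congr fun y _ => ?_⟩
      exact (integral_inter_add_diff h1 (hIntg _).integrableOn).symm
    · intro g0 _
      let χ := chartAt EG g0
      let u0 : Fin dG → ℝ := TG.symm (χ g0)
      have hTu : TG u0 = χ g0 := TG.apply_symm_apply _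
      have hg0 : g0 ∈ χ.source := mem_chart_source EG g0
      let F : (Fin dG ⊕ Fin d → ℝ) → ℝ := fun v =>
        f (χ.symm (TG (u0 + fun i => v (Sum.inl i))) • ψ.symm (T (y0 + fun i => v (Sum.inr i))))
      have hF : AnalyticAt ℝ F 0 := by
        have a1 : ContDiff ℝ ω (fun v : Fin dG ⊕ Fin d → ℝ => TG (u0 + fun i => v (Sum.inl i))) := by
          refine TG.contDiff.comp (contDiff_const.add (contDiff_pi.2 fun i => contDiff_apply ℝ ℝ _))
        have a2 : ContDiff ℝ ω (fun v : Fin dG ⊕ Fin d → ℝ => T (y0 + fun i => v (Sum.inr i))) := by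
          refine T.contDiff.comp (contDiff_const.add (contDiff_pi.2 fun i => contDiff_apply ℝ ℝ _))
        have z1 : TG (u0 + fun i => (0 : Fin dG ⊕ Fin d → ℝ) (Sum.inl i)) = χ g0 := by
          rw [← hTu]; congr 1; ext i; simp
        have z2 : T (y0 + fun i => (0 : Fin dG ⊕ Fin d → ℝ) (Sum.inr i)) = ψ x0 := by
          rw [← hTy]; congr 1; ext i; simp
        have b1 : ContMDiffAt 𝓘(ℝ, EG) 𝓘(ℝ, EG) ω χ.symm
            (TG (u0 + fun i => (0 : Fin dG ⊕ Fin d → ℝ) (Sum.inl i))) := by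
          rw [z1]
          exact (contMDiffOn_chart_symm (I := 𝓘(ℝ, EG)) (n := ω) (x := g0)).contMDiffAt
            (χ.open_target.mem_nhds (χ.map_source hg0))
        have b2 : ContMDiffAt 𝓘(ℝ, E) 𝓘(ℝ, E) ω ψ.symm
            (T (y0 + fun i => (0 : Fin dG ⊕ Fin d → ℝ) (Sum.inr i))) := by
          rw [z2]
          exact (contMDiffOn_chart_symm (I := 𝓘(ℝ, E)) (n := ω) (x := x0)).contMDiffAt
            (ψ.open_target.mem_nhds (ψ.map_source hx0))
        have c1 := ContMDiffAt.comp (0 : Fin dG ⊕ Fin d → ℝ) b1 a1.contMDiff.contMDiffAt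
        have c2 := ContMDiffAt.comp (0 : Fin dG ⊕ Fin d → ℝ) b2 a2.contMDiff.contMDiffAt
        have c3 := ContMDiffAt.comp (0 : Fin dG ⊕ Fin d → ℝ) (hf.comp hact).contMDiffAt (c1.prodMk c2)
        exact c3.contDiffAt.analyticAt
      obtain ⟨p, hp⟩ := hF
      obtain ⟨R, B, hR, hB, hrep⟩ := fps_rep hp 0
      have hrep0 : Rep R B F := by
        refine ((hrep R hR.le le_rfl).mono (by simp)).congr fun v _ => ?_
        simp [FormalMultilinearSeries.partialSum]
      let W : Set G := χ.source ∩ χ ⁻¹' (TG.symm ⁻¹' {u | ∀ i, |u i - u0 i| < R})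
      have hWo : IsOpen W := by
        refine χ.isOpen_inter_preimage (IsOpen.preimage TG.symm.continuous ?_)
        have : {u : Fin dG → ℝ | ∀ i, |u i - u0 i| < R} = ⋂ i, {u | |u i - u0 i| < R} := by
          ext u; simp
        rw [this]
        exact isOpen_iInter_of_finite fun i => isOpen_lt
          (((continuous_apply i).sub continuous_const).abs) continuous_const
      refine ⟨W, mem_nhdsWithin_of_mem_nhds (hWo.mem_nhds ⟨hg0, fun i => ?_⟩), W, hWo.measurableSet, subset_rfl, ?_⟩
      · show |u0 i - u0 i| < R
        simpa using hR
      intro A hA hAW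
      let U : G → Fin dG → ℝ := fun a i => A.piecewise (fun a => TG.symm (χ a) i - u0 i) (fun _ => 0) a
      have hU : ∀ i, Measurable fun a => U a i := by
        intro i
        refine ContinuousOn.measurable_piecewise ?_ continuousOn_const hA
        have h1 : ContinuousOn χ A := χ.continuousOn.mono fun a ha => (hAW ha).1
        exact ((continuous_apply i).comp_continuousOn (TG.symm.continuous.comp_continuousOn h1)).sub
          continuousOn_const
      have hUR : ∀ a i, |U a i| ≤ R := by
        intro a i
        by_cases ha : a ∈ A
        · simp only [U, Set.piecewise_eq_of_mem _ _ _ ha]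
          exact ((hAW ha).2 i).le
        · simp only [U, Set.piecewise_eq_of_notMem _ _ _ ha, abs_zero]
          exact hR.le
      refine ⟨R, _, hR, (rep_integral (μ.restrict A) hR.le hrep0 hU hUR).congr fun y _ => ?_⟩
      refine setIntegral_congr_fun hA fun a ha => ?_
      simp only [F, Sum.elim_inl, Sum.elim_inr]
      have h1 : (u0 + fun i => U a i) = TG.symm (χ a) := by
        ext i
        simp only [U, Pi.add_apply, Set.piecewise_eq_of_mem _ _ _ ha]
        ring
      rw [h1, TG.apply_symm_apply, χ.left_inv (hAW ha).1]
  obtain ⟨s', h1, h2, h3⟩ := key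
  obtain ⟨R, B, hR, hrep⟩ := h3 _ h1 subset_rfl
  rw [Set.univ_subset_iff.1 h2] at hrep
  simp only [Measure.restrict_univ] at hrep
  have han := (hrep.analyticAt hR).contDiffAt (n := ω)
  have hloc : ContMDiffAt 𝓘(ℝ, E) 𝓘(ℝ, Fin d → ℝ) ω (fun x => T.symm (ψ x) - y0) x0 := by
    have b1 : ContMDiffAt 𝓘(ℝ, E) 𝓘(ℝ, E) ω ψ x0 :=
      (contMDiffOn_chart (I := 𝓘(ℝ, E)) (n := ω) (x := x0)).contMDiffAt (ψ.open_source.mem_nhds hx0)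
    have b2 : ContDiff ℝ ω (fun u : E => T.symm u - y0) := T.symm.contDiff.sub contDiff_const
    exact ContMDiffAt.comp x0 b2.contMDiff.contMDiffAt b1
  have hz : T.symm (ψ x0) - y0 = 0 := sub_self _
  rw [← hz] at han
  have hfin := ContMDiffAt.comp x0 han.contMDiffAt hloc
  refine hfin.congr_of_eventuallyEq ?_
  filter_upwards [ψ.open_source.mem_nhds hx0] with x hx
  simp only [Function.comp]
  rw [add_sub_cancel, T.apply_symm_apply, ψ.left_inv hx]

end GW

end

section

namespace GW

open MeasureTheory

theorem exists_average {dG d : ℕ} {G M : Type} [Group G] [TopologicalSpace G] [IsTopologicalGroup G]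
    [CompactSpace G]
    [ChartedSpace (EuclideanSpace ℝ (Fin dG)) G]
    [IsManifold 𝓘(ℝ, EuclideanSpace ℝ (Fin dG)) ω G]
    [TopologicalSpace M] [ChartedSpace (EuclideanSpace ℝ (Fin d)) M]
    [IsManifold 𝓘(ℝ, EuclideanSpace ℝ (Fin d)) ω M] [MulAction G M]
    (hact : ContMDiff (𝓘(ℝ, EuclideanSpace ℝ (Fin dG)).prod 𝓘(ℝ, EuclideanSpace ℝ (Fin d)))
      𝓘(ℝ, EuclideanSpace ℝ (Fin d)) ω (fun p : G × M => p.1 • p.2)) :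
    ∃ Av : (M → ℝ) → (M → ℝ),
      (∀ f, ContMDiff 𝓘(ℝ, EuclideanSpace ℝ (Fin d)) 𝓘(ℝ, ℝ) ω f →
        ContMDiff 𝓘(ℝ, EuclideanSpace ℝ (Fin d)) 𝓘(ℝ, ℝ) ω (Av f)) ∧
      (∀ f, ∀ (g : G) x, Av f (g • x) = Av f x) ∧
      (∀ f, Continuous f → ∀ a x, (∀ g : G, a ≤ f (g • x)) → a ≤ Av f x) ∧
      (∀ f, Continuous f → ∀ a x, (∀ g : G, f (g • x) ≤ a) → Av f x ≤ a) ∧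
      (∀ f h, Continuous f → Continuous h → ∀ c x,
        Av (fun x => f x + c * h x) x = Av f x + c * Av h x) := by
  letI : MeasurableSpace G := borel G
  haveI : BorelSpace G := ⟨rfl⟩
  let ν : Measure G := (Measure.haarMeasure (⊤ : TopologicalSpace.PositiveCompacts G)).inv
  have hν1 : ν Set.univ = 1 := by
    have h0 := Measure.haarMeasure_self (K₀ := (⊤ : TopologicalSpace.PositiveCompacts G))
    simp only [ν, Measure.inv_apply, Set.inv_univ]
    simpa using h0
  haveI : IsProbabilityMeasure ν := ⟨hν1⟩
  haveI : ν.IsMulRightInvariant := inferInstanceAs (Measure.IsMulRightInvariant (Measure.inv _))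
  have hc : ∀ f : M → ℝ, Continuous f → ∀ x, Continuous fun g : G => f (g • x) := fun f hf x =>
      hf.comp (hact.continuous.comp (continuous_id.prodMk continuous_const))
  have hIntg : ∀ f : M → ℝ, Continuous f → ∀ x, Integrable (fun g : G => f (g • x)) ν := by
    intro f hf x
    exact (hc f hf x).integrable_of_hasCompactSupport (HasCompactSupport.of_compactSpace _)
  refine ⟨fun f x => ∫ g, f (g • x) ∂ν, fun f hf => avg_analytic hact ν hf, ?_, ?_, ?_, ?_⟩
  · intro f g x
    simp only [← mul_smul]
    exact integral_mul_right_eq_self (μ := ν) (fun h : G => f (h • x)) g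
  · intro f hf a x h
    have := integral_mono (μ := ν) (integrable_const a) (hIntg f hf x) h
    simpa using this
  · intro f hf a x h
    have := integral_mono (μ := ν) (hIntg f hf x) (integrable_const a) h
    simpa using this
  · intro f h hf hh c x
    show ∫ g, (f (g • x) + c * h (g • x)) ∂ν = _
    rw [integral_add (hIntg f hf x) ((hIntg h hh x).const_mul c), integral_const_mul]

end GW

end

section

namespace GW

theorem PolyRep.mono {κ : Type} {N N' : ℕ} {R B B' : ℝ} {q : (κ → ℝ) → ℝ} (h : PolyRep N R B q)
    (hN : N ≤ N') (hB : B ≤ B') : PolyRep N' R B' q := by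
  obtain ⟨s, c, h1, h2, h3⟩ := h
  exact ⟨s, c, fun w hw => (h1 w hw).trans hN, h2.trans hB, h3⟩

theorem sw {d : ℕ} {X : Set (Fin d → ℝ)} (hX : IsCompact X) {v : (Fin d → ℝ) → ℝ}
    (hv : ContinuousOn v X) {ε : ℝ} (hε : 0 < ε) :
    ∃ P : MvPolynomial (Fin d) ℝ, ∀ y ∈ X, |MvPolynomial.eval y P - v y| ≤ ε := by
  haveI : CompactSpace X := isCompact_iff_compactSpace.1 hX
  let co : Fin d → C(X, ℝ) := fun i => ⟨fun y => y.1 i, (continuous_apply i).comp continuous_subtype_val⟩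
  let A : Subalgebra ℝ C(X, ℝ) := (MvPolynomial.aeval (R := ℝ) co).range
  have hsep : A.SeparatesPoints := by
    intro y z hyz
    have : ∃ i, y.1 i ≠ z.1 i := by
      by_contra hcon
      push Not at hcon
      exact hyz (Subtype.ext (funext hcon))
    obtain ⟨i, hi⟩ := this
    refine ⟨fun y => y.1 i, ⟨co i, ⟨MvPolynomial.X i, by simp⟩, rfl⟩, hi⟩
  obtain ⟨⟨q, P, hP⟩, hq⟩ := ContinuousMap.exists_mem_subalgebra_near_continuousMap_of_separatesPoints A hsep
    ⟨fun y : X => v y.1, hv.domRestrict⟩ ε hε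
  refine ⟨P, fun y hy => ?_⟩
  have h1 := (ContinuousMap.norm_coe_le_norm _ (⟨y, hy⟩ : X)).trans hq.le
  have h2 : ∀ P : MvPolynomial (Fin d) ℝ, (MvPolynomial.aeval (R := ℝ) co P) ⟨y, hy⟩ = MvPolynomial.eval y P := by
    intro P
    induction P using MvPolynomial.induction_on with
    | C a => simp
    | add p q hp hq => simp [hp, hq]
    | mul_X p i hp => simp [hp, co]
  have hP' : MvPolynomial.aeval (R := ℝ) co P = q := hP
  rw [← h2 P, hP']
  exact h1

variable {d : ℕ} {M ι : Type} [TopologicalSpace M] [ChartedSpace (EuclideanSpace ℝ (Fin d)) M]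

theorem GeoX.contMDiff (g : GeoX d M ι) {om : ℝ} (hom : 1 < om) {f : M → ℝ}
    (hf : ∀ a, ∃ A, g.ClsAt om a A f) :
    ContMDiff 𝓘(ℝ, EuclideanSpace ℝ (Fin d)) 𝓘(ℝ, ℝ) ω f := by
  intro x
  obtain ⟨a, hxa, -⟩ := g.cover x
  obtain ⟨A, hA⟩ := hf a
  obtain ⟨F, hF, hfF⟩ := hA.analytic hom
  have h1 : ContMDiffAt 𝓘(ℝ, EuclideanSpace ℝ (Fin d)) 𝓘(ℝ, EuclideanSpace ℝ (Fin d)) ω (g.K a) x :=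
    (g.an a).1.contMDiffAt ((g.K a).open_source.mem_nhds (g.src a hxa))
  let T : EuclideanSpace ℝ (Fin d) ≃L[ℝ] (Fin d → ℝ) := EuclideanSpace.equiv (Fin d) ℝ
  have hT : ∀ z, T (g.K a z) = g.k a z := fun z => by rw [g.K_eq]; rfl
  have h2 : ContDiffAt ℝ ω (fun u => F (T u)) (g.K a x) := by
    refine ContDiffAt.comp (g.K a x) (g := F) ?_ T.contDiff.contDiffAt
    rw [hT]
    exact (hF _ (g.lt hxa)).contDiffAt
  have h3 := ContMDiffAt.comp x h2.contMDiffAt h1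
  refine h3.congr_of_eventuallyEq ?_
  filter_upwards [(g.op a).mem_nhds hxa] with z hz
  simp only [Function.comp]
  rw [hT, hfF z hz]

theorem GeoX.norm_lt (g : GeoX d M ι) {a : ι} {x : M} (hx : x ∈ g.B a) : ‖g.K a x‖ < 2 := by
  have h := g.lt hx
  rw [g.K_eq, EuclideanSpace.norm_eq, Real.sqrt_lt' (by norm_num)]
  simpa using h.trans_le (by norm_num)

theorem GeoX.compact (g : GeoX d M ι) (a : ι) :
    IsCompact ((g.K a).symm '' Metric.closedBall 0 2) := by
  refine (isCompact_closedBall _ _).image_of_continuousOn ((g.K a).continuousOn_symm.mono ?_)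
  intro u hu
  exact g.tgt a u (by simpa using hu)

theorem GeoX.mem_compact (g : GeoX d M ι) {a : ι} {x : M} (hx : x ∈ g.B a) :
    x ∈ (g.K a).symm '' Metric.closedBall 0 2 :=
  ⟨g.K a x, by simpa using (g.norm_lt hx).le, (g.K a).left_inv (g.src a hx)⟩

theorem GeoX.exists_level [Countable ι] (g : GeoX d M ι) :
    ∃ (l : ι → ℕ) (F : ℕ → Finset ι), (∀ a n, l a ≤ n → a ∈ F n) ∧
      ∀ a, ∀ c ∈ g.Nbr a, l c ≤ l a + 1 := by
  classical
  obtain ⟨e, he⟩ := exists_injective_nat ι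
  let s : ℕ → Finset ι := fun n => (Set.Subsingleton.finite (s := {a | e a = n})
    (fun a ha b hb => he ((show e a = n from ha).trans (show e b = n from hb).symm))).toFinset
  let F : ℕ → Finset ι := fun n => Nat.rec ∅ (fun n Fn => Fn ∪ Fn.biUnion g.Nbr ∪ s n) n
  have hF : ∀ n, F (n + 1) = F n ∪ (F n).biUnion g.Nbr ∪ s n := fun n => rfl
  have hmono : Monotone F := monotone_nat_of_le_succ fun n => by
    rw [hF]; intro a ha; simp [ha]
  have hex : ∀ a, ∃ n, a ∈ F n := fun a => ⟨e a + 1, by rw [hF]; simp [s]⟩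
  have hmin : ∀ a, ∃ n, a ∈ F n ∧ ∀ m, a ∈ F m → n ≤ m := fun a =>
    ⟨sInf {n | a ∈ F n}, Nat.sInf_mem (s := {n | a ∈ F n}) (hex a),
      fun m hm => Nat.sInf_le (s := {n | a ∈ F n}) hm⟩
  choose l hl1 hl2 using hmin
  refine ⟨l, F, fun a n h => hmono h (hl1 a), fun a c hc => hl2 c _ ?_⟩
  rw [hF]
  simp only [Finset.mem_union, Finset.mem_biUnion]
  exact Or.inl (Or.inr ⟨a, hl1 a, hc⟩)

/-- the class is dense and contains a proper function -/
theorem GeoX.exists_class [Countable ι] (g : GeoX d M ι) : ∃ om : ℝ, 1 < om ∧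
    (∀ (u : M → ℝ), Continuous u → HasCompactSupport u → ∀ η : ℝ, 0 < η →
      ∃ f : M → ℝ, (∀ a, ∃ A, g.ClsAt om a A f) ∧ ∀ x, |f x - u x| ≤ η) ∧
    (∃ f : M → ℝ, (∀ a, ∃ A, g.ClsAt om a A f) ∧
      ∀ R : ℝ, ∃ C : Set M, IsCompact C ∧ {x | f x ≤ R} ⊆ C) := by
  classical
  obtain ⟨e, he⟩ := exists_injective_nat ι
  letI : LinearOrder ι := LinearOrder.lift' e he
  obtain ⟨om, C, hom, hC, happ⟩ := approx g.toGeo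
  refine ⟨om, hom, ?_, ?_⟩
  · intro u hu hus η hη
    -- the finite set of charts meeting the support
    obtain ⟨s0, hs0⟩ := hus.isCompact.elim_finite_subcover g.B g.op (fun x _ => by
      obtain ⟨a, ha, -⟩ := g.cover x
      exact Set.mem_iUnion.2 ⟨a, ha⟩)
    let s := s0.biUnion g.Nbr
    have hs : ∀ a, a ∉ s → ∀ x ∈ g.B a, u x = 0 := by
      intro a ha x hx
      by_contra hne
      have h1 := hs0 (subset_tsupport u hne)
      simp only [Set.mem_iUnion] at h1
      obtain ⟨b, hb, hxb⟩ := h1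
      exact ha (Finset.mem_biUnion.2 ⟨b, hb, g.mem_nbr hxb hx⟩)
    let ε : ℝ := η / (4 * (g.m + 1))
    have hε : 0 < ε := by positivity
    have hP : ∀ a, ∃ P : MvPolynomial (Fin d) ℝ, (∀ x ∈ g.B a, |MvPolynomial.eval (g.k a x) P - u x| ≤ ε) ∧
        (a ∉ s → P = 0) := by
      intro a
      by_cases ha : a ∈ s
      · let X : Set (Fin d → ℝ) := (EuclideanSpace.equiv (Fin d) ℝ) '' Metric.closedBall 0 2
        have hX : IsCompact X := (isCompact_closedBall _ _).image (EuclideanSpace.equiv (Fin d) ℝ).continuous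
        obtain ⟨P, hP⟩ := sw (v := fun y => u ((g.K a).symm ((EuclideanSpace.equiv (Fin d) ℝ).symm y))) hX (by
          refine hu.comp_continuousOn ((g.K a).continuousOn_symm.comp
            (EuclideanSpace.equiv (Fin d) ℝ).symm.continuous.continuousOn ?_)
          rintro _ ⟨w, hw, rfl⟩
          rw [ContinuousLinearEquiv.symm_apply_apply]
          exact g.tgt a w (by simpa using hw)) hε
        refine ⟨P, fun x hx => ?_, fun h => absurd ha h⟩
        have hk : (EuclideanSpace.equiv (Fin d) ℝ) (g.K a x) = g.k a x := by rw [g.K_eq]; rfl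
        have h1 := hP (g.k a x) ⟨g.K a x, by simpa using (g.norm_lt hx).le, hk⟩
        rw [← hk, ContinuousLinearEquiv.symm_apply_apply, (g.K a).left_inv (g.src a hx), hk] at h1
        exact h1
      · refine ⟨0, fun x hx => ?_, fun _ => rfl⟩
        rw [hs a ha x hx]
        simpa using hε.le
    choose P hP1 hP0 using hP
    have hrep : ∀ a, ∃ N B, PolyRep N 4 B (fun x => MvPolynomial.eval x (P a)) :=
      fun a => PolyRep.of_mvPolynomial _
    choose N B hNB using hrep
    have hB0 : ∀ a, 0 ≤ B a := fun a => ((hNB a).rep (by norm_num)).nonneg (by norm_num)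
    let N' := s.sup N
    let B' := ∑ a ∈ s, B a
    have hB' : 0 ≤ B' := Finset.sum_nonneg fun a _ => hB0 a
    have hNB' : ∀ a, PolyRep N' 4 B' (fun x => MvPolynomial.eval x (P a)) := by
      intro a
      by_cases ha : a ∈ s
      · exact (hNB a).mono (Finset.le_sup ha) (Finset.single_le_sum (fun b _ => hB0 b) ha)
      · rw [hP0 a ha]
        have := (PolyRep.const (κ := Fin d) (N := N') (R := 4) 0).mono le_rfl (B' := B') (by simpa using hB')
        simpa using this
    have hS := g.hS
    let E : ℝ := (g.S / 4) ^ N' * B' + B'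
    have hE : 0 ≤ E := by
      have : 0 ≤ g.S := by linarith
      positivity
    obtain ⟨K0, hK1, hK0⟩ : ∃ K0 : ℕ, 1 ≤ K0 ∧ C * (7 / 8) ^ K0 * E ≤ η / 4 := by
      have ht : Filter.Tendsto (fun n : ℕ => C * (7 / 8 : ℝ) ^ n * E) Filter.atTop (nhds (C * 0 * E)) :=
        ((tendsto_pow_atTop_nhds_zero_of_lt_one (by norm_num) (by norm_num)).const_mul C).mul_const E
      have h1 : ∀ᶠ n : ℕ in Filter.atTop, C * (7 / 8 : ℝ) ^ n * E < η / 4 :=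
        ht.eventually_lt_const (by simp; positivity)
      obtain ⟨n, hn, hn1⟩ := (h1.and (Filter.eventually_ge_atTop 1)).exists
      exact ⟨n, hn1, hn.le⟩
    obtain ⟨f, hf1, hf2⟩ := happ (fun a x => MvPolynomial.eval x (P a)) E (2 * ε) hE (by positivity)
      (fun a => ⟨_, _, hNB' a⟩)
      (fun a c hc => Rep.sub (by norm_num) (PolyRep.comp (by norm_num) (by norm_num) hS (hNB' c) (g.rep hc))
        ((hNB' a).rep (by norm_num)))
      (fun a b x ha hb => by
        have h1 := abs_le.1 (hP1 a x ha)
        have h2 := abs_le.1 (hP1 b x hb)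
        rw [abs_le]; constructor <;> linarith) K0 hK1
    refine ⟨f, hf1, fun x => ?_⟩
    obtain ⟨a, ha, -⟩ := g.cover x
    have h1 := abs_le.1 (hf2 a x ha)
    have h2 := abs_le.1 (hP1 a x ha)
    have h3 : (g.m + 1) * ε = η / 4 := by simp only [ε]; field_simp
    rw [abs_le]; constructor <;> nlinarith
  · obtain ⟨l, F, hl, hln⟩ := g.exists_level
    have hdiff : ∀ a, ∀ c ∈ g.Nbr a, |(l c : ℝ) - l a| ≤ 1 := by
      intro a c hc
      have h1 : (l c : ℝ) ≤ l a + 1 := by exact_mod_cast hln a c hc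
      have h2 : (l a : ℝ) ≤ l c + 1 := by exact_mod_cast hln c a (g.symm_nbr hc)
      rw [abs_le]; constructor <;> linarith
    obtain ⟨f, hf1, hf2⟩ := happ (fun a _ => (l a : ℝ)) 1 1 zero_le_one zero_le_one
      (fun a => ⟨0, _, PolyRep.const _⟩)
      (fun a c hc => (Rep.const _).mono (hdiff a c hc))
      (fun a b x ha hb => hdiff a b (g.mem_nbr ha hb)) 1 le_rfl
    refine ⟨f, hf1, fun R => ?_⟩
    let D : ℝ := g.m * 1 + C * (7 / 8) ^ 1 * 1
    refine ⟨⋃ a ∈ F ⌊R + D⌋₊, (g.K a).symm '' Metric.closedBall 0 2,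
      (F ⌊R + D⌋₊).isCompact_biUnion fun a _ => g.compact a, fun x hx => ?_⟩
    obtain ⟨a, ha, -⟩ := g.cover x
    have h1 := abs_le.1 (hf2 a x ha)
    have hx' : f x ≤ R := hx
    refine Set.mem_biUnion (hl a _ (Nat.le_floor ?_)) (g.mem_compact ha)
    have h2 : -D ≤ f x - l a := h1.1
    linarith

end GW

end

section

namespace GW

theorem dense_compl_image {E F : Type} [NormedAddCommGroup E] [NormedSpace ℝ E] [FiniteDimensional ℝ E]
    [NormedAddCommGroup F] [NormedSpace ℝ F] [FiniteDimensional ℝ F] {f : E → F} {s : Set E}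
    (hf : ∀ x ∈ s, ContDiffAt ℝ 1 f x) (h : Module.finrank ℝ E < Module.finrank ℝ F) :
    Dense (f '' s)ᶜ := by
  refine dense_compl_of_dimH_lt_finrank ?_
  have h1 : dimH (f '' s) ≤ dimH s := dimH_image_le_of_locally_lipschitzOn fun x hx => by
    obtain ⟨K, t, ht, hK⟩ := (hf x hx).exists_lipschitzOnWith
    exact ⟨K, t, mem_nhdsWithin_of_mem_nhds ht, hK⟩
  refine h1.trans_lt ((dimH_mono (Set.subset_univ s)).trans_lt ?_)
  rw [Real.dimH_univ_eq_finrank]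
  exact_mod_cast h

/-- generic separation of points, by the Baire category theorem -/
theorem baire_sep {d n : ℕ} (hn : 2 * d < n) {M : Type} [TopologicalSpace M]
    [ChartedSpace (EuclideanSpace ℝ (Fin d)) M]
    [IsManifold 𝓘(ℝ, EuclideanSpace ℝ (Fin d)) ω M]
    {Ξ : Type} [MetricSpace Ξ] [CompleteSpace Ξ] [Nonempty Ξ] {t : Type} [Countable t]
    (F : Ξ → M → EuclideanSpace ℝ (Fin n)) (H : t → M → ℝ)
    (hF : ∀ ξ, ContMDiff 𝓘(ℝ, EuclideanSpace ℝ (Fin d)) 𝓘(ℝ, EuclideanSpace ℝ (Fin n)) ω (F ξ))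
    (hH : ∀ k, ContMDiff 𝓘(ℝ, EuclideanSpace ℝ (Fin d)) 𝓘(ℝ, ℝ) ω (H k))
    {C : ℝ} (hC : 0 ≤ C) (hLip : ∀ ξ ξ' x, ‖F ξ x - F ξ' x‖ ≤ C * dist ξ ξ')
    (hpert : ∀ ξ k (s : EuclideanSpace ℝ (Fin n)), ∃ ξ', dist ξ' ξ ≤ ‖s‖ ∧
      ∀ x, F ξ' x = F ξ x + H k x • s)
    (Q : t → Set (M × M)) (hQ : ∀ k, IsCompact (Q k))
    (hQc : ∀ k, ∃ c c' : M, ∀ p ∈ Q k, p.1 ∈ (chartAt (EuclideanSpace ℝ (Fin d)) c).source ∧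
      p.2 ∈ (chartAt (EuclideanSpace ℝ (Fin d)) c').source)
    (hQH : ∀ k, ∀ p ∈ Q k, H k p.1 ≠ H k p.2) :
    ∃ ξ, ∀ k, ∀ p ∈ Q k, F ξ p.1 ≠ F ξ p.2 := by
  let Good : t → Set Ξ := fun k => {ξ | ∀ p ∈ Q k, F ξ p.1 ≠ F ξ p.2}
  have hopen : ∀ k, IsOpen (Good k) := by
    intro k
    rw [Metric.isOpen_iff]
    intro ξ hξ
    rcases (Q k).eq_empty_or_nonempty with he | hne
    · refine ⟨1, one_pos, fun ξ' _ p hp => ?_⟩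
      rw [he] at hp
      exact hp.elim
    have hcont : Continuous fun p : M × M => ‖F ξ p.1 - F ξ p.2‖ :=
      (((hF ξ).continuous.comp continuous_fst).sub ((hF ξ).continuous.comp continuous_snd)).norm
    obtain ⟨p0, hp0, hmin⟩ := (hQ k).exists_isMinOn hne hcont.continuousOn
    have hδ : 0 < ‖F ξ p0.1 - F ξ p0.2‖ := norm_pos_iff.2 (sub_ne_zero.2 (hξ p0 hp0))
    set δ := ‖F ξ p0.1 - F ξ p0.2‖ with hδd
    refine ⟨δ / (2 * (C + 1)), by positivity, fun ξ' hξ' p hp heq => ?_⟩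
    rw [Metric.mem_ball, lt_div_iff₀ (by positivity)] at hξ'
    have h1 : δ ≤ ‖F ξ p.1 - F ξ p.2‖ := hmin hp
    have h2 := hLip ξ' ξ p.1
    have h3 := hLip ξ' ξ p.2
    have h4 : ‖F ξ p.1 - F ξ p.2‖ ≤ ‖F ξ' p.2 - F ξ p.2‖ + ‖F ξ' p.1 - F ξ p.1‖ := by
      have : F ξ p.1 - F ξ p.2 = (F ξ' p.2 - F ξ p.2) - (F ξ' p.1 - F ξ p.1) := by
        rw [heq]; abel
      rw [this]
      exact norm_sub_le _ _
    have h5 := dist_nonneg (x := ξ') (y := ξ)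
    nlinarith
  have hdense : ∀ k, Dense (Good k) := by
    intro k
    rw [Metric.dense_iff]
    intro ξ r hr
    obtain ⟨c, c', hcc⟩ := hQc k
    let ψ := chartAt (EuclideanSpace ℝ (Fin d)) c
    let χ := chartAt (EuclideanSpace ℝ (Fin d)) c'
    let s : Set (EuclideanSpace ℝ (Fin d) × EuclideanSpace ℝ (Fin d)) :=
      {w | w.1 ∈ ψ.target ∧ w.2 ∈ χ.target ∧ (ψ.symm w.1, χ.symm w.2) ∈ Q k}
    let Ψ : EuclideanSpace ℝ (Fin d) × EuclideanSpace ℝ (Fin d) → EuclideanSpace ℝ (Fin n) :=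
      fun w => (H k (ψ.symm w.1) - H k (χ.symm w.2))⁻¹ • (F ξ (χ.symm w.2) - F ξ (ψ.symm w.1))
    have hsm : ∀ (c : M) (u : EuclideanSpace ℝ (Fin d)), u ∈ (chartAt (EuclideanSpace ℝ (Fin d)) c).target →
        ContDiffAt ℝ ω (fun u => F ξ ((chartAt (EuclideanSpace ℝ (Fin d)) c).symm u)) u ∧
        ContDiffAt ℝ ω (fun u => H k ((chartAt (EuclideanSpace ℝ (Fin d)) c).symm u)) u := by
      intro c u hu
      have h1 := (contMDiffOn_chart_symm (I := 𝓘(ℝ, EuclideanSpace ℝ (Fin d))) (n := ω) (x := c)).contMDiffAt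
        ((chartAt (EuclideanSpace ℝ (Fin d)) c).open_target.mem_nhds hu)
      exact ⟨(ContMDiffAt.comp u (hF ξ).contMDiffAt h1).contDiffAt,
        (ContMDiffAt.comp u (hH k).contMDiffAt h1).contDiffAt⟩
    have hΨ : ∀ w ∈ s, ContDiffAt ℝ 1 Ψ w := by
      rintro w ⟨h1, h2, h3⟩
      obtain ⟨a1, a2⟩ := hsm c w.1 h1
      obtain ⟨b1, b2⟩ := hsm c' w.2 h2
      have A1 := ContDiffAt.comp w a1 contDiffAt_fst
      have A2 := ContDiffAt.comp w a2 contDiffAt_fst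
      have B1 := ContDiffAt.comp w b1 contDiffAt_snd
      have B2 := ContDiffAt.comp w b2 contDiffAt_snd
      exact (((A2.sub B2).inv (sub_ne_zero.2 (hQH k _ h3))).smul (B1.sub A1)).of_le le_top
    have hd := dense_compl_image hΨ (by
      rw [Module.finrank_prod, finrank_euclideanSpace_fin, finrank_euclideanSpace_fin]; omega)
    obtain ⟨v, hvr, hv⟩ := (Metric.dense_iff.1 hd) 0 r hr
    have hv0 : ‖v‖ < r := by simpa using hvr
    obtain ⟨ξ', hξ', hFξ'⟩ := hpert ξ k v
    refine ⟨ξ', Metric.mem_ball.2 (hξ'.trans_lt hv0), fun p hp heq => hv ?_⟩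
    obtain ⟨m1, m2⟩ := hcc p hp
    refine ⟨(ψ p.1, χ p.2), ⟨ψ.map_source m1, χ.map_source m2, ?_⟩, ?_⟩
    · show (ψ.symm (ψ p.1), χ.symm (χ p.2)) ∈ Q k
      rw [ψ.left_inv m1, χ.left_inv m2]
      exact hp
    · show (H k (ψ.symm (ψ p.1)) - H k (χ.symm (χ p.2)))⁻¹ • (F ξ (χ.symm (χ p.2)) - F ξ (ψ.symm (ψ p.1))) = v
      rw [ψ.left_inv m1, χ.left_inv m2, inv_smul_eq_iff₀ (sub_ne_zero.2 (hQH k p hp)), sub_smul]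
      rw [hFξ', hFξ'] at heq
      rw [sub_eq_sub_iff_add_eq_add, ← heq, add_comm]
  obtain ⟨ξ, hξ⟩ := (dense_iInter_of_isOpen hopen hdense).nonempty
  exact ⟨ξ, fun k => Set.mem_iInter.1 hξ k⟩

end GW

end

section

namespace GW

theorem exists_sep {d : ℕ} {G M : Type} [Group G] [TopologicalSpace G] [CompactSpace G]
    [TopologicalSpace M] [T2Space M] [LocallyCompactSpace M] [SecondCountableTopology M]
    [ChartedSpace (EuclideanSpace ℝ (Fin d)) M] [MulAction G M]
    (hact : Continuous (fun p : G × M => p.1 • p.2))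
    (Av : (M → ℝ) → (M → ℝ))
    (hAvc : ∀ f, ContMDiff 𝓘(ℝ, EuclideanSpace ℝ (Fin d)) 𝓘(ℝ, ℝ) ω f →
        ContMDiff 𝓘(ℝ, EuclideanSpace ℝ (Fin d)) 𝓘(ℝ, ℝ) ω (Av f))
    (hAv1 : ∀ f, Continuous f → ∀ a x, (∀ g : G, a ≤ f (g • x)) → a ≤ Av f x)
    (hAv2 : ∀ f, Continuous f → ∀ a x, (∀ g : G, f (g • x) ≤ a) → Av f x ≤ a)
    (P : (M → ℝ) → Prop)
    (hP : ∀ f, P f → ContMDiff 𝓘(ℝ, EuclideanSpace ℝ (Fin d)) 𝓘(ℝ, ℝ) ω f)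
    (hdens : ∀ (u : M → ℝ), Continuous u → HasCompactSupport u → ∀ η : ℝ, 0 < η →
      ∃ f : M → ℝ, P f ∧ ∀ x, |f x - u x| ≤ η) :
    ∃ (t : Type) (_ : Countable t) (h : t → M → ℝ) (Q : t → Set (M × M)),
      (∀ j, P (h j)) ∧ (∀ j x, |h j x| ≤ 2) ∧ (∀ j, IsCompact (Q j)) ∧
      (∀ j, ∃ c c' : M, ∀ p ∈ Q j, p.1 ∈ (chartAt (EuclideanSpace ℝ (Fin d)) c).source ∧
        p.2 ∈ (chartAt (EuclideanSpace ℝ (Fin d)) c').source) ∧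
      (∀ j, ∀ p ∈ Q j, Av (h j) p.1 ≠ Av (h j) p.2) ∧
      ∀ x y, x ∉ MulAction.orbit G y → ∃ j, (x, y) ∈ Q j := by
  let O : Set (M × M) := {p | p.1 ∉ MulAction.orbit G p.2}
  have horb : ∀ x, IsCompact (MulAction.orbit G x) := fun x =>
    isCompact_range (hact.comp (continuous_id.prodMk continuous_const))
  have key : ∀ p : M × M, p ∈ O → ∃ (h : M → ℝ) (Q : Set (M × M)), P h ∧ (∀ x, |h x| ≤ 2) ∧
      IsCompact Q ∧ Q ∈ nhds p ∧
      (∀ q ∈ Q, q.1 ∈ (chartAt (EuclideanSpace ℝ (Fin d)) p.1).source ∧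
        q.2 ∈ (chartAt (EuclideanSpace ℝ (Fin d)) p.2).source) ∧
      (∀ q ∈ Q, Av h q.1 ≠ Av h q.2) := by
    rintro ⟨x, y⟩ hxy
    have hdisj : Disjoint (MulAction.orbit G x) (MulAction.orbit G y) := by
      rw [Set.disjoint_left]
      intro z hzx hzy
      refine hxy ?_
      have h1 : MulAction.orbit G z = MulAction.orbit G x := MulAction.orbit_eq_iff.2 hzx
      have h2 : MulAction.orbit G z = MulAction.orbit G y := MulAction.orbit_eq_iff.2 hzy
      show x ∈ MulAction.orbit G y
      rw [← h2, h1]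
      exact MulAction.mem_orbit_self x
    obtain ⟨u, hu1, hu0, hus, hu01⟩ :=
      exists_continuous_one_zero_of_isCompact (horb x) (horb y).isClosed hdisj
    obtain ⟨f, hPf, hf⟩ := hdens u u.continuous hus (1 / 4) (by norm_num)
    have hfc := (hP f hPf).continuous
    have hne : Av f x ≠ Av f y := by
      have h1 : 3 / 4 ≤ Av f x := hAv1 f hfc _ _ fun g => by
        have := abs_le.1 (hf (g • x))
        have h2 : u (g • x) = 1 := hu1 (MulAction.mem_orbit x g)
        rw [h2] at this
        linarith [this.1]
      have h1 : Av f y ≤ 1 / 4 := hAv2 f hfc _ _ fun g => by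
        have := abs_le.1 (hf (g • y))
        have h2 : u (g • y) = 0 := hu0 (MulAction.mem_orbit y g)
        rw [h2] at this
        linarith [this.2]
      intro h
      linarith
    have hc := (hAvc f (hP f hPf)).continuous
    let U : Set (M × M) := {q | Av f q.1 ≠ Av f q.2} ∩
      ((chartAt (EuclideanSpace ℝ (Fin d)) x).source ×ˢ (chartAt (EuclideanSpace ℝ (Fin d)) y).source)
    have hU : IsOpen U := (isOpen_ne_fun (hc.comp continuous_fst) (hc.comp continuous_snd)).inter
      ((chartAt (EuclideanSpace ℝ (Fin d)) x).open_source.prod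
        (chartAt (EuclideanSpace ℝ (Fin d)) y).open_source)
    obtain ⟨Q, hQn, hQU, hQ⟩ := local_compact_nhds (hU.mem_nhds (x := (x, y))
      ⟨hne, mem_chart_source _ _, mem_chart_source _ _⟩)
    refine ⟨f, Q, hPf, fun z => ?_, hQ, hQn, fun q hq => (hQU hq).2, fun q hq => (hQU hq).1⟩
    have := abs_le.1 (hf z)
    have h2 := hu01 z
    rw [abs_le]
    constructor
    · linarith [h2.1, this.1]
    · linarith [h2.2, this.2]
  choose! h Q k1 k2 k3 k4 k5 k6 using key
  obtain ⟨T, hTO, hTc, hcov⟩ := TopologicalSpace.countable_cover_nhdsWithin (s := O) (f := Q)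
    fun p hp => mem_nhdsWithin_of_mem_nhds (k4 p hp)
  refine ⟨T, hTc.to_subtype, fun j => h j.1, fun j => Q j.1, fun j => k1 _ (hTO j.2),
    fun j => k2 _ (hTO j.2), fun j => k3 _ (hTO j.2), fun j => ⟨_, _, k5 _ (hTO j.2)⟩,
    fun j => k6 _ (hTO j.2), fun x y hxy => ?_⟩
  have h1 := hcov (show (x, y) ∈ O from hxy)
  simp only [Set.mem_iUnion] at h1
  obtain ⟨p, hpT, hp⟩ := h1
  exact ⟨⟨p, hpT⟩, hp⟩

/-- weights making countably many series converge -/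
theorem exists_weights {t ι : Type} [Countable t] [Countable ι] (A : ι → t → ℝ) (hA : ∀ a j, 0 ≤ A a j) :
    ∃ e : t → ℝ, (∀ j, 0 < e j) ∧ Summable e ∧ ∀ a, Summable fun j => e j * A a j := by
  classical
  obtain ⟨r, hr⟩ := exists_injective_nat t
  obtain ⟨q, hq⟩ := exists_injective_nat ι
  let s : ℕ → Finset ι := fun n => (Set.Finite.preimage hq.injOn (Set.finite_Iic n)).toFinset
  have hs : ∀ n a, a ∈ s n ↔ q a ≤ n := by intro n a; simp [s]
  let D : t → ℝ := fun j => 1 + ∑ a ∈ s (r j), A a j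
  have hD : ∀ j, 1 ≤ D j := fun j => by
    have : 0 ≤ ∑ a ∈ s (r j), A a j := Finset.sum_nonneg fun a _ => hA a j
    simp only [D]; linarith
  have hgeo : Summable fun j : t => (1 / 2 : ℝ) ^ r j :=
    (summable_geometric_of_lt_one (by norm_num) (by norm_num : (1 / 2 : ℝ) < 1)).comp_injective hr
  have hD0 : ∀ j, 0 < D j := fun j => by linarith [hD j]
  refine ⟨fun j => (1 / 2) ^ r j / D j, fun j => div_pos (by positivity) (hD0 j), ?_, fun a => ?_⟩
  · refine hgeo.of_nonneg_of_le (fun j => (div_pos (by positivity) (hD0 j)).le) fun j => ?_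
    exact div_le_self (by positivity) (hD j)
  · have hfin : {j : t | ¬ q a ≤ r j}.Finite := by
      refine (Set.Finite.preimage hr.injOn (Set.finite_Iio (q a))).subset fun j hj => ?_
      simpa using hj
    refine Summable.of_norm_bounded_eventually hgeo ?_
    filter_upwards [hfin.compl_mem_cofinite] with j hj
    have hj' : q a ≤ r j := not_not.1 hj
    have h1 : A a j ≤ D j := by
      have := Finset.single_le_sum (f := fun a => A a j) (fun b _ => hA b j) ((hs _ _).2 hj')
      simp only [D]
      linarith
    rw [Real.norm_of_nonneg (mul_nonneg (div_pos (by positivity) (hD0 j)).le (hA a j)),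
      div_mul_eq_mul_div, div_le_iff₀ (hD0 j)]
    gcongr

end GW

end

section

namespace GW

theorem Geo.ClsAt.nonneg {d : ℕ} {M ι : Type} {g : Geo d M ι} {om : ℝ} (hom : 1 ≤ om) {a : ι} {A : ℝ}
    {f : M → ℝ} (h : g.ClsAt om a A f) : 0 ≤ A := by
  obtain ⟨J, _, q, N, η, h1, h0, h2, h3, h4, h5⟩ := h
  exact (tsum_nonneg fun j => mul_nonneg (h0 j) (pow_nonneg (by linarith) _)).trans h4

theorem main_core {dG d : ℕ} {G M : Type} [Group G] [TopologicalSpace G] [IsTopologicalGroup G]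
    [CompactSpace G]
    [ChartedSpace (EuclideanSpace ℝ (Fin dG)) G]
    [IsManifold 𝓘(ℝ, EuclideanSpace ℝ (Fin dG)) ω G]
    [TopologicalSpace M] [T2Space M] [SecondCountableTopology M]
    [ChartedSpace (EuclideanSpace ℝ (Fin d)) M]
    [IsManifold 𝓘(ℝ, EuclideanSpace ℝ (Fin d)) ω M] [MulAction G M]
    (hact : ContMDiff (𝓘(ℝ, EuclideanSpace ℝ (Fin dG)).prod 𝓘(ℝ, EuclideanSpace ℝ (Fin d)))
      𝓘(ℝ, EuclideanSpace ℝ (Fin d)) ω (fun p : G × M => p.1 • p.2)) :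
    ∃ f : M → EuclideanSpace ℝ (Fin (2 * d + 1)),
      ContMDiff 𝓘(ℝ, EuclideanSpace ℝ (Fin d)) 𝓘(ℝ, EuclideanSpace ℝ (Fin (2 * d + 1))) ω f ∧
      IsProperMap f ∧ (∀ (g : G) (x : M), f (g • x) = f x) ∧
      ∀ x y, f x = f y → x ∈ MulAction.orbit G y := by
  classical
  have hlc : LocallyCompactSpace M := ChartedSpace.locallyCompactSpace (EuclideanSpace ℝ (Fin d)) M
  obtain ⟨ι, _, ⟨gx⟩⟩ := exists_geo d M
  obtain ⟨om, hom, hdens, f0, hf0, hf0p⟩ := gx.exists_class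
  obtain ⟨Av, hAvc, hAvi, hAv1, hAv2, hAvl⟩ := exists_average hact
  obtain ⟨t, _, h, Q, hP, hh2, hQ, hQc, hQH, hQcov⟩ := exists_sep (G := G) hact.continuous Av hAvc hAv1 hAv2
    (fun f => ∀ a, ∃ A, gx.ClsAt om a A f) (fun f hf => gx.contMDiff hom hf) hdens
  choose A hA using hP
  obtain ⟨e, he0, hes, heA⟩ := exists_weights (fun a j => A j a) (fun a j => (hA j a).nonneg hom.le)
  letI : TopologicalSpace t := ⊥
  haveI : DiscreteTopology t := ⟨rfl⟩
  let V := EuclideanSpace ℝ (Fin (2 * d + 1))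
  let Ξ := BoundedContinuousFunction t V
  -- the series
  let S : Ξ → Fin (2 * d + 1) → M → ℝ := fun ξ i x => ∑' j, (e j * ξ j i) * h j x
  have hξ : ∀ (ξ : Ξ) j i, |ξ j i| ≤ ‖ξ‖ := fun ξ j i =>
    (abs_coord_le (ξ j) i).trans (ξ.norm_coe_le_norm j)
  have hSP : ∀ ξ i a, ∃ A', gx.ClsAt om a A' (S ξ i) := by
    intro ξ i a
    refine ⟨_, Geo.ClsAt.tsum hom.le (fun j => e j * ξ j i) (fun j => hA j a) ?_⟩
    refine ((heA a).mul_left ‖ξ‖).of_nonneg_of_le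
      (fun j => mul_nonneg (abs_nonneg _) ((hA j a).nonneg hom.le)) fun j => ?_
    rw [abs_mul, abs_of_pos (he0 j)]
    have h1 := hξ ξ j i
    have h2 := (hA j a).nonneg hom.le
    have h3 := (he0 j).le
    calc e j * |ξ j i| * A j a ≤ e j * ‖ξ‖ * A j a := by gcongr
      _ = ‖ξ‖ * (e j * A j a) := by ring
  have hSm : ∀ ξ i, ContMDiff 𝓘(ℝ, EuclideanSpace ℝ (Fin d)) 𝓘(ℝ, ℝ) ω (S ξ i) :=
    fun ξ i => gx.contMDiff hom (hSP ξ i)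
  have hhm : ∀ j, ContMDiff 𝓘(ℝ, EuclideanSpace ℝ (Fin d)) 𝓘(ℝ, ℝ) ω (h j) :=
    fun j => gx.contMDiff hom fun a => ⟨_, hA j a⟩
  have hf0m : ContMDiff 𝓘(ℝ, EuclideanSpace ℝ (Fin d)) 𝓘(ℝ, ℝ) ω f0 := gx.contMDiff hom hf0
  have hterm : ∀ (ξ : Ξ) i x j, ‖(e j * ξ j i) * h j x‖ ≤ (2 * ‖ξ‖) * e j := by
    intro ξ i x j
    rw [Real.norm_eq_abs, abs_mul, abs_mul, abs_of_pos (he0 j)]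
    have h1 := hξ ξ j i
    have h2 := hh2 j x
    have h3 := (he0 j).le
    calc e j * |ξ j i| * |h j x| ≤ e j * ‖ξ‖ * 2 := by gcongr
      _ = _ := by ring
  have hsum : ∀ (ξ : Ξ) i x, Summable fun j => (e j * ξ j i) * h j x := fun ξ i x =>
    Summable.of_norm_bounded (hes.mul_left (2 * ‖ξ‖)) (hterm ξ i x)
  let se : ℝ := ∑' j, e j
  have hse : 0 ≤ se := tsum_nonneg fun j => (he0 j).le
  have hSb : ∀ ξ i x, |S ξ i x| ≤ 2 * ‖ξ‖ * se := by
    intro ξ i x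
    have h1 := tsum_of_norm_bounded (hes.mul_left (2 * ‖ξ‖)).hasSum (hterm ξ i x)
    rw [tsum_mul_left] at h1
    exact h1
  have hSsub : ∀ ξ ξ' i x, S ξ i x + (-1) * S ξ' i x = S (ξ - ξ') i x := by
    intro ξ ξ' i x
    simp only [S]
    rw [← tsum_mul_left, ← (hsum ξ i x).tsum_add ((hsum ξ' i x).mul_left (-1))]
    refine tsum_congr fun j => ?_
    have h0 : (ξ - ξ') j i = ξ j i - ξ' j i := rfl
    rw [h0]
    ring
  have hAvb : ∀ ξ i x, |Av (S ξ i) x| ≤ 2 * ‖ξ‖ * se := by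
    intro ξ i x
    rw [abs_le]
    exact ⟨hAv1 _ (hSm ξ i).continuous _ _ fun g => (abs_le.1 (hSb ξ i _)).1,
      hAv2 _ (hSm ξ i).continuous _ _ fun g => (abs_le.1 (hSb ξ i _)).2⟩
  let b : Fin (2 * d + 1) → ℝ := fun i => if i = 0 then 1 else 0
  let F : Ξ → M → V := fun ξ x => WithLp.toLp 2 (fun i => b i * Av f0 x + Av (S ξ i) x)
  have hFm : ∀ ξ, ContMDiff 𝓘(ℝ, EuclideanSpace ℝ (Fin d)) 𝓘(ℝ, V) ω (F ξ) := by
    intro ξ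
    have h1 : ContMDiff 𝓘(ℝ, EuclideanSpace ℝ (Fin d)) 𝓘(ℝ, Fin (2 * d + 1) → ℝ) ω
        (fun x i => b i * Av f0 x + Av (S ξ i) x) := by
      refine contMDiff_pi_space.2 fun i => ?_
      exact (contMDiff_const.mul (hAvc _ hf0m)).add (hAvc _ (hSm ξ i))
    exact (EuclideanSpace.equiv (Fin (2 * d + 1)) ℝ).symm.contDiff.contMDiff.comp h1
  obtain ⟨ξ, hξsep⟩ := baire_sep (n := 2 * d + 1) (by omega) F (fun k x => e k * Av (h k) x) hFm
    (fun k => contMDiff_const.mul (hAvc _ (hhm k)))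
    (C := (2 * d + 1 : ℕ) * (2 * se)) (by positivity)
    (by
      intro ξ ξ' x
      have h1 : F ξ x - F ξ' x = WithLp.toLp 2 (fun i => Av (S (ξ - ξ') i) x) := by
        ext i
        show (b i * Av f0 x + Av (S ξ i) x) - (b i * Av f0 x + Av (S ξ' i) x) = Av (S (ξ - ξ') i) x
        have h2 := hAvl _ _ (hSm ξ i).continuous (hSm ξ' i).continuous (-1) x
        simp only [hSsub] at h2
        have h3 : (fun x => S (ξ - ξ') i x) = S (ξ - ξ') i := rfl
        rw [h3] at h2
        rw [h2]; ring
      rw [h1]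
      refine (norm_toLp_le _).trans ?_
      rw [mul_assoc]
      refine mul_le_mul_of_nonneg_left ?_ (Nat.cast_nonneg _)
      rw [pi_norm_le_iff_of_nonneg (by positivity)]
      intro i
      have h4 := hAvb (ξ - ξ') i x
      rw [Real.norm_eq_abs, dist_eq_norm]
      linarith)
    (by
      intro ξ k s
      let pk : Ξ := BoundedContinuousFunction.ofNormedAddCommGroupDiscrete
        (fun j => if j = k then s else 0) ‖s‖ (fun j => by
          by_cases hj : j = k
          · simp [hj]
          · simp [hj])
      have hpk : ∀ j, pk j = if j = k then s else 0 := fun j => rfl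
      refine ⟨ξ + pk, ?_, fun x => ?_⟩
      · rw [dist_eq_norm, add_sub_cancel_left, BoundedContinuousFunction.norm_le (norm_nonneg s)]
        intro j
        rw [hpk]
        by_cases hj : j = k
        · simp [hj]
        · simp [hj]
      · ext i
        have h1 : S (ξ + pk) i = fun x => S ξ i x + (e k * s i) * h k x := by
          funext x
          have h2 : (e k * s i) * h k x = ∑' j, (e j * pk j i) * h j x := by
            rw [tsum_eq_single k]
            · rw [hpk, if_pos rfl]
            · intro j hj
              rw [hpk, if_neg hj]
              simp
          simp only [S]
          rw [h2, ← (hsum ξ i x).tsum_add (hsum pk i x)]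
          refine tsum_congr fun j => ?_
          have h0 : (ξ + pk) j i = ξ j i + pk j i := rfl
          rw [h0]
          ring
        show b i * Av f0 x + Av (S (ξ + pk) i) x =
          (b i * Av f0 x + Av (S ξ i) x) + (e k * Av (h k) x) * s i
        rw [h1, hAvl _ _ (hSm ξ i).continuous (hhm k).continuous]
        ring)
    Q hQ hQc
    (fun k p hp heq => hQH k p hp (mul_left_cancel₀ (he0 k).ne' heq))
  refine ⟨F ξ, hFm ξ, ?_, ?_, ?_⟩
  · rw [isProperMap_iff_isCompact_preimage]
    refine ⟨(hFm ξ).continuous, fun K hK => ?_⟩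
    obtain ⟨R, hR⟩ := hK.isBounded.subset_closedBall 0
    obtain ⟨C, hC, hCs⟩ := hf0p (R + 2 * ‖ξ‖ * se + 1)
    have hGC : IsCompact ((fun p : G × M => p.1 • p.2) '' (Set.univ ×ˢ C)) :=
      (isCompact_univ.prod hC).image hact.continuous
    refine hGC.of_isClosed_subset (hK.isClosed.preimage (hFm ξ).continuous) fun x hx => ?_
    have h1 : ‖F ξ x‖ ≤ R := by simpa using hR hx
    have h2 : |1 * Av f0 x + Av (S ξ 0) x| ≤ R := by
      have := (abs_coord_le (F ξ x) 0).trans h1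
      simpa [F, b] using this
    have h3 := hAvb ξ 0 x
    have h4 : ∃ g : G, f0 (g • x) ≤ R + 2 * ‖ξ‖ * se + 1 := by
      by_contra hcon
      push Not at hcon
      have h5 := hAv1 f0 hf0m.continuous _ x fun g => (hcon g).le
      rw [abs_le] at h2 h3
      linarith [h2.2, h3.1]
    obtain ⟨g, hg⟩ := h4
    exact ⟨(g⁻¹, g • x), ⟨Set.mem_univ _, hCs hg⟩, inv_smul_smul g x⟩
  · intro g x
    simp only [F, hAvi]
  · intro x y hxy
    by_contra hcon
    obtain ⟨k, hk⟩ := hQcov x y hcon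
    exact hξsep k _ hk hxy

theorem finish {G M V : Type} [Group G] [TopologicalSpace M] [MulAction G M] [TopologicalSpace V]
    {f : M → V} (hf : IsProperMap f) (hinv : ∀ (g : G) (x : M), f (g • x) = f x)
    (hsep : ∀ x y, f x = f y → x ∈ MulAction.orbit G y) :
    ∃ fbar : Quotient (MulAction.orbitRel G M) ≃ₜ Set.range f,
        ∀ x : M, (fbar (Quotient.mk (MulAction.orbitRel G M) x) : V) = f x := by
  let q : Quotient (MulAction.orbitRel G M) → V := Quotient.lift f (by
    rintro x y ⟨g, rfl⟩
    exact hinv g y)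
  have hq : ∀ x, q (Quotient.mk _ x) = f x := fun x => rfl
  have hqc : Continuous q := hf.continuous.quotient_lift _
  have hqi : Function.Injective q := by
    intro a b
    induction a using Quotient.inductionOn with | _ x => ?_
    induction b using Quotient.inductionOn with | _ y => ?_
    intro h
    exact Quotient.sound (hsep x y h)
  have hqcl : IsClosedMap q := by
    intro C hC
    have : q '' C = f '' ((Quotient.mk (MulAction.orbitRel G M)) ⁻¹' C) := by
      ext v
      constructor
      · rintro ⟨a, ha, rfl⟩
        induction a using Quotient.inductionOn with | _ x => exact ⟨x, ha, rfl⟩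
      · rintro ⟨x, hx, rfl⟩
        exact ⟨_, hx, rfl⟩
    rw [this]
    exact hf.isClosedMap _ (hC.preimage continuous_quotient_mk')
  have hemb := (Topology.IsClosedEmbedding.of_continuous_injective_isClosedMap hqc hqi hqcl).isEmbedding
  have hr : Set.range q = Set.range f := by
    ext v
    constructor
    · rintro ⟨a, rfl⟩
      induction a using Quotient.inductionOn with | _ x => exact ⟨x, rfl⟩
    · rintro ⟨x, rfl⟩
      exact ⟨Quotient.mk _ x, rfl⟩
  exact ⟨hemb.toHomeomorph.trans (Homeomorph.setCongr hr), fun x => rfl⟩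

end GW

end

/-- Let `G` be a compact Lie group with real analytic group operations acting real
analytically on a second countable Hausdorff real analytic manifold `M` of dimension `d`,
and let `n = 2d + 1`.  Then there is a proper real analytic `G`-invariant map `f : M → ℝⁿ`
inducing a homeomorphism from the orbit space `M/G` onto the image `f(M)`. -/
theorem subanalytic_triangulation_stmt2 {dG d : ℕ}
    (G : Type) [Group G] [TopologicalSpace G] [T2Space G] [CompactSpace G]
    [ChartedSpace (EuclideanSpace ℝ (Fin dG)) G]
    [HasGroupoid G (contDiffGroupoid ω 𝓘(ℝ, EuclideanSpace ℝ (Fin dG)))]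
    (hGmul : IsCkMap (𝓘(ℝ, EuclideanSpace ℝ (Fin dG)).prod 𝓘(ℝ, EuclideanSpace ℝ (Fin dG)))
      𝓘(ℝ, EuclideanSpace ℝ (Fin dG)) ω (fun p : G × G => p.1 * p.2))
    (hGinv : IsCkMap 𝓘(ℝ, EuclideanSpace ℝ (Fin dG)) 𝓘(ℝ, EuclideanSpace ℝ (Fin dG)) ω
      (fun g : G => g⁻¹))
    (M : Type) [TopologicalSpace M] [T2Space M] [SecondCountableTopology M]
    [ChartedSpace (EuclideanSpace ℝ (Fin d)) M]
    [HasGroupoid M (contDiffGroupoid ω 𝓘(ℝ, EuclideanSpace ℝ (Fin d)))]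
    [MulAction G M]
    (hact : IsCkMap (𝓘(ℝ, EuclideanSpace ℝ (Fin dG)).prod 𝓘(ℝ, EuclideanSpace ℝ (Fin d)))
      𝓘(ℝ, EuclideanSpace ℝ (Fin d)) ω (fun p : G × M => p.1 • p.2)) :
    ∃ f : M → EuclideanSpace ℝ (Fin (2 * d + 1)),
      IsCkMap 𝓘(ℝ, EuclideanSpace ℝ (Fin d)) 𝓘(ℝ, EuclideanSpace ℝ (Fin (2 * d + 1))) ω f ∧
      IsProperMap f ∧
      (∀ (g : G) (x : M), f (g • x) = f x) ∧
      ∃ fbar : Quotient (MulAction.orbitRel G M) ≃ₜ Set.range f,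
        ∀ x : M, (fbar (Quotient.mk (MulAction.orbitRel G M) x) :
          EuclideanSpace ℝ (Fin (2 * d + 1))) = f x := by
  have hG : IsManifold 𝓘(ℝ, EuclideanSpace ℝ (Fin dG)) ω G := IsManifold.mk
  have hM : IsManifold 𝓘(ℝ, EuclideanSpace ℝ (Fin d)) ω M := IsManifold.mk
  have hTG : IsTopologicalGroup G := { continuous_mul := hGmul.1, continuous_inv := hGinv.1 }
  have hact' : ContMDiff (𝓘(ℝ, EuclideanSpace ℝ (Fin dG)).prod 𝓘(ℝ, EuclideanSpace ℝ (Fin d)))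
      𝓘(ℝ, EuclideanSpace ℝ (Fin d)) ω (fun p : G × M => p.1 • p.2) := fun p =>
    contMDiffAt_iff.2 ⟨hact.1.continuousAt, hact.2 p⟩
  obtain ⟨f, hf, hp, hinv, hsep⟩ := GW.main_core hact'
  exact ⟨f, ⟨hf.continuous, fun x => (contMDiffAt_iff.1 (hf x)).2⟩, hp, hinv, GW.finish hp hinv hsep⟩
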